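/- arXiv:1608.05863 — 7 statements merged into one kernel-verified Lean document; each statement's English description precedes it below -/
import Mathlib

section
/- Let K be a field of characteristic 2 and n ≥ 2 an integer. The Lie algebra of derivations of the Zassenhaus algebra W₁′(n) over K has dimension 2ⁿ + n − 1. -/
open scoped BigOperators

/-- The bracket of the Zassenhaus algebra `W₁′(n)` in characteristic 2, on the
`(2ⁿ - 1)`-dimensional space `Fin (2^n - 1) → K`.  The coordinate `a : Fin (2^n - 1)`
corresponds to the basis vector `e_i` with `i = a - 1` (so `i` ranges over
`-1 ≤ i ≤ 2^n - 3`), and the bracket is the bilinear extension of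
`[e_i, e_j] = C(i+j+2, i+1) e_{i+j}` if `-1 ≤ i+j ≤ 2^n - 3`, and `0` otherwise,
the binomial coefficient being taken in `K` (i.e. reduced mod 2 when `char K = 2`). -/
def zassBracket (K : Type*) [Field K] (n : ℕ) (x y : Fin (2 ^ n - 1) → K) :
    Fin (2 ^ n - 1) → K :=
  fun k => ∑ a : Fin (2 ^ n - 1), ∑ b : Fin (2 ^ n - 1),
    (if (a : ℕ) + (b : ℕ) = (k : ℕ) + 1 then (Nat.choose ((k : ℕ) + 1) (a : ℕ) : K) else 0)
      * x a * y b

theorem zassBracket_add_left (K : Type*) [Field K] (n : ℕ) (x x' y : Fin (2 ^ n - 1) → K) :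
    zassBracket K n (x + x') y = zassBracket K n x y + zassBracket K n x' y := by
  funext k
  simp [zassBracket, mul_add, add_mul, Finset.sum_add_distrib]

theorem zassBracket_add_right (K : Type*) [Field K] (n : ℕ) (x y y' : Fin (2 ^ n - 1) → K) :
    zassBracket K n x (y + y') = zassBracket K n x y + zassBracket K n x y' := by
  funext k
  simp [zassBracket, mul_add, add_mul, Finset.sum_add_distrib]

theorem zassBracket_smul_left (K : Type*) [Field K] (n : ℕ) (c : K)
    (x y : Fin (2 ^ n - 1) → K) :
    zassBracket K n (c • x) y = c • zassBracket K n x y := by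
  funext k
  simp only [zassBracket, Pi.smul_apply, smul_eq_mul, Finset.mul_sum]
  refine Finset.sum_congr rfl fun a _ => Finset.sum_congr rfl fun b _ => by ring

theorem zassBracket_smul_right (K : Type*) [Field K] (n : ℕ) (c : K)
    (x y : Fin (2 ^ n - 1) → K) :
    zassBracket K n x (c • y) = c • zassBracket K n x y := by
  funext k
  simp only [zassBracket, Pi.smul_apply, smul_eq_mul, Finset.mul_sum]
  refine Finset.sum_congr rfl fun a _ => Finset.sum_congr rfl fun b _ => by ring

/-- The space of derivations of the Zassenhaus algebra `W₁′(n)`: linear endomorphisms `D`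
satisfying the Leibniz rule `D [x,y] = [D x, y] + [x, D y]`. -/
def zassDerivations (K : Type*) [Field K] (n : ℕ) :
    Submodule K ((Fin (2 ^ n - 1) → K) →ₗ[K] (Fin (2 ^ n - 1) → K)) where
  carrier := {D | ∀ x y, D (zassBracket K n x y)
    = zassBracket K n (D x) y + zassBracket K n x (D y)}
  add_mem' := by
    intro D D' hD hD' x y
    simp only [LinearMap.add_apply, hD x y, hD' x y, zassBracket_add_left,
      zassBracket_add_right]
    abel
  zero_mem' := by
    intro x y
    have h0 : ∀ y : Fin (2 ^ n - 1) → K, zassBracket K n 0 y = 0 := by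
      intro y; funext k; simp [zassBracket]
    have h0' : ∀ x : Fin (2 ^ n - 1) → K, zassBracket K n x 0 = 0 := by
      intro x; funext k; simp [zassBracket]
    simp [h0, h0']
  smul_mem' := by
    intro c D hD x y
    simp only [LinearMap.smul_apply, hD x y, zassBracket_smul_left, zassBracket_smul_right,
      smul_add]

namespace Zass

variable {K : Type*} [Field K] {n : ℕ}

/-- Extension by zero. -/
def ext (y : Fin (2 ^ n - 1) → K) (j : ℕ) : K := if h : j < 2 ^ n - 1 then y ⟨j, h⟩ else 0

/-- Basis vector. -/
abbrev e (K : Type*) [Field K] {n : ℕ} (a : Fin (2 ^ n - 1)) : Fin (2 ^ n - 1) → K := Pi.single a 1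

theorem ext_e (a : Fin (2 ^ n - 1)) (j : ℕ) : ext (e K a) j = if j = (a : ℕ) then 1 else 0 := by
  unfold ext
  split_ifs with h1 h2 h2
  · subst h2; simp
  · exact Pi.single_eq_of_ne (fun h => h2 (by rw [← h])) _
  · exact absurd a.2 (by omega)
  · rfl

theorem br_symm (x y : Fin (2 ^ n - 1) → K) : zassBracket K n x y = zassBracket K n y x := by
  funext k
  unfold zassBracket
  rw [Finset.sum_comm]
  refine Finset.sum_congr rfl fun a _ => Finset.sum_congr rfl fun b _ => ?_
  by_cases h : (a : ℕ) + b = k + 1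
  · rw [if_pos h, if_pos (by omega), Nat.choose_symm_of_eq_add (by omega : (k : ℕ) + 1 = b + a)]
    ring
  · rw [if_neg h, if_neg (by omega)]; ring

theorem br_e (a : Fin (2 ^ n - 1)) (y : Fin (2 ^ n - 1) → K) (k : Fin (2 ^ n - 1)) :
    zassBracket K n (e K a) y k =
      if (a : ℕ) ≤ k + 1 then (Nat.choose (k + 1) a : K) * ext y (k + 1 - a) else 0 := by
  unfold zassBracket
  rw [Finset.sum_eq_single a]
  · split_ifs with h
    · unfold ext
      split_ifs with h2
      · rw [Finset.sum_eq_single ⟨_, h2⟩]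
        · simp [h]
        · intro b _ hb
          rw [if_neg]
          · simp
          · intro hh; apply hb; ext; simp; omega
        · simp
      · rw [mul_zero]
        apply Finset.sum_eq_zero
        intro b _
        rw [if_neg (by have := b.2; omega)]; simp
    · apply Finset.sum_eq_zero
      intro b _
      rw [if_neg (by omega)]; simp
  · intro b _ hb
    simp [Pi.single_eq_of_ne hb]
  · simp

theorem br_ee (a b k : Fin (2 ^ n - 1)) :
    zassBracket K n (e K a) (e K b) k =
      if (a : ℕ) + b = k + 1 then (Nat.choose (k + 1) a : K) else 0 := by
  rw [br_e, ext_e]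
  split_ifs <;> first | omega | simp

/-- The structure constants of a double bracket. -/
def T (a b c : ℕ) : ℕ := if b + c = 0 then 0 else (b + c).choose b * (a + b + c - 1).choose a

theorem ext_br_ee (a b : Fin (2 ^ n - 1)) (j : ℕ) :
    ext (zassBracket K n (e K a) (e K b)) j =
      if j < 2 ^ n - 1 ∧ (a : ℕ) + b = j + 1 then (Nat.choose (j + 1) a : K) else 0 := by
  unfold ext
  split_ifs with h1 h2 h2
  · rw [br_ee, if_pos h2.2]
  · rw [br_ee, if_neg (by tauto)]
  · tauto
  · rfl

theorem br_eee [CharP K 2] (a b c m : Fin (2 ^ n - 1)) :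
    zassBracket K n (e K a) (zassBracket K n (e K b) (e K c)) m =
      if (a : ℕ) + b + c = m + 2 then (T a b c : K) else 0 := by
  rw [br_e, ext_br_ee]
  have hm := m.2
  have hb := b.2
  have hc := c.2
  by_cases h : (a : ℕ) + b + c = m + 2
  · rw [if_pos h]
    by_cases h0 : (b : ℕ) + c = 0
    · rw [if_neg (by omega), T, if_pos h0]; simp
    · rw [if_pos (by omega), T, if_neg h0]
      by_cases h3 : (m : ℕ) + 1 - a < 2 ^ n - 1
      · rw [if_pos (by omega), show (m : ℕ) + 1 - a + 1 = b + c by omega,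
          show (m : ℕ) + 1 = a + b + c - 1 by omega]
        push_cast; ring
      · rw [if_neg (by tauto)]
        have h4 : (b : ℕ) + c = 2 ^ n := by omega
        have : 2 ∣ ((b : ℕ) + c).choose b := by
          rw [h4]; exact Nat.prime_two.dvd_choose_pow (by omega) (by omega)
        push_cast
        rw [(CharP.cast_eq_zero_iff K 2 _).2 this]; simp
  · rw [if_neg h]
    split_ifs with h1 h2
    · omega
    · simp
    · rfl

theorem P_fac (a b c : ℕ) :
    ((b + c).choose b * (a + (b + c)).choose a) * (a.factorial * b.factorial * c.factorial)
      = (a + b + c).factorial := by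
  have h1 := Nat.add_choose_mul_factorial_mul_factorial b c
  have h2 := Nat.add_choose_mul_factorial_mul_factorial a (b + c)
  rw [← Nat.choose_symm_add] at h1 h2
  rw [add_assoc, ← h2, ← h1]; ring

/-- Multinomial. -/
def P (a b c : ℕ) : ℕ := (b + c).choose b * (a + (b + c)).choose a

theorem P_swap (a b c : ℕ) : P a b c = P b a c := by
  have h1 := P_fac a b c
  have h2 := P_fac b a c
  rw [show b + a + c = a + b + c by ring, ← h1] at h2
  have : 0 < a.factorial * b.factorial * c.factorial := by positivity
  apply Nat.eq_of_mul_eq_mul_right this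
  unfold P; rw [← h2]; ring

theorem P_swap2 (a b c : ℕ) : P a b c = P a c b := by
  unfold P
  rw [add_comm c b, Nat.choose_symm_add]

theorem T_succ (a b c : ℕ) : T a (b + 1) (c + 1) = P a b (c + 1) + P a (b + 1) c := by
  unfold T P
  rw [if_neg (by omega), show b + 1 + (c + 1) = (b + (c + 1)) + 1 by ring, Nat.choose_succ_succ,
    show a + (b + 1) + (c + 1) - 1 = a + (b + (c + 1)) by omega,
    show b + 1 + c = b + (c + 1) by ring]
  ring

theorem T_z1 (a b : ℕ) : T a (b + 1) 0 = P a b 0 := by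
  unfold T P
  rw [if_neg (by omega)]; simp [← add_assoc]

theorem T_z2 (a c : ℕ) : T a 0 (c + 1) = P a 0 c := by
  unfold T P
  rw [if_neg (by omega)]; simp [← add_assoc]

theorem T_zz (a : ℕ) : T a 0 0 = 0 := by simp [T]

theorem T_jac [CharP K 2] (a b c : ℕ) : (T a b c : K) = T c a b + T b a c := by
  have h2 : (2 : K) = 0 := CharTwo.two_eq_zero
  have s1 : ∀ a b c, (P a b c : K) = P c a b := fun a b c => by rw [P_swap2, P_swap]
  have s2 : ∀ a b c, (P a b c : K) = P b a c := fun a b c => by rw [P_swap]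
  have s3 : ∀ a b c, (P a b c : K) = P c b a := fun a b c => by rw [s1, P_swap2]
  rcases a with _ | a <;> rcases b with _ | b <;> rcases c with _ | c <;>
    simp only [T_zz, T_z1, T_z2, T_succ, Nat.cast_add, Nat.cast_zero]
  · ring
  · linear_combination s2 0 0 c
  · linear_combination s1 0 b 0
  · linear_combination s1 0 b (c + 1) + s2 0 (b + 1) c
  · linear_combination - s3 0 a 0 - h2 * P 0 a 0
  · linear_combination s2 (a + 1) 0 c - s3 (c + 1) a 0 - h2 * P 0 a (c + 1)
  · linear_combination s1 (a + 1) b 0 - s3 0 a (b + 1) - h2 * P (b + 1) a 0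
  · linear_combination s1 (a + 1) b (c + 1) + s2 (a + 1) (b + 1) c - s3 (c + 1) a (b + 1)
      - h2 * P (b + 1) a (c + 1)

theorem br_jac [CharP K 2] (a b c : Fin (2 ^ n - 1)) :
    zassBracket K n (e K a) (zassBracket K n (e K b) (e K c)) =
      zassBracket K n (zassBracket K n (e K a) (e K b)) (e K c) +
      zassBracket K n (e K b) (zassBracket K n (e K a) (e K c)) := by
  funext m
  rw [br_symm (zassBracket K n (e K a) (e K b)) (e K c), Pi.add_apply, br_eee, br_eee, br_eee]
  by_cases h : (a : ℕ) + b + c = m + 2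
  · rw [if_pos h, if_pos (by omega), if_pos (by omega), T_jac]
  · rw [if_neg h, if_neg (by omega), if_neg (by omega), add_zero]

/-- The bracket as a bilinear map. -/
def Bl (K : Type*) [Field K] (n : ℕ) :
    (Fin (2 ^ n - 1) → K) →ₗ[K] (Fin (2 ^ n - 1) → K) →ₗ[K] (Fin (2 ^ n - 1) → K) :=
  LinearMap.mk₂ K (zassBracket K n) (zassBracket_add_left K n) (zassBracket_smul_left K n)
    (zassBracket_add_right K n) (zassBracket_smul_right K n)

theorem mem_of_basis (D : (Fin (2 ^ n - 1) → K) →ₗ[K] (Fin (2 ^ n - 1) → K))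
    (h : ∀ a b, D (zassBracket K n (e K a) (e K b))
      = zassBracket K n (D (e K a)) (e K b) + zassBracket K n (e K a) (D (e K b))) :
    D ∈ zassDerivations K n := by
  have key : (Bl K n).compr₂ D = (Bl K n).compl₁₂ D LinearMap.id +
      (Bl K n).compl₁₂ LinearMap.id D := by
    refine (Pi.basisFun K _).ext fun a => (Pi.basisFun K _).ext fun b => ?_
    simpa [Bl] using h a b
  intro x y
  simpa [Bl] using LinearMap.congr_fun (LinearMap.congr_fun key x) y

theorem ad_mem [CharP K 2] (a : Fin (2 ^ n - 1)) : Bl K n (e K a) ∈ zassDerivations K n :=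
  mem_of_basis _ fun b c => br_jac a b c

theorem sq_mem [CharP K 2] (D : (Fin (2 ^ n - 1) → K) →ₗ[K] (Fin (2 ^ n - 1) → K))
    (h : D ∈ zassDerivations K n) : D * D ∈ zassDerivations K n := by
  intro x y
  have h' : ∀ x y, D (zassBracket K n x y)
    = zassBracket K n (D x) y + zassBracket K n x (D y) := h
  simp only [Module.End.mul_apply, h', map_add]
  have : zassBracket K n (D x) (D y) + zassBracket K n (D x) (D y) = 0 := by
    funext k; exact CharTwo.add_self_eq_zero _
  linear_combination (exp := 1) this

theorem pow_mem [CharP K 2] (D : (Fin (2 ^ n - 1) → K) →ₗ[K] (Fin (2 ^ n - 1) → K))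
    (h : D ∈ zassDerivations K n) (k : ℕ) : D ^ (2 ^ k) ∈ zassDerivations K n := by
  induction k with
  | zero => simpa using h
  | succ k ih => rw [pow_succ, pow_mul, pow_two]; exact sq_mem _ ih

theorem choose_odd [CharP K 2] (k m : ℕ) (h1 : 2 ^ k ≤ m) (h2 : m < 2 ^ (k + 1)) :
    (m.choose (2 ^ k) : K) = 1 := by
  have key : m.choose (2 ^ k) ≡ 1 [MOD 2] := by
    induction k generalizing m with
    | zero =>
      have : m = 1 := by simp at h1 h2; omega
      subst this; rfl
    | succ k ih =>
      haveI := Fact.mk Nat.prime_two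
      have := Choose.choose_modEq_choose_mod_mul_choose_div_nat (p := 2) (n := m) (k := 2 ^ (k + 1))
      refine this.trans ?_
      have hk : 2 ^ (k + 1) % 2 = 0 := by omega
      have hk' : 2 ^ (k + 1) / 2 = 2 ^ k := by omega
      rw [hk, hk', Nat.choose_zero_right, one_mul]
      exact ih _ (by omega) (by omega)
  have := (CharP.natCast_eq_natCast K 2).2 key
  simpa using this

theorem br_zero (h0 : 0 < 2 ^ n - 1) (y : Fin (2 ^ n - 1) → K) (k : Fin (2 ^ n - 1)) :
    zassBracket K n (e K ⟨0, h0⟩) y k = ext y (k + 1) := by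
  rw [br_e]; simp

theorem dpow (h0 : 0 < 2 ^ n - 1) (j : ℕ) (y : Fin (2 ^ n - 1) → K) (k : Fin (2 ^ n - 1)) :
    ((Bl K n (e K ⟨0, h0⟩)) ^ j) y k = ext y (k + j) := by
  induction j generalizing y k with
  | zero => simp [ext]
  | succ j ih =>
    rw [pow_succ, Module.End.mul_apply, ih]
    have : ∀ i, ext (Bl K n (e K ⟨0, h0⟩) y) i = ext y (i + 1) := by
      intro i
      rw [ext]
      split_ifs with h
      · exact br_zero h0 y ⟨i, h⟩
      · rw [ext, dif_neg (by omega)]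
    rw [this]; rfl

/-- The bound on powers. -/
theorem pow_lt (hn : 2 ≤ n) (k : Fin n) : 2 ^ (k : ℕ) < 2 ^ n - 1 := by
  have h1 : 2 ^ (k : ℕ) ≤ 2 ^ (n - 1) := Nat.pow_le_pow_right (by norm_num) (by omega)
  have h2 : 2 ^ n = 2 * 2 ^ (n - 1) := by rw [← pow_succ']; congr 1; omega
  have h3 : 2 ^ 1 ≤ 2 ^ (n - 1) := Nat.pow_le_pow_right (by norm_num) (by omega)
  omega

theorem pos (hn : 2 ≤ n) : 0 < 2 ^ n - 1 := lt_of_le_of_lt (Nat.zero_le _) (pow_lt hn ⟨0, by omega⟩)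

/-- The coordinates on the derivation space. -/
def Phi0 (K : Type*) [Field K] {n : ℕ} (hn : 2 ≤ n) :
    ((Fin (2 ^ n - 1) → K) →ₗ[K] (Fin (2 ^ n - 1) → K)) →ₗ[K]
      (Fin (2 ^ n - 1) → K) × (Fin n → K) where
  toFun D := (D (e K ⟨0, pos hn⟩), fun k => D (e K ⟨2 ^ (k : ℕ), pow_lt hn k⟩) ⟨0, pos hn⟩)
  map_add' _ _ := rfl
  map_smul' _ _ := rfl

/-- The coordinates on the derivation space. -/
def Phi (K : Type*) [Field K] {n : ℕ} (hn : 2 ≤ n) :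
    zassDerivations K n →ₗ[K] (Fin (2 ^ n - 1) → K) × (Fin n → K) :=
  (Phi0 K hn).comp (zassDerivations K n).subtype

theorem br_coord0 (hn : 2 ≤ n) (a : Fin (2 ^ n - 1)) (ha : 1 < (a : ℕ))
    (y : Fin (2 ^ n - 1) → K) : zassBracket K n (e K a) y ⟨0, pos hn⟩ = 0 := by
  rw [br_e, if_neg (by simpa using ha)]

theorem c_zero [CharP K 2] (hn : 2 ≤ n) (D : (Fin (2 ^ n - 1) → K) →ₗ[K] (Fin (2 ^ n - 1) → K))
    (h : ∀ x y, D (zassBracket K n x y)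
      = zassBracket K n (D x) y + zassBracket K n x (D y))
    (hc : ∀ k : Fin n, D (e K ⟨2 ^ (k : ℕ), pow_lt hn k⟩) ⟨0, pos hn⟩ = 0)
    (b : ℕ) (hb : b < 2 ^ n - 1) (hb0 : 0 < b) : D (e K ⟨b, hb⟩) ⟨0, pos hn⟩ = 0 := by
  have hN := pow_lt hn ⟨1, by omega⟩
  simp only [pow_one] at hN
  by_cases hp : ∃ k, b = 2 ^ k
  · obtain ⟨k, rfl⟩ := hp
    have : k < n := (Nat.pow_lt_pow_iff_right (a := 2) (by norm_num)).1 (by omega)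
    exact hc ⟨k, this⟩
  have hb1 : b ≠ 1 := fun h => hp ⟨0, by simpa using h⟩
  rcases Nat.even_or_odd b with he | ho
  · obtain ⟨k, hk⟩ : ∃ k, k = Nat.log 2 b := ⟨_, rfl⟩
    have hk1 : 2 ^ k ≤ b := by rw [hk]; exact Nat.pow_log_le_self 2 (by omega)
    have hk2 : b < 2 ^ (k + 1) := by rw [hk]; exact Nat.lt_pow_succ_log_self (by norm_num) b
    have hk3 : b ≠ 2 ^ k := fun h => hp ⟨k, h⟩
    have hk0 : k ≠ 0 := by rintro h0; rw [h0] at hk1 hk2; omega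
    obtain ⟨j, rfl⟩ : ∃ j, k = j + 1 := ⟨k - 1, by omega⟩
    obtain ⟨r, hr⟩ := he
    have hq : b + 1 - 2 ^ (j + 1) < 2 ^ n - 1 := by omega
    have h1 := h (e K ⟨2 ^ (j + 1), by omega⟩) (e K ⟨b + 1 - 2 ^ (j + 1), hq⟩)
    have h2 : zassBracket K n (e K ⟨2 ^ (j + 1), by omega⟩) (e K ⟨b + 1 - 2 ^ (j + 1), hq⟩) =
        e K ⟨b, hb⟩ := by
      funext m
      rw [br_ee]
      by_cases hm : m = ⟨b, hb⟩
      · subst hm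
        rw [if_pos (by simp; omega)]
        simp only [Pi.single_eq_same]
        exact choose_odd (j + 1) _ (by omega) (by omega)
      · rw [if_neg]
        · simp [e, Pi.single_eq_of_ne hm]
        intro hh; apply hm; ext; simp at hh ⊢; omega
    rw [h2] at h1
    rw [h1, Pi.add_apply, br_symm (D _), br_coord0 hn _ (by show 1 < b + 1 - 2 ^ (j + 1); omega),
      br_coord0 hn _ (by show 1 < 2 ^ (j + 1); have := Nat.pos_of_ne_zero (pow_ne_zero j (two_ne_zero (α := ℕ))); omega), add_zero]
  · have h1 := h (e K ⟨b, hb⟩) (e K ⟨1, by omega⟩)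
    have h2 : zassBracket K n (e K ⟨b, hb⟩) (e K ⟨1, by omega⟩) = 0 := by
      funext m
      rw [br_ee]
      split_ifs with hm
      · simp only at hm
        rw [← hm]
        simp only [Nat.choose_succ_self_right, Pi.zero_apply]
        rw [CharP.cast_eq_zero_iff K 2]
        obtain ⟨r, hr⟩ := ho; omega
      · rfl
    rw [h2, map_zero] at h1
    have h3 := congrFun h1 ⟨0, pos hn⟩
    rw [Pi.add_apply, br_coord0 hn _ (by simp; omega), br_symm, br_e] at h3
    simp only [ext] at h3
    simpa [pos hn] using h3.symm

theorem Phi_inj [CharP K 2] (hn : 2 ≤ n) : Function.Injective (Phi K hn) := by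
  rw [injective_iff_map_eq_zero]
  rintro ⟨D, hD⟩ hz
  have h : ∀ x y, D (zassBracket K n x y)
      = zassBracket K n (D x) y + zassBracket K n x (D y) := hD
  have hz1 : D (e K ⟨0, pos hn⟩) = 0 := congrArg Prod.fst hz
  have hz2 : ∀ k : Fin n, D (e K ⟨2 ^ (k : ℕ), pow_lt hn k⟩) ⟨0, pos hn⟩ = 0 :=
    fun k => congrFun (congrArg Prod.snd hz) k
  have hc := c_zero hn D h hz2
  have all : ∀ b (hb : b < 2 ^ n - 1), D (e K ⟨b, hb⟩) = 0 := by
    intro b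
    induction b with
    | zero => intro _; exact hz1
    | succ b ih =>
      intro hb
      funext m
      obtain ⟨m, hm⟩ := m
      rcases m with _ | m
      · exact hc _ hb (by omega)
      · have h1 := h (e K ⟨0, pos hn⟩) (e K ⟨b + 1, hb⟩)
        have h2 : zassBracket K n (e K ⟨0, pos hn⟩) (e K ⟨b + 1, hb⟩) = e K ⟨b, by omega⟩ := by
          funext k
          rw [br_zero, ext_e]
          simp [Pi.single_apply, Fin.ext_iff]
        have h0 : zassBracket K n 0 (e K ⟨b + 1, hb⟩) = 0 := by funext k; simp [zassBracket]
        rw [h2, ih (by omega), hz1, h0, zero_add] at h1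
        have h3 := congrFun h1 ⟨m, by omega⟩
        rw [br_zero] at h3
        simp only [ext, hm, dif_pos] at h3
        exact h3.symm
  apply Subtype.ext
  refine (Pi.basisFun K _).ext fun a => ?_
  simpa using all a a.2

theorem Phi_surj [CharP K 2] (hn : 2 ≤ n) : Function.Surjective (Phi K hn) := by
  have s1 : ∀ i, (e K i, (0 : Fin n → K)) ∈ LinearMap.range (Phi K hn) := by
    intro i
    have hi := i.2
    by_cases h : (i : ℕ) + 1 < 2 ^ n - 1
    · refine ⟨⟨Bl K n (e K ⟨i + 1, h⟩), ad_mem _⟩, Prod.ext ?_ ?_⟩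
      · change zassBracket K n _ _ = _
        funext k
        rw [br_symm, br_zero, ext_e]
        simp [Pi.single_apply, Fin.ext_iff]
      · funext k
        change zassBracket K n _ _ _ = _
        have := Nat.pos_of_ne_zero (pow_ne_zero (k : ℕ) (two_ne_zero (α := ℕ)))
        rw [br_ee, if_neg (by simp only; omega)]; rfl
    · have hh := pow_lt hn ⟨n - 1, by omega⟩
      simp only at hh
      have h2 : 2 ^ n = 2 * 2 ^ (n - 1) := by rw [← pow_succ']; congr 1; omega
      have h3 : 2 ^ 1 ≤ 2 ^ (n - 1) := Nat.pow_le_pow_right (by norm_num) (by omega)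
      refine ⟨⟨_, sq_mem _ (ad_mem ⟨2 ^ (n - 1), hh⟩)⟩, Prod.ext ?_ ?_⟩
      · change zassBracket K n _ (zassBracket K n _ _) = _
        funext k
        rw [br_eee]
        have hk := k.2
        by_cases hk' : k = i
        · subst hk'
          rw [if_pos (by simp; omega)]
          simp only [T, add_zero, Pi.single_eq_same]
          rw [if_neg (by omega), Nat.choose_self, one_mul]
          exact choose_odd _ _ (by omega) (by rw [pow_succ]; omega)
        · have : (k : ℕ) ≠ i := fun h => hk' (Fin.ext h)
          rw [if_neg (by simp; omega)]
          simp [Pi.single_eq_of_ne hk']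
      · funext k
        change zassBracket K n _ (zassBracket K n _ _) _ = _
        rw [br_coord0 hn _ (by simp; omega)]; rfl
  have s2 : ∀ k, ((0 : Fin (2 ^ n - 1) → K), (Pi.single k 1 : Fin n → K)) ∈
      LinearMap.range (Phi K hn) := by
    intro k
    refine ⟨⟨_, pow_mem _ (ad_mem ⟨0, pos hn⟩) k⟩, Prod.ext ?_ ?_⟩
    · change ((Bl K n (e K ⟨0, pos hn⟩)) ^ _) _ = _
      funext m
      rw [dpow, ext_e, if_neg (by simp)]; rfl
    · funext l
      change ((Bl K n (e K ⟨0, pos hn⟩)) ^ _) _ _ = _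
      rw [dpow, ext_e]
      simp [Pi.single_apply, Fin.ext_iff, eq_comm]
  rw [← LinearMap.range_eq_top, eq_top_iff]
  rintro ⟨f, c⟩ -
  have : (f, c) = ∑ i, f i • (e K i, (0 : Fin n → K)) +
      ∑ k, c k • ((0 : Fin (2 ^ n - 1) → K), (Pi.single k 1 : Fin n → K)) := by
    ext j <;> simp [Prod.fst_sum, Prod.snd_sum, Finset.sum_apply, Pi.single_apply]
  rw [this]
  exact add_mem (sum_mem fun i _ => Submodule.smul_mem _ _ (s1 i))
    (sum_mem fun i _ => Submodule.smul_mem _ _ (s2 i))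

end Zass

/-- Over a field of characteristic 2 and for `n ≥ 2`, the Lie algebra of derivations of the
Zassenhaus algebra `W₁′(n)` has dimension `2^n + n - 1`. -/
theorem zassenhaus_derivations_dim (K : Type*) [Field K] [CharP K 2] (n : ℕ) (hn : 2 ≤ n) :
    Module.finrank K (zassDerivations K n) = 2 ^ n + n - 1 := by
  rw [(LinearEquiv.ofBijective (Zass.Phi K hn) ⟨Zass.Phi_inj hn, Zass.Phi_surj hn⟩).finrank_eq]
  have := Zass.pos hn
  simp
  omega
end

section
/- Let K be a field of characteristic p > 0 and L a finite-dimensional Lie algebra over K with dim L ≥ 2. Then there exist a finite-dimensional L-module M and an alternating bilinear map f: L × L → M satisfying the 2-cocycle identity x·f(y,z) − y·f(x,z) + z·f(x,y) − f([x,y],z) + f([x,z],y) − f([y,z],x) = 0 for all x,y,z ∈ L, such that f is not a 2-coboundary, i.e., there is no linear map g: L → M with f(x,y) = x·g(y) − y·g(x) − g([x,y]) for all x,y ∈ L. -/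
open Finset

namespace DZ
universe u
noncomputable section

def pp {K : Type u} [Field K] (p m : ℕ) (a : ℕ → K) {E : Type*} [Ring E] [Algebra K E] (α : E) : E :=
  ∑ i ∈ range (m+1), a i • α ^ (p ^ i)

section
variable {K : Type u} [Field K] {p m : ℕ} {a : ℕ → K}

lemma pp_map {E E' : Type*} [Ring E] [Algebra K E] [Ring E'] [Algebra K E'] (φ : E →ₐ[K] E') (α : E) :
    pp p m a (φ α) = φ (pp p m a α) := by
  simp [pp, map_sum]

lemma pp_add [hp : Fact p.Prime] [CharP K p] {E : Type*} [Ring E] [Algebra K E] {α β : E} (h : Commute α β) :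
    pp p m a (α + β) = pp p m a α + pp p m a β := by
  rcases subsingleton_or_nontrivial E with hE | hE
  · exact Subsingleton.elim _ _
  have : CharP E p := charP_of_injective_algebraMap (algebraMap K E).injective p
  simp only [pp, ← sum_add_distrib, ← smul_add]
  refine sum_congr rfl fun i _ => ?_
  rw [add_pow_char_pow_of_commute _ _ h]

lemma pp_neg [hp : Fact p.Prime] [CharP K p] {E : Type*} [Ring E] [Algebra K E] (α : E) :
    pp p m a (-α) = - pp p m a α := by
  have h0 : pp p m a (0:E) = 0 := by
    simp only [pp]
    refine sum_eq_zero fun i _ => ?_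
    rw [zero_pow (pow_ne_zero _ hp.out.ne_zero), smul_zero]
  have := pp_add (K := K) (p := p) (m := m) (a := a) (α := α) (β := -α) (Commute.refl α).neg_right
  rw [add_neg_cancel, h0] at this
  exact (neg_eq_of_add_eq_zero_right this.symm).symm

lemma pp_sub [hp : Fact p.Prime] [CharP K p] {E : Type*} [Ring E] [Algebra K E] {α β : E} (h : Commute α β) :
    pp p m a (α - β) = pp p m a α - pp p m a β := by
  rw [sub_eq_add_neg, pp_add h.neg_right, pp_neg, sub_eq_add_neg]

lemma pow_intertwine {V W : Type*} [AddCommGroup V] [Module K V] [AddCommGroup W] [Module K W]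
    (μ : V →ₗ[K] W) (X : Module.End K V) (T : Module.End K W) (h : ∀ v, T (μ v) = μ (X v)) (n : ℕ) (v : V) :
    (T ^ n) (μ v) = μ ((X ^ n) v) := by
  induction n generalizing v with
  | zero => simp
  | succ n ih => rw [pow_succ, pow_succ, Module.End.mul_apply, h, ih, Module.End.mul_apply]

lemma pp_intertwine {V W : Type*} [AddCommGroup V] [Module K V] [AddCommGroup W] [Module K W]
    (μ : V →ₗ[K] W) (X : Module.End K V) (T : Module.End K W) (h : ∀ v, T (μ v) = μ (X v)) (v : V) :
    (pp p m a T) (μ v) = μ ((pp p m a X) v) := by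
  simp [pp, LinearMap.sum_apply, pow_intertwine μ X T h]

def IsRep {L : Type*} [LieRing L] [LieAlgebra K L] {Y : Type*} [AddCommGroup Y] [Module K Y]
    (ρ : L →ₗ[K] Module.End K Y) : Prop := ∀ l n, ρ ⁅l, n⁆ = ρ l * ρ n - ρ n * ρ l

lemma pp_central [hp : Fact p.Prime] [CharP K p] {L : Type*} [LieRing L] [LieAlgebra K L] {Y : Type*} [AddCommGroup Y] [Module K Y]
    {ρ : L →ₗ[K] Module.End K Y} (hρ : IsRep ρ) (x : L) (hx : pp p m a (LieAlgebra.ad K L x) = 0) (l : L) :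
    Commute (pp p m a (ρ x)) (ρ l) := by
  have h1 := pp_intertwine (p := p) (m := m) (a := a) ρ (LieAlgebra.ad K L x)
    (LinearMap.mulLeft K (ρ x) - LinearMap.mulRight K (ρ x)) (fun v => by simp [show ρ ⁅x, v⁆ = _ from hρ x v]) l
  rw [hx, LinearMap.zero_apply, map_zero] at h1
  rw [pp_sub (LinearMap.commute_mulLeft_right _ _)] at h1
  simp only [pp, LinearMap.pow_mulLeft, LinearMap.pow_mulRight, LinearMap.sub_apply, LinearMap.sum_apply,
    LinearMap.smul_apply, LinearMap.mulLeft_apply, LinearMap.mulRight_apply] at h1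
  unfold pp Commute SemiconjBy
  rw [sum_mul, mul_sum]
  simp only [smul_mul_assoc, mul_smul_comm]
  exact sub_eq_zero.mp h1

lemma pp_tensor [hp : Fact p.Prime] [CharP K p] {V W : Type*} [AddCommGroup V] [Module K V] [AddCommGroup W] [Module K W]
    (S : Module.End K V) (T : Module.End K W) :
    pp p m a (LinearMap.rTensor W S + LinearMap.lTensor V T) =
      LinearMap.rTensor W (pp p m a S) + LinearMap.lTensor V (pp p m a T) := by
  rw [pp_add (by
    unfold Commute SemiconjBy
    rw [Module.End.mul_eq_comp, Module.End.mul_eq_comp, LinearMap.rTensor_comp_lTensor, LinearMap.lTensor_comp_rTensor])]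
  congr 1
  · exact pp_map (Module.End.rTensorAlgHom K V W) S
  · exact pp_map (Module.End.lTensorAlgHom K W V) T

lemma exists_pp (hp : p.Prime) {E : Type*} [Ring E] [Algebra K E] [FiniteDimensional K E] (α : E) :
    ∃ (m : ℕ) (a : ℕ → K), 1 ≤ m ∧ a m = 1 ∧ pp p m a α = 0 := by
  have hdep : ¬ LinearIndependent K (fun i : ℕ => α ^ (p ^ (i+1))) := by
    intro h
    have := h.finite_of_isNoetherian
    exact not_finite ℕ
  rw [linearIndependent_iff] at hdep
  push Not at hdep
  obtain ⟨c, hc, hc0⟩ := hdep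
  have hne : c.support.Nonempty := Finsupp.support_nonempty_iff.mpr hc0
  set M := c.support.max' hne
  have hM : c M ≠ 0 := Finsupp.mem_support_iff.mp (c.support.max'_mem hne)
  refine ⟨M+1, fun i => match i with | 0 => 0 | i+1 => (c M)⁻¹ * c i, by omega, by simp [hM], ?_⟩
  unfold pp
  rw [sum_range_succ']
  simp only [zero_smul, add_zero, mul_smul, ← smul_sum]
  rw [Finsupp.linearCombination_apply, Finsupp.sum_of_support_subset (s := range (M+1))] at hc
  · rw [hc, smul_zero]
  · intro i hi
    exact mem_range.mpr (Nat.lt_succ_of_le (c.support.le_max' i hi))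
  · simp

lemma pp_hom [hp : Fact p.Prime] [CharP K p] {V W : Type*} [AddCommGroup V] [Module K V] [AddCommGroup W] [Module K W]
    (S : Module.End K V) (T : Module.End K W) (φ : V →ₗ[K] W) :
    pp (E := Module.End K (V →ₗ[K] W)) p m a (LinearMap.compRight K T - LinearMap.lcomp K W S) φ =
      (pp p m a T) ∘ₗ φ - φ ∘ₗ (pp p m a S) := by
  have hc : Commute (LinearMap.compRight K T : Module.End K (V →ₗ[K] W))
      (LinearMap.lcomp K W S : Module.End K (V →ₗ[K] W)) := by
    unfold Commute SemiconjBy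
    ext; rfl
  have h2 : ∀ (n : ℕ) (φ : V →ₗ[K] W) (v : V),
      ((LinearMap.lcomp K W S : Module.End K (V →ₗ[K] W)) ^ n) φ v = φ ((S ^ n) v) := by
    intro n
    induction n with
    | zero => intro φ v; simp
    | succ n ih => intro φ v; rw [pow_succ, pow_succ', Module.End.mul_apply, ih]; rfl
  rw [pp_sub hc]
  ext v
  rw [LinearMap.sub_apply, LinearMap.sub_apply, LinearMap.sub_apply]
  congr 1
  · exact (pp_intertwine (LinearMap.applyₗ (R := K) (M₂ := W) v) (LinearMap.compRight K T) T (fun _ => rfl) φ).symm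
  · simp [pp, LinearMap.sum_apply, h2]

/-- The representation on `Hom(V, W)`. -/
def homRep {L : Type*} [LieRing L] [LieAlgebra K L] {V W : Type*} [AddCommGroup V] [Module K V]
    [AddCommGroup W] [Module K W] (ρ0 : L →ₗ[K] Module.End K V) (ρ : L →ₗ[K] Module.End K W) :
    L →ₗ[K] Module.End K (V →ₗ[K] W) where
  toFun l := LinearMap.compRight K (ρ l) - LinearMap.lcomp K W (ρ0 l)
  map_add' l n := by
    apply LinearMap.ext; intro φ; apply LinearMap.ext; intro v
    simp; abel
  map_smul' c l := by
    apply LinearMap.ext; intro φ; apply LinearMap.ext; intro v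
    simp [smul_sub]

lemma homRep_apply {L : Type*} [LieRing L] [LieAlgebra K L] {V W : Type*} [AddCommGroup V] [Module K V]
    [AddCommGroup W] [Module K W] (ρ0 : L →ₗ[K] Module.End K V) (ρ : L →ₗ[K] Module.End K W) (l : L)
    (φ : V →ₗ[K] W) (v : V) : homRep ρ0 ρ l φ v = ρ l (φ v) - φ (ρ0 l v) := rfl

lemma homRep_isRep {L : Type*} [LieRing L] [LieAlgebra K L] {V W : Type*} [AddCommGroup V] [Module K V]
    [AddCommGroup W] [Module K W] {ρ0 : L →ₗ[K] Module.End K V} {ρ : L →ₗ[K] Module.End K W}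
    (h0 : IsRep ρ0) (h : IsRep ρ) : IsRep (homRep ρ0 ρ) := by
  intro l n
  apply LinearMap.ext; intro φ; apply LinearMap.ext; intro v
  simp only [homRep_apply, h l n, h0 l n, LinearMap.sub_apply, Module.End.mul_apply, map_sub]
  abel

/-- The homotopy for an endomorphism with kernel inside range. -/
lemma exists_htpy {W : Type*} [AddCommGroup W] [Module K W] (t : Module.End K W)
    (h : LinearMap.ker t ≤ LinearMap.range t) : ∃ u v : Module.End K W, t * u + v * t = 1 := by
  obtain ⟨v0, hv0⟩ := t.rangeRestrict.exists_rightInverse_of_surjective (LinearMap.range_rangeRestrict t)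
  obtain ⟨P, hP⟩ := (LinearMap.range t).subtype.exists_leftInverse_of_injective (Submodule.ker_subtype _)
  have hP' : ∀ w, P (t w) = t.rangeRestrict w := fun w => LinearMap.congr_fun hP (t.rangeRestrict w)
  have hv0' : ∀ w, t (v0 w) = w := fun w => by
    have := LinearMap.congr_fun hv0 w
    exact congrArg Subtype.val this
  set v : Module.End K W := v0 ∘ₗ P
  have htv : ∀ w, t (v (t w)) = t w := by
    intro w
    simp only [v, LinearMap.comp_apply, hP', hv0']
    rfl
  obtain ⟨u, hu⟩ := Module.projective_lifting_property t.rangeRestrict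
    (((1 : Module.End K W) - v * t).codRestrict (LinearMap.range t) (fun w => h (by simp [htv])))
    (LinearMap.surjective_rangeRestrict t)
  refine ⟨u, v, ?_⟩
  ext w
  have := congrArg Subtype.val (LinearMap.congr_fun hu w)
  have h2 : t (u w) = w - v (t w) := this
  simp [h2]

lemma exists_Y [hp : Fact p.Prime] [CharP K p] {L : Type*} [LieRing L] [LieAlgebra K L] (x y : L)
    (hx : pp p m a (LieAlgebra.ad K L x) = 0)
    {W : Type u} [AddCommGroup W] [Module K W] [FiniteDimensional K W]
    {ρ : L →ₗ[K] Module.End K W} (hρ : IsRep ρ) (hy : pp p m a (ρ y) = 0)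
    (hk : LinearMap.ker (pp p m a (ρ x)) ≤ LinearMap.range (pp p m a (ρ x)))
    (hr : LinearMap.range (pp p m a (ρ x)) ≠ ⊤) :
    ∃ (Y : Type u) (_ : AddCommGroup Y) (_ : Module K Y) (_ : FiniteDimensional K Y)
      (σ : L →ₗ[K] Module.End K Y), IsRep σ ∧ pp p m a (σ y) = 0 ∧
      (∃ u v : Module.End K Y, pp p m a (σ x) * u + v * pp p m a (σ x) = 1) ∧
      ∃ (y0 : Y) (F : Y →ₗ[K] K), (∀ b, F (pp p m a (σ x) b) = 0) ∧ F y0 ≠ 0 ∧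
        ∀ l, ∃ b, σ l y0 = pp p m a (σ x) b := by
  obtain ⟨u, v, huv⟩ := exists_htpy _ hk
  set t := pp p m a (ρ x) with ht
  have hc : ∀ l w, t (ρ l w) = ρ l (t w) := fun l w =>
    LinearMap.congr_fun (pp_central hρ x hx l) w
  let R := LinearMap.range t
  have hR : ∀ l, R ≤ R.comap (ρ l) := by
    rintro l _ ⟨w, rfl⟩
    exact ⟨ρ l w, hc l w⟩
  let ρ0 : L →ₗ[K] Module.End K (W ⧸ R) :=
    { toFun := fun l => R.mapQ R (ρ l) (hR l)
      map_add' := fun l n => by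
        apply LinearMap.ext; intro w; obtain ⟨w, rfl⟩ := R.mkQ_surjective w; simp
      map_smul' := fun c n => by
        apply LinearMap.ext; intro w; obtain ⟨w, rfl⟩ := R.mkQ_surjective w; simp }
  have hρ0 : ∀ l w, ρ0 l (R.mkQ w) = R.mkQ (ρ l w) := fun l w => rfl
  have hrep0 : IsRep ρ0 := by
    intro l n
    apply LinearMap.ext; intro w; obtain ⟨w, rfl⟩ := R.mkQ_surjective w
    simp only [LinearMap.sub_apply, Module.End.mul_apply, hρ0, hρ l n, map_sub]
  have hz0 : ∀ z, pp p m a (ρ z) = 0 → pp p m a (ρ0 z) = 0 := by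
    intro z hz
    apply LinearMap.ext; intro w; obtain ⟨w, rfl⟩ := R.mkQ_surjective w
    rw [pp_intertwine R.mkQ (ρ z) (ρ0 z) (fun _ => rfl), hz]; simp
  have hx0 : pp p m a (ρ0 x) = 0 := by
    apply LinearMap.ext; intro w; obtain ⟨w, rfl⟩ := R.mkQ_surjective w
    rw [pp_intertwine R.mkQ (ρ x) (ρ0 x) (fun _ => rfl), ← ht]
    simp [R]
  let Y := (W ⧸ R) →ₗ[K] W
  let σ : L →ₗ[K] Module.End K Y := homRep ρ0 ρ
  have hσ : ∀ l (φ : Y), σ l φ = ρ l ∘ₗ φ - φ ∘ₗ ρ0 l := fun l φ => rfl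
  have hpp : ∀ z (φ : Y), pp p m a (σ z) φ = pp p m a (ρ z) ∘ₗ φ - φ ∘ₗ pp p m a (ρ0 z) :=
    fun z φ => pp_hom (ρ0 z) (ρ z) φ
  have hppx : ∀ φ : Y, pp p m a (σ x) φ = t ∘ₗ φ := by
    intro φ; rw [hpp, hx0, LinearMap.comp_zero, sub_zero]
  obtain ⟨y0, hy0⟩ := R.mkQ.exists_rightInverse_of_surjective (Submodule.range_mkQ _)
  have hnot : y0 ∉ LinearMap.range (pp p m a (σ x)) := by
    rintro ⟨φ, hφ⟩
    rw [hppx] at hφ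
    have h0 : ∀ w, R.mkQ (t w) = 0 := fun w => by
      rw [Submodule.mkQ_apply, Submodule.Quotient.mk_eq_zero]; exact ⟨w, rfl⟩
    apply hr
    rw [eq_top_iff]
    intro w _
    have h1 : R.mkQ (y0 (R.mkQ w)) = R.mkQ w := LinearMap.congr_fun hy0 _
    rw [← hφ, LinearMap.comp_apply, h0] at h1
    exact (Submodule.Quotient.mk_eq_zero R).mp h1.symm
  obtain ⟨F, hF1, hF2⟩ := Submodule.exists_le_ker_of_notMem hnot
  refine ⟨Y, inferInstance, inferInstance, inferInstance, σ, ?_, ?_, ?_, y0, F, ?_, hF1, ?_⟩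
  · exact homRep_isRep hrep0 hρ
  · apply LinearMap.ext; intro φ
    rw [hpp, hy, hz0 y hy]; simp
  · refine ⟨LinearMap.compRight K u, LinearMap.compRight K v, ?_⟩
    apply LinearMap.ext; intro φ
    rw [LinearMap.add_apply, Module.End.mul_apply, Module.End.mul_apply, hppx, hppx]
    apply LinearMap.ext; intro w
    exact LinearMap.congr_fun huv (φ w)
  · intro b
    exact hF2 ⟨b, rfl⟩
  · intro l
    have hmem : ∀ w, σ l y0 w ∈ R := by
      intro w
      rw [← Submodule.Quotient.mk_eq_zero, ← Submodule.mkQ_apply, hσ, LinearMap.sub_apply, map_sub,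
        LinearMap.comp_apply, LinearMap.comp_apply, ← hρ0]
      have h1 : ∀ w, R.mkQ (y0 w) = w := fun w => LinearMap.congr_fun hy0 w
      rw [h1, h1, sub_self]
    obtain ⟨b, hb⟩ := Module.projective_lifting_property t.rangeRestrict
      ((σ l y0).codRestrict R hmem) (LinearMap.surjective_rangeRestrict t)
    refine ⟨b, ?_⟩
    rw [hppx]
    apply LinearMap.ext; intro w
    exact (congrArg Subtype.val (LinearMap.congr_fun hb w)).symm

lemma exists_A [hp : Fact p.Prime] [CharP K p] {L : Type*} [LieRing L] [LieAlgebra K L]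
    [FiniteDimensional K L] (w : L) (hw : w ≠ 0) :
    ∃ (A : Type u) (_ : CommRing A) (_ : Algebra K A) (_ : FiniteDimensional K A) (_ : Nontrivial A)
      (D : L →ₗ[K] Module.End K A) (ι : L →ₗ[K] A), IsRep D ∧
      (∀ l f g, D l (f * g) = f * D l g + D l f * g) ∧ (∀ l v, D l (ι v) = ι ⁅l, v⁆) ∧ (ι w) ^ p = 1 := by
  classical
  obtain ⟨lam, hlam⟩ : ∃ lam : L →ₗ[K] K, lam w = 1 := by
    obtain ⟨f, hf, -⟩ := Submodule.exists_le_ker_of_notMem (p := (⊥ : Submodule K L)) (v := w) (by simpa using hw)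
    exact ⟨(f w)⁻¹ • f, by simp [hf]⟩
  let b := Module.finBasis K L
  let P := MvPolynomial (Fin (Module.finrank K L)) K
  have hpP : (p : P) = 0 := CharP.cast_eq_zero P p
  let ι0 : L →ₗ[K] P := b.constr K (fun i => (MvPolynomial.X i : P))
  have hι0 : ∀ i, ι0 (b i) = MvPolynomial.X i := fun i => b.constr_basis K _ i
  let D0 : L → Derivation K P P := fun l => MvPolynomial.mkDerivation K (fun i => ι0 ⁅l, b i⁆)
  have hD0 : ∀ l v, D0 l (ι0 v) = ι0 ⁅l, v⁆ := by
    intro l v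
    have : (D0 l : P →ₗ[K] P) ∘ₗ ι0 = ι0 ∘ₗ (LieModule.toEnd K L L l : L →ₗ[K] L) := by
      refine b.ext fun i => ?_
      simp only [LinearMap.comp_apply, hι0]
      exact MvPolynomial.mkDerivation_X _ _ _
    exact LinearMap.congr_fun this v
  let I : Ideal P := Ideal.span (Set.range fun v : L => ι0 v ^ p - MvPolynomial.C (lam v ^ p))
  have hI : ∀ l, ∀ f ∈ I, D0 l f ∈ I := by
    intro l f hf
    induction hf using Submodule.span_induction with
    | mem f h =>
      obtain ⟨v, rfl⟩ := h
      have : D0 l (ι0 v ^ p - MvPolynomial.C (lam v ^ p)) = 0 := by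
        rw [map_sub, Derivation.leibniz_pow, ← MvPolynomial.algebraMap_eq, Derivation.map_algebraMap]
        simp [nsmul_eq_mul, hpP]
      simp only [this]
      exact I.zero_mem
    | zero => simp
    | add f g _ _ h1 h2 => rw [map_add]; exact I.add_mem h1 h2
    | smul c f hf h =>
      rw [smul_eq_mul, Derivation.leibniz]
      refine I.add_mem ?_ ?_
      · rw [smul_eq_mul]; exact I.mul_mem_left _ h
      · rw [smul_eq_mul]; exact I.mul_mem_right _ hf
  let A := P ⧸ I
  let π : P →ₐ[K] A := Ideal.Quotient.mkₐ K I
  have hπ : Function.Surjective π := Ideal.Quotient.mkₐ_surjective K I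
  have hker : ∀ f, π f = 0 ↔ f ∈ I := fun f => Ideal.Quotient.eq_zero_iff_mem
  let D1 : L → Derivation K A A := fun l => Derivation.liftOfSurjective hπ (d := D0 l)
    (fun f hf => (hker _).2 (hI l f ((hker f).1 hf)))
  have hD1 : ∀ l f, D1 l (π f) = π (D0 l f) := fun l f => Derivation.liftOfSurjective_apply hπ _ f
  have hD0add : ∀ l n, D0 (l + n) = D0 l + D0 n := fun l n =>
    MvPolynomial.derivation_ext fun i => by
      simp only [Derivation.add_apply, D0, MvPolynomial.mkDerivation_X, add_lie, map_add]
  have hD0smul : ∀ (c : K) n, D0 (c • n) = c • D0 n := fun c n =>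
    MvPolynomial.derivation_ext fun i => by
      simp only [Derivation.smul_apply, D0, MvPolynomial.mkDerivation_X, smul_lie, map_smul]
  have hD0lie : ∀ l n, D0 ⁅l, n⁆ = ⁅D0 l, D0 n⁆ := fun l n =>
    MvPolynomial.derivation_ext fun i => by
      rw [Derivation.commutator_apply, ← hι0, hD0, hD0, hD0, hD0, hD0, lie_lie, map_sub]
  let D : L →ₗ[K] Module.End K A :=
    { toFun := fun l => (D1 l : A →ₗ[K] A)
      map_add' := fun l n => by
        apply LinearMap.ext; intro f; obtain ⟨f, rfl⟩ := hπ f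
        change D1 _ _ = D1 _ _ + D1 _ _
        rw [hD1, hD1, hD1, hD0add, Derivation.add_apply, map_add]
      map_smul' := fun l n => by
        apply LinearMap.ext; intro f; obtain ⟨f, rfl⟩ := hπ f
        change D1 _ _ = l • D1 _ _
        rw [hD1, hD1, hD0smul, Derivation.smul_apply, map_smul] }
  have hD : ∀ l f, D l (π f) = π (D0 l f) := hD1
  refine ⟨A, inferInstance, inferInstance, ?_, ?_, D, π.toLinearMap ∘ₗ ι0, ?_, ?_, ?_, ?_⟩
  · have hint : Algebra.IsIntegral K A := by
      refine ⟨fun f => ?_⟩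
      obtain ⟨f, rfl⟩ := hπ f
      induction f using MvPolynomial.induction_on with
      | C c =>
        have : π (MvPolynomial.C c) = algebraMap K A c := π.commutes c
        rw [this]; exact isIntegral_algebraMap
      | add f g h1 h2 => rw [map_add]; exact h1.add h2
      | mul_X f i h =>
        rw [map_mul]
        refine h.mul ?_
        refine IsIntegral.of_pow hp.out.pos (?_ : IsIntegral K (_ ^ p))
        have h0 : π (ι0 (b i) ^ p - MvPolynomial.C (lam (b i) ^ p)) = 0 :=
          (hker _).2 (Ideal.subset_span ⟨b i, rfl⟩)
        have h1 : π (MvPolynomial.C (lam (b i) ^ p)) = algebraMap K A (lam (b i) ^ p) := π.commutes _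
        rw [map_sub, sub_eq_zero, hι0, map_pow, h1] at h0
        rw [h0]; exact isIntegral_algebraMap
    have : Algebra.FiniteType K A := Algebra.FiniteType.of_surjective π hπ
    exact Algebra.IsIntegral.finite
  · refine Ideal.Quotient.nontrivial_iff.mpr fun htop => ?_
    have hev : ∀ v, MvPolynomial.aeval (fun i => lam (b i)) (ι0 v) = lam v := by
      intro v
      have : (MvPolynomial.aeval (fun i => lam (b i)) : P →ₐ[K] K).toLinearMap ∘ₗ ι0 = lam :=
        b.ext fun i => by simp [hι0]
      exact LinearMap.congr_fun this v
    have hle : I ≤ RingHom.ker (MvPolynomial.aeval (fun i => lam (b i)) : P →ₐ[K] K) := by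
      refine Ideal.span_le.mpr ?_
      rintro _ ⟨v, rfl⟩
      simp only [SetLike.mem_coe, RingHom.mem_ker]
      have hC : ∀ c : K, (MvPolynomial.aeval (fun i => lam (b i)) : P →ₐ[K] K) (MvPolynomial.C c) = c :=
        fun c => AlgHom.commutes _ c
      rw [map_sub, map_pow, hev, hC, sub_self]
    have h1 : (1 : P) ∈ RingHom.ker (MvPolynomial.aeval (fun i => lam (b i)) : P →ₐ[K] K) :=
      hle (htop ▸ Submodule.mem_top)
    rw [RingHom.mem_ker, map_one] at h1
    exact one_ne_zero h1
  · intro l n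
    apply LinearMap.ext; intro f; obtain ⟨f, rfl⟩ := hπ f
    simp only [LinearMap.sub_apply, Module.End.mul_apply, hD]
    rw [hD0lie, Derivation.commutator_apply, map_sub]
  · intro l f g
    change D1 l _ = _ * D1 l _ + D1 l _ * _
    rw [Derivation.leibniz, smul_eq_mul, smul_eq_mul, mul_comm g]
  · intro l v
    change D l (π _) = π _
    rw [hD, hD0]
  · have h0 : π (ι0 w ^ p - MvPolynomial.C (lam w ^ p)) = 0 := (hker _).2 (Ideal.subset_span ⟨w, rfl⟩)
    rw [map_sub, sub_eq_zero, map_pow, hlam, one_pow, map_one, map_one] at h0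
    exact h0

open Polynomial in
/-- Coefficientwise extension of a linear map to polynomials. -/
def polyMap {A : Type*} [CommRing A] [Algebra K A] (δ : Module.End K A) : Module.End K A[X] where
  toFun r := r.sum fun n c => monomial n (δ c)
  map_add' r s := by
    refine Polynomial.sum_add_index r s _ (by simp) (by simp)
  map_smul' c r := by
    rw [Polynomial.sum_smul_index' _ _ _ (by simp), RingHom.id_apply]
    simp only [Polynomial.sum, map_smul, Finset.smul_sum, Polynomial.smul_monomial]

open Polynomial in
lemma polyMap_coeff {A : Type*} [CommRing A] [Algebra K A] (δ : Module.End K A) (r : A[X]) (n : ℕ) :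
    (polyMap δ r).coeff n = δ (r.coeff n) := by
  change (r.sum fun n c => monomial n (δ c)).coeff n = _
  rw [Polynomial.sum, finsetSum_coeff]
  simp only [coeff_monomial, Finset.sum_ite_eq']
  split_ifs with h
  · rfl
  · rw [notMem_support_iff.mp h, map_zero]

open Polynomial in
lemma polyMap_mul {A : Type*} [CommRing A] [Algebra K A] {δ : Module.End K A}
    (h : ∀ f g, δ (f * g) = f * δ g + δ f * g) (r s : A[X]) :
    polyMap δ (r * s) = r * polyMap δ s + polyMap δ r * s := by
  ext n
  simp only [polyMap_coeff, coeff_mul, coeff_add, map_sum, h, sum_add_distrib]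

open Polynomial in
lemma polyMap_XC {A : Type*} [CommRing A] [Algebra K A] (δ : Module.End K A) (c : A) :
    polyMap δ (X * C c) = X * C (δ c) := by
  ext n
  rw [polyMap_coeff]
  cases n with
  | zero => simp
  | succ n =>
    simp only [coeff_X_mul, coeff_C]
    split_ifs <;> simp

open Polynomial in
/-- The twisted action on polynomials. -/
def twist {L : Type*} [LieRing L] [LieAlgebra K L] {A : Type*} [CommRing A] [Algebra K A]
    (D : L →ₗ[K] Module.End K A) (h : A) : L →ₗ[K] Module.End K A[X] where
  toFun l := polyMap (D l) + LinearMap.mulLeft K (X * C (D l h))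
  map_add' l n := by
    apply LinearMap.ext; intro r
    have h1 : polyMap (D l + D n) r = polyMap (D l) r + polyMap (D n) r := by
      ext k; simp [polyMap_coeff]
    simp only [map_add, LinearMap.add_apply, LinearMap.mulLeft_apply, h1]
    ring
  map_smul' c n := by
    apply LinearMap.ext; intro r
    have h1 : polyMap (c • D n) r = c • polyMap (D n) r := by
      ext k; simp [polyMap_coeff]
    simp only [map_smul, LinearMap.smul_apply, LinearMap.add_apply, LinearMap.mulLeft_apply, h1,
      RingHom.id_apply, smul_add, ← Polynomial.smul_C, mul_smul_comm, smul_mul_assoc]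

open Polynomial in
lemma twist_apply {L : Type*} [LieRing L] [LieAlgebra K L] {A : Type*} [CommRing A] [Algebra K A]
    (D : L →ₗ[K] Module.End K A) (h : A) (l : L) (r : A[X]) :
    twist D h l r = polyMap (D l) r + X * C (D l h) * r := rfl

open Polynomial in
lemma twist_isRep {L : Type*} [LieRing L] [LieAlgebra K L] {A : Type*} [CommRing A] [Algebra K A]
    {D : L →ₗ[K] Module.End K A} (h : A) (hD : IsRep D)
    (hder : ∀ l f g, D l (f * g) = f * D l g + D l f * g) : IsRep (twist D h) := by
  intro l n
  apply LinearMap.ext; intro r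
  have h1 : polyMap (D ⁅l, n⁆) r = polyMap (D l) (polyMap (D n) r) - polyMap (D n) (polyMap (D l) r) := by
    ext k; simp [polyMap_coeff, hD l n]
  have h2 : ∀ l (c : A) (r : A[X]), polyMap (D l) (X * C c * r) = X * C c * polyMap (D l) r + X * C (D l c) * r := by
    intro l c r
    rw [polyMap_mul (hder _), polyMap_XC]
  simp only [LinearMap.sub_apply, Module.End.mul_apply, twist_apply, map_add, h1, h2]
  rw [hD l n]
  simp only [LinearMap.sub_apply, Module.End.mul_apply, map_sub]
  ring

open Polynomial in
lemma pp_twist [hp : Fact p.Prime] [CharP K p] {L : Type*} [LieRing L] [LieAlgebra K L]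
    {A : Type*} [CommRing A] [Algebra K A]
    {D : L →ₗ[K] Module.End K A} (h : A)
    (hder : ∀ l f g, D l (f * g) = f * D l g + D l f * g) (z : L) (hz : pp p m a (D z) = 0) (r : A[X]) :
    pp p m a (twist D h z) r = r * pp p m a (twist D h z) 1 := by
  have h0 : pp p m a (polyMap (D z)) = 0 := by
    apply LinearMap.ext; intro r
    ext n
    have := pp_intertwine (p := p) (m := m) (a := a) ((Polynomial.lcoeff A n).restrictScalars K) (polyMap (D z)) (D z)
      (fun v => (polyMap_coeff _ _ _).symm) r
    rw [hz] at this
    simpa using this.symm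
  have h1 := pp_intertwine (p := p) (m := m) (a := a) (LinearMap.mul' K A[X])
    (LinearMap.rTensor A[X] (polyMap (D z)) + LinearMap.lTensor A[X] (twist D h z)) (twist D h z)
    (fun v => by
      induction v using TensorProduct.induction_on with
      | zero => simp
      | add v w hv hw => rw [map_add, map_add, hv, hw, map_add, map_add]
      | tmul v w =>
        simp only [LinearMap.mul'_apply, twist_apply, polyMap_mul (hder _), LinearMap.add_apply,
          LinearMap.rTensor_tmul, LinearMap.lTensor_tmul, map_add]
        ring) (r ⊗ₜ 1)
  rw [pp_tensor, h0] at h1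
  simpa using h1

open Polynomial in
lemma twist_monic [hp : Fact p.Prime] {L : Type*} [LieRing L] [LieAlgebra K L]
    {A : Type*} [CommRing A] [Algebra K A]
    (D : L →ₗ[K] Module.End K A) (h : A) (x : L) (hh : (D x h) ^ p = 1) (hm : 1 ≤ m) (ham : a m = 1) :
    (∀ n, p ^ m < n → (pp p m a (twist D h x) 1).coeff n = 0) ∧
      (pp p m a (twist D h x) 1).coeff (p ^ m) = 1 := by
  have hco : ∀ (s : A[X]) j, (twist D h x s).coeff (j+1) = D x (s.coeff (j+1)) + D x h * s.coeff j := by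
    intro s j
    rw [twist_apply, coeff_add, polyMap_coeff, mul_assoc, coeff_X_mul, coeff_C_mul]
  have hk : ∀ k, (∀ n, k < n → (((twist D h x) ^ k) 1).coeff n = 0) ∧
      (((twist D h x) ^ k) 1).coeff k = (D x h) ^ k := by
    intro k
    induction k with
    | zero => exact ⟨fun n hn => by simp [coeff_one, hn.ne'], by simp⟩
    | succ k ih =>
      rw [pow_succ', Module.End.mul_apply]
      constructor
      · intro n hn
        obtain ⟨j, rfl⟩ : ∃ j, n = j+1 := ⟨n-1, by omega⟩
        rw [hco, ih.1 _ (by omega), ih.1 _ (by omega)]; simp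
      · rw [hco, ih.1 _ (by omega), ih.2, map_zero, zero_add, pow_succ']
  have hpp : ∀ n, (pp p m a (twist D h x) 1).coeff n =
      ∑ i ∈ range (m+1), a i • (((twist D h x) ^ (p ^ i)) 1).coeff n := by
    intro n
    simp [pp, LinearMap.sum_apply, finsetSum_coeff]
  constructor
  · intro n hn
    rw [hpp]
    refine sum_eq_zero fun i hi => ?_
    rw [(hk _).1, smul_zero]
    exact lt_of_le_of_lt (Nat.pow_le_pow_right hp.out.pos (by simpa [Nat.lt_succ_iff] using hi)) hn
  · rw [hpp, sum_range_succ, sum_eq_zero, zero_add, ham, one_smul, (hk _).2]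
    · obtain ⟨k, rfl⟩ : ∃ k, m = k+1 := ⟨m-1, by omega⟩
      rw [pow_succ', pow_mul, hh, one_pow]
    · intro i hi
      rw [(hk _).1, smul_zero]
      exact Nat.pow_lt_pow_right hp.out.one_lt (by simpa using hi)

/-- Quotient representation. -/
def quotRep {L : Type*} [LieRing L] [LieAlgebra K L] {V : Type*} [AddCommGroup V] [Module K V]
    (T : L →ₗ[K] Module.End K V) (J : Submodule K V) (hJ : ∀ l, J ≤ J.comap (T l)) :
    L →ₗ[K] Module.End K (V ⧸ J) where
  toFun := fun l => J.mapQ J (T l) (hJ l)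
  map_add' := fun l n => by
    apply LinearMap.ext; intro w; obtain ⟨w, rfl⟩ := J.mkQ_surjective w; simp
  map_smul' := fun c n => by
    apply LinearMap.ext; intro w; obtain ⟨w, rfl⟩ := J.mkQ_surjective w; simp

open Polynomial in
lemma exists_W [hp : Fact p.Prime] [CharP K p] {L : Type*} [LieRing L] [LieAlgebra K L]
    {A : Type u} [CommRing A] [Algebra K A] [FiniteDimensional K A] [Nontrivial A]
    {D : L →ₗ[K] Module.End K A} (h : A) (hD : IsRep D)
    (hder : ∀ l f g, D l (f * g) = f * D l g + D l f * g) (x y : L)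
    (hyh : D y h = 0) (hh : (D x h) ^ p = 1) (hDx : pp p m a (D x) = 0) (hDy : pp p m a (D y) = 0)
    (hx : pp p m a (LieAlgebra.ad K L x) = 0) (hm : 1 ≤ m) (ham : a m = 1) :
    ∃ (W : Type u) (_ : AddCommGroup W) (_ : Module K W) (_ : FiniteDimensional K W)
      (ρ : L →ₗ[K] Module.End K W), IsRep ρ ∧ pp p m a (ρ y) = 0 ∧
      LinearMap.ker (pp p m a (ρ x)) ≤ LinearMap.range (pp p m a (ρ x)) ∧
      LinearMap.range (pp p m a (ρ x)) ≠ ⊤ := by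
  have hrep := twist_isRep h hD hder
  have hg := pp_twist (p := p) (m := m) (a := a) h hder x hDx
  obtain ⟨hg1, hg2⟩ := twist_monic (p := p) (m := m) (a := a) D h x hh hm ham
  have hgc := fun l r => LinearMap.congr_fun (pp_central hrep x hx l) r
  simp only [Module.End.mul_apply] at hgc
  have hTy : pp p m a (twist D h y) = 0 := by
    apply LinearMap.ext; intro r
    rw [pp_twist h hder y hDy]
    have h1 : (twist D h y) 1 = 0 := by
      rw [twist_apply, hyh]
      ext n
      have h01 : D y 1 = 0 := by simpa using hder y 1 1
      simp only [coeff_add, polyMap_coeff, coeff_one]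
      split_ifs <;> simp [h01]
    have : pp p m a (twist D h y) 1 = 0 := by
      rw [pp, LinearMap.sum_apply]
      refine sum_eq_zero fun i _ => ?_
      obtain ⟨k, hk⟩ : ∃ k, p ^ i = k + 1 := ⟨p^i - 1, by have := Nat.pow_pos (n := i) hp.out.pos; omega⟩
      rw [LinearMap.smul_apply, hk, pow_succ, Module.End.mul_apply, h1, map_zero, smul_zero]
    rw [this]; simp
  set g := pp p m a (twist D h x) 1 with hgdef
  have hmon : g.Monic := monic_of_natDegree_le_of_coeff_eq_one (p ^ m)
    (natDegree_le_iff_coeff_eq_zero.mpr hg1) hg2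
  let J : Submodule K A[X] := (Ideal.span {g ^ 2}).restrictScalars K
  have hJm : ∀ r, r ∈ J ↔ ∃ s, r = s * g ^ 2 := by
    intro r
    rw [Submodule.restrictScalars_mem, Ideal.mem_span_singleton']
    exact ⟨fun ⟨s, hs⟩ => ⟨s, hs.symm⟩, fun ⟨s, hs⟩ => ⟨s, hs.symm⟩⟩
  have hJ : ∀ l, J ≤ J.comap (twist D h l) := by
    intro l r hr
    obtain ⟨s, rfl⟩ := (hJm r).1 hr
    refine (hJm _).2 ⟨twist D h l s, ?_⟩
    rw [sq, ← mul_assoc, ← mul_assoc, ← hg, ← hg, ← hgc, ← hgc, hg, hg]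
  have hfin : Module.Finite K (A[X] ⧸ J) := by
    have h1 : Module.Finite A (A[X] ⧸ Ideal.span {g ^ 2}) := (hmon.pow 2).finite_quotient
    have h2 : Module.Finite K (A[X] ⧸ Ideal.span {g ^ 2}) := Module.Finite.trans A _
    exact Module.Finite.equiv (Submodule.Quotient.restrictScalarsEquiv K (Ideal.span {g ^ 2})).symm
  have hpp : ∀ z r, pp p m a (quotRep (twist D h) J hJ z) (J.mkQ r) = J.mkQ (pp p m a (twist D h z) r) :=
    fun z r => pp_intertwine J.mkQ _ _ (fun _ => rfl) r
  refine ⟨A[X] ⧸ J, inferInstance, inferInstance, hfin, quotRep (twist D h) J hJ, ?_, ?_, ?_, ?_⟩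
  · intro l n
    apply LinearMap.ext; intro w; obtain ⟨w, rfl⟩ := J.mkQ_surjective w
    change J.mkQ _ = J.mkQ _ - J.mkQ _
    rw [← map_sub, hrep l n]; rfl
  · apply LinearMap.ext; intro w; obtain ⟨w, rfl⟩ := J.mkQ_surjective w
    rw [hpp, hTy]; simp
  · intro w hw
    obtain ⟨r, rfl⟩ := J.mkQ_surjective w
    rw [LinearMap.mem_ker, hpp, hg, Submodule.mkQ_apply, Submodule.Quotient.mk_eq_zero, hJm] at hw
    obtain ⟨s, hs⟩ := hw
    refine ⟨J.mkQ s, ?_⟩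
    rw [hpp, hg]
    congr 1
    apply hmon.isRegular.right
    change s * g * g = r * g
    rw [hs]; ring
  · intro htop
    have h1 : J.mkQ 1 ∈ LinearMap.range (pp p m a (quotRep (twist D h) J hJ x)) := htop ▸ Submodule.mem_top
    obtain ⟨w, hw⟩ := h1
    obtain ⟨r, rfl⟩ := J.mkQ_surjective w
    rw [hpp, hg, ← sub_eq_zero, ← map_sub, Submodule.mkQ_apply, Submodule.Quotient.mk_eq_zero, hJm] at hw
    obtain ⟨s, hs⟩ := hw
    have hu : IsUnit g := IsUnit.of_mul_eq_one (r - s * g) (by linear_combination hs)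
    rw [hmon.eq_one_of_isUnit hu, coeff_one, if_neg (pow_pos hp.out.pos m).ne'] at hg2
    exact zero_ne_one hg2

/-- Nontrivial second cohomology of a representation. -/
def HasH2 {L : Type*} [LieRing L] [LieAlgebra K L] {M : Type*} [AddCommGroup M] [Module K M]
    (ρ : L →ₗ[K] Module.End K M) : Prop :=
  ∃ f : L →ₗ[K] L →ₗ[K] M, (∀ x, f x x = 0) ∧
    (∀ x y z, ρ x (f y z) - ρ y (f x z) + ρ z (f x y) - f ⁅x, y⁆ z + f ⁅x, z⁆ y - f ⁅y, z⁆ x = 0) ∧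
    ¬ ∃ g : L →ₗ[K] M, ∀ x y, f x y = ρ x (g y) - ρ y (g x) - g ⁅x, y⁆

/-- Extension of a representation by a cocycle. -/
def extRep {L : Type*} [LieRing L] [LieAlgebra K L] {Y : Type*} [AddCommGroup Y] [Module K Y]
    (ρ : L →ₗ[K] Module.End K Y) (φ : L →ₗ[K] Y) : L →ₗ[K] Module.End K (Y × K) where
  toFun l := LinearMap.inl K Y K ∘ₗ (ρ l ∘ₗ LinearMap.fst K Y K + (LinearMap.snd K Y K).smulRight (φ l))
  map_add' l n := by
    apply LinearMap.ext; rintro ⟨v, c⟩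
    simp; abel
  map_smul' c l := by
    apply LinearMap.ext; rintro ⟨v, d⟩
    simp [smul_comm d c]

lemma extRep_apply {L : Type*} [LieRing L] [LieAlgebra K L] {Y : Type*} [AddCommGroup Y] [Module K Y]
    (ρ : L →ₗ[K] Module.End K Y) (φ : L →ₗ[K] Y) (l : L) (v : Y) (c : K) :
    extRep ρ φ l (v, c) = (ρ l v + c • φ l, 0) := rfl

lemma extRep_isRep {L : Type*} [LieRing L] [LieAlgebra K L] {Y : Type*} [AddCommGroup Y] [Module K Y]
    {ρ : L →ₗ[K] Module.End K Y} (hρ : IsRep ρ) {φ : L →ₗ[K] Y}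
    (hφ : ∀ l n, φ ⁅l, n⁆ = ρ l (φ n) - ρ n (φ l)) : IsRep (extRep ρ φ) := by
  intro l n
  apply LinearMap.ext; rintro ⟨v, c⟩
  simp only [LinearMap.sub_apply, Module.End.mul_apply, extRep_apply, hρ l n, hφ, map_add, map_smul,
    zero_smul, add_zero, Prod.mk_sub_mk, smul_sub, sub_self]
  congr 1
  abel

/-- The value of a cocycle on the central element. -/
def zval {L : Type*} [LieRing L] [LieAlgebra K L] {Y : Type*} [AddCommGroup Y] [Module K Y]
    (p m : ℕ) (a : ℕ → K) (ρ : L →ₗ[K] Module.End K Y) (φ : L →ₗ[K] Y) (x : L) : Y :=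
  ∑ i ∈ range (m+1), a i • ((ρ x) ^ (p ^ i - 1)) (φ x)

lemma pp_ext_inl {L : Type*} [LieRing L] [LieAlgebra K L] {Y : Type*} [AddCommGroup Y] [Module K Y]
    (ρ : L →ₗ[K] Module.End K Y) (φ : L →ₗ[K] Y) (x : L) (v : Y) :
    pp p m a (extRep ρ φ x) (v, 0) = (pp p m a (ρ x) v, 0) :=
  pp_intertwine (LinearMap.inl K Y K) (ρ x) (extRep ρ φ x) (fun v => by simp [extRep_apply]) v

lemma pp_ext_one [hp : Fact p.Prime] {L : Type*} [LieRing L] [LieAlgebra K L] {Y : Type*} [AddCommGroup Y] [Module K Y]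
    (ρ : L →ₗ[K] Module.End K Y) (φ : L →ₗ[K] Y) (x : L) :
    pp p m a (extRep ρ φ x) (0, 1) = (zval p m a ρ φ x, 0) := by
  change _ = LinearMap.inl K Y K (zval p m a ρ φ x)
  rw [zval, map_sum, pp, LinearMap.sum_apply]
  refine sum_congr rfl fun i _ => ?_
  obtain ⟨k, hk⟩ : ∃ k, p ^ i = k + 1 := ⟨p^i - 1, by have := Nat.pow_pos (n := i) hp.out.pos; omega⟩
  rw [LinearMap.smul_apply, hk, pow_succ, Module.End.mul_apply, Nat.add_sub_cancel, map_smul]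
  congr 1
  rw [← pow_intertwine (LinearMap.inl K Y K) (ρ x) (extRep ρ φ x) (fun v => by simp [extRep_apply])]
  simp [extRep_apply]

lemma zval_comm [hp : Fact p.Prime] [CharP K p] {L : Type*} [LieRing L] [LieAlgebra K L] {Y : Type*} [AddCommGroup Y] [Module K Y]
    {ρ : L →ₗ[K] Module.End K Y} (hρ : IsRep ρ) {φ : L →ₗ[K] Y}
    (hφ : ∀ l n, φ ⁅l, n⁆ = ρ l (φ n) - ρ n (φ l)) (x y : L)
    (hx : pp p m a (LieAlgebra.ad K L x) = 0) :
    pp p m a (ρ y) (zval p m a ρ φ x) = pp p m a (ρ x) (zval p m a ρ φ y) := by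
  have hc : Commute (pp p m a (extRep ρ φ x)) (pp p m a (extRep ρ φ y)) := by
    have h := pp_central (extRep_isRep hρ hφ) x hx y
    nth_rw 2 [pp]
    exact Commute.sum_right _ _ _ fun i _ => (h.pow_right _).smul_right _
  have h := LinearMap.congr_fun hc (0, 1)
  rw [Module.End.mul_apply, Module.End.mul_apply, pp_ext_one, pp_ext_one, pp_ext_inl, pp_ext_inl] at h
  exact (congrArg Prod.fst h).symm

lemma no_lift [hp : Fact p.Prime] [CharP K p] {L : Type*} [LieRing L] [LieAlgebra K L] {Y : Type*} [AddCommGroup Y] [Module K Y]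
    {ρ : L →ₗ[K] Module.End K Y} (hρ : IsRep ρ) (x y : L)
    (hx : pp p m a (LieAlgebra.ad K L x) = 0) (hy : pp p m a (LieAlgebra.ad K L y) = 0)
    (H1 : ∀ b c, pp p m a (ρ y) b = pp p m a (ρ x) c → ∃ d e, b = pp p m a (ρ x) d + pp p m a (ρ y) e)
    (H2 : ∀ b c, pp p m a (ρ x) b = pp p m a (ρ y) c → ∃ d e, b = pp p m a (ρ x) d + pp p m a (ρ y) e)
    (y0 : Y) (hy0 : ¬ ∃ d e, y0 = pp p m a (ρ x) d + pp p m a (ρ y) e)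
    (φ1 φ2 : L →ₗ[K] Y) (hφ1 : ∀ l n, φ1 ⁅l, n⁆ = ρ l (φ1 n) - ρ n (φ1 l))
    (hl : ∀ l, pp p m a (ρ x) (φ1 l) + pp p m a (ρ y) (φ2 l) = ρ l y0) : False := by
  obtain ⟨d, e, hde⟩ := H1 _ _ (zval_comm hρ hφ1 x y hx)
  have h1 := pp_central hρ x hx x
  have h2 := pp_central hρ y hy x
  have key : pp p m a (ρ x) y0 = pp p m a (ρ x) (zval p m a ρ φ1 x) + pp p m a (ρ y) (zval p m a ρ φ2 x) := by
    rw [zval, zval, map_sum, map_sum, ← sum_add_distrib]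
    conv_lhs => rw [pp, LinearMap.sum_apply]
    refine sum_congr rfl fun i _ => ?_
    obtain ⟨k, hk⟩ : ∃ k, p ^ i = k + 1 := ⟨p^i - 1, by have := Nat.pow_pos (n := i) hp.out.pos; omega⟩
    rw [LinearMap.smul_apply, hk, pow_succ, Module.End.mul_apply, Nat.add_sub_cancel, map_smul, map_smul,
      ← smul_add, ← hl, map_add]
    congr 2
    · exact (LinearMap.congr_fun (h1.pow_right k) (φ1 x)).symm
    · exact (LinearMap.congr_fun (h2.pow_right k) (φ2 x)).symm
  obtain ⟨d', e', hde'⟩ := H2 (y0 - zval p m a ρ φ1 x) (zval p m a ρ φ2 x) (by rw [map_sub, key]; abel)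
  refine hy0 ⟨d + d', e + e', ?_⟩
  rw [map_add, map_add, ← sub_add_cancel y0 (zval p m a ρ φ1 x), hde', hde]
  abel

/-- Restricted representation. -/
def resRep {L : Type*} [LieRing L] [LieAlgebra K L] {V : Type*} [AddCommGroup V] [Module K V]
    (T : L →ₗ[K] Module.End K V) (J : Submodule K V) (hJ : ∀ l, ∀ v ∈ J, T l v ∈ J) :
    L →ₗ[K] Module.End K J where
  toFun := fun l => (T l).restrict (hJ l)
  map_add' := fun l n => by
    apply LinearMap.ext; intro w; apply Subtype.ext; simp
  map_smul' := fun c n => by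
    apply LinearMap.ext; intro w; apply Subtype.ext; simp

lemma resRep_coe {L : Type*} [LieRing L] [LieAlgebra K L] {V : Type*} [AddCommGroup V] [Module K V]
    (T : L →ₗ[K] Module.End K V) (J : Submodule K V) (hJ : ∀ l, ∀ v ∈ J, T l v ∈ J) (l : L) (v : J) :
    (resRep T J hJ l v : V) = T l v := rfl

lemma hasH2_of_no_lift {L : Type*} [LieRing L] [LieAlgebra K L] {N P : Type*} [AddCommGroup N] [Module K N]
    [AddCommGroup P] [Module K P] {ρN : L →ₗ[K] Module.End K N} (hN : IsRep ρN)
    {ρP : L →ₗ[K] Module.End K P} (hP : IsRep ρP) (S : N →ₗ[K] P) (hS : ∀ l v, S (ρN l v) = ρP l (S v))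
    (y0 : P) (hy0 : ∀ l, ∃ v, S v = ρP l y0)
    (hno : ∀ φ : L →ₗ[K] N, (∀ l n, φ ⁅l, n⁆ = ρN l (φ n) - ρN n (φ l)) → (∀ l, S (φ l) = ρP l y0) → False) :
    ∃ hJ : ∀ l, ∀ v ∈ LinearMap.ker S, ρN l v ∈ LinearMap.ker S,
      IsRep (resRep ρN (LinearMap.ker S) hJ) ∧ HasH2 (resRep ρN (LinearMap.ker S) hJ) := by
  have hJ : ∀ l, ∀ v ∈ LinearMap.ker S, ρN l v ∈ LinearMap.ker S := by
    intro l v hv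
    rw [LinearMap.mem_ker] at hv ⊢
    rw [hS, hv, map_zero]
  refine ⟨hJ, ?_, ?_⟩
  · intro l n
    apply LinearMap.ext; intro v; apply Subtype.ext
    simp [resRep_coe, hN l n]
  obtain ⟨φ, hφ0⟩ := Module.projective_lifting_property S.rangeRestrict
    (((LinearMap.applyₗ y0) ∘ₗ ρP).codRestrict (LinearMap.range S) (fun l => hy0 l))
    (LinearMap.surjective_rangeRestrict S)
  have hφ : ∀ l, S (φ l) = ρP l y0 := fun l => congrArg Subtype.val (LinearMap.congr_fun hφ0 l)
  have hmem : ∀ l n, ρN l (φ n) - ρN n (φ l) - φ ⁅l, n⁆ ∈ LinearMap.ker S := by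
    intro l n
    rw [LinearMap.mem_ker, map_sub, map_sub, hS, hS, hφ, hφ, hφ, hP l n]
    simp
  let f : L →ₗ[K] L →ₗ[K] LinearMap.ker S := LinearMap.mk₂ K
    (fun l n => ⟨ρN l (φ n) - ρN n (φ l) - φ ⁅l, n⁆, hmem l n⟩)
    (fun l l' n => by apply Subtype.ext; simp; abel)
    (fun c l n => by apply Subtype.ext; simp [smul_sub])
    (fun l n n' => by apply Subtype.ext; simp; abel)
    (fun c l n => by apply Subtype.ext; simp [smul_sub])
  have hf : ∀ l n, (f l n : N) = ρN l (φ n) - ρN n (φ l) - φ ⁅l, n⁆ := fun l n => rfl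
  refine ⟨f, fun x => ?_, fun x y z => ?_, ?_⟩
  · apply Subtype.ext; rw [hf]; simp
  · apply Subtype.ext
    have jac : φ ⁅⁅x, y⁆, z⁆ - φ ⁅⁅x, z⁆, y⁆ + φ ⁅⁅y, z⁆, x⁆ = 0 := by
      rw [← map_sub, ← map_add, lie_lie x y z, ← lie_skew y ⁅x, z⁆, ← lie_skew x ⁅y, z⁆]
      rw [← map_zero φ]; congr 1; abel
    simp only [Submodule.coe_add, Submodule.coe_sub, resRep_coe, hf, map_sub, hN x y, hN x z, hN y z,
      LinearMap.sub_apply, Module.End.mul_apply, Submodule.coe_zero]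
    rw [← jac]
    abel
  · rintro ⟨g, hg⟩
    refine hno (φ - (LinearMap.ker S).subtype ∘ₗ g) (fun l n => ?_) (fun l => ?_)
    · have := congrArg Subtype.val (hg l n)
      rw [hf] at this
      simp only [Submodule.coe_sub, resRep_coe] at this
      simp only [LinearMap.sub_apply, LinearMap.comp_apply, Submodule.subtype_apply, map_sub]
      rw [← sub_eq_zero] at this ⊢
      rw [← neg_eq_zero, ← this]
      abel
    · have := (g l).2
      rw [LinearMap.mem_ker] at this
      simp [hφ, this]

/-- Product representation. -/
def prodRep {L : Type*} [LieRing L] [LieAlgebra K L] {Y : Type*} [AddCommGroup Y] [Module K Y]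
    (ρ : L →ₗ[K] Module.End K Y) : L →ₗ[K] Module.End K (Y × Y) where
  toFun l := (ρ l).prodMap (ρ l)
  map_add' l n := by apply LinearMap.ext; rintro ⟨v, w⟩; simp
  map_smul' c l := by apply LinearMap.ext; rintro ⟨v, w⟩; simp

lemma prodRep_apply {L : Type*} [LieRing L] [LieAlgebra K L] {Y : Type*} [AddCommGroup Y] [Module K Y]
    (ρ : L →ₗ[K] Module.End K Y) (l : L) (v : Y × Y) : prodRep ρ l v = (ρ l v.1, ρ l v.2) := rfl

lemma koszul [hp : Fact p.Prime] [CharP K p] {L : Type*} [LieRing L] [LieAlgebra K L] {Y : Type u} [AddCommGroup Y] [Module K Y]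
    [FiniteDimensional K Y]
    {ρ : L →ₗ[K] Module.End K Y} (hρ : IsRep ρ) (x y : L)
    (hx : pp p m a (LieAlgebra.ad K L x) = 0) (hy : pp p m a (LieAlgebra.ad K L y) = 0)
    (H1 : ∀ b c, pp p m a (ρ y) b = pp p m a (ρ x) c → ∃ d e, b = pp p m a (ρ x) d + pp p m a (ρ y) e)
    (H2 : ∀ b c, pp p m a (ρ x) b = pp p m a (ρ y) c → ∃ d e, b = pp p m a (ρ x) d + pp p m a (ρ y) e)
    (y0 : Y) (hy0 : ¬ ∃ d e, y0 = pp p m a (ρ x) d + pp p m a (ρ y) e)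
    (hin : ∀ l, ∃ d e, ρ l y0 = pp p m a (ρ x) d + pp p m a (ρ y) e) :
    ∃ (M : Type u) (_ : AddCommGroup M) (_ : Module K M) (_ : FiniteDimensional K M)
      (ρ : L →ₗ[K] Module.End K M), IsRep ρ ∧ HasH2 ρ := by
  have hN : IsRep (prodRep ρ) := by
    intro l n
    apply LinearMap.ext; intro v
    simp [prodRep_apply, hρ l n]
  obtain ⟨hJ, h1, h2⟩ := hasH2_of_no_lift hN hρ (LinearMap.coprod (pp p m a (ρ x)) (pp p m a (ρ y)))
    (fun l v => by
      have e1 := LinearMap.congr_fun (pp_central hρ x hx l) v.1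
      have e2 := LinearMap.congr_fun (pp_central hρ y hy l) v.2
      simp only [Module.End.mul_apply] at e1 e2
      simp [prodRep_apply, e1, e2]) y0
    (fun l => by
      obtain ⟨d, e, h⟩ := hin l
      exact ⟨(d, e), by simp [h]⟩)
    (fun φ hφ hl => no_lift hρ x y hx hy H1 H2 y0 hy0 (LinearMap.fst K Y Y ∘ₗ φ) (LinearMap.snd K Y Y ∘ₗ φ)
      (fun l n => by simp [hφ l n, prodRep_apply]) (fun l => by simpa using hl l))
  exact ⟨_, inferInstance, inferInstance, inferInstance, _, h1, h2⟩

open TensorProduct in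
/-- Tensor product representation. -/
def tenRep {L : Type*} [LieRing L] [LieAlgebra K L] {V W : Type*} [AddCommGroup V] [Module K V]
    [AddCommGroup W] [Module K W] (ρ1 : L →ₗ[K] Module.End K V) (ρ2 : L →ₗ[K] Module.End K W) :
    L →ₗ[K] Module.End K (V ⊗[K] W) where
  toFun l := LinearMap.rTensor W (ρ1 l) + LinearMap.lTensor V (ρ2 l)
  map_add' l n := by simp only [map_add, LinearMap.rTensor_add, LinearMap.lTensor_add]; abel
  map_smul' c n := by
    simp only [map_smul, LinearMap.rTensor_smul, LinearMap.lTensor_smul, smul_add, RingHom.id_apply]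

open TensorProduct in
lemma tenRep_isRep {L : Type*} [LieRing L] [LieAlgebra K L] {V W : Type*} [AddCommGroup V] [Module K V]
    [AddCommGroup W] [Module K W] {ρ1 : L →ₗ[K] Module.End K V} {ρ2 : L →ₗ[K] Module.End K W}
    (h1 : IsRep ρ1) (h2 : IsRep ρ2) : IsRep (tenRep ρ1 ρ2) := by
  intro l n
  apply TensorProduct.ext'
  intro v w
  simp only [tenRep, LinearMap.coe_mk, AddHom.coe_mk, LinearMap.add_apply, LinearMap.rTensor_tmul,
    LinearMap.lTensor_tmul, LinearMap.sub_apply, Module.End.mul_apply, map_add, h1 l n, h2 l n,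
    TensorProduct.sub_tmul, TensorProduct.tmul_sub]
  abel

open TensorProduct in
lemma nonabelian [hp : Fact p.Prime] [CharP K p] {L : Type*} [LieRing L] [LieAlgebra K L]
    [FiniteDimensional K L] (x y : L) (hxy : ⁅x, y⁆ ≠ 0) :
    ∃ (M : Type u) (_ : AddCommGroup M) (_ : Module K M) (_ : FiniteDimensional K M)
      (ρ : L →ₗ[K] Module.End K M), IsRep ρ ∧ HasH2 ρ := by
  obtain ⟨A, _, _, _, _, D, ι, hD, hder, hι, hw⟩ := exists_A (p := p) (K := K) ⁅x, y⁆ hxy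
  obtain ⟨m, a, hm, ham, hq⟩ := exists_pp (K := K) hp.out
    (((D x, D y), (LieAlgebra.ad K L x, LieAlgebra.ad K L y)) :
      (Module.End K A × Module.End K A) × (Module.End K L × Module.End K L))
  have hDx : pp p m a (D x) = 0 := by
    have := pp_map (p := p) (m := m) (a := a) ((AlgHom.fst K _ _).comp (AlgHom.fst K _ _))
      (((D x, D y), (LieAlgebra.ad K L x, LieAlgebra.ad K L y)) :
      (Module.End K A × Module.End K A) × (Module.End K L × Module.End K L))
    rw [hq, map_zero] at this
    exact this
  have hDy : pp p m a (D y) = 0 := by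
    have := pp_map (p := p) (m := m) (a := a) ((AlgHom.snd K _ _).comp (AlgHom.fst K _ _))
      (((D x, D y), (LieAlgebra.ad K L x, LieAlgebra.ad K L y)) :
      (Module.End K A × Module.End K A) × (Module.End K L × Module.End K L))
    rw [hq, map_zero] at this
    exact this
  have hx : pp p m a (LieAlgebra.ad K L x : Module.End K L) = 0 := by
    have := pp_map (p := p) (m := m) (a := a) ((AlgHom.fst K _ _).comp (AlgHom.snd K _ _))
      (((D x, D y), (LieAlgebra.ad K L x, LieAlgebra.ad K L y)) :
      (Module.End K A × Module.End K A) × (Module.End K L × Module.End K L))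
    rw [hq, map_zero] at this
    exact this
  have hy : pp p m a (LieAlgebra.ad K L y : Module.End K L) = 0 := by
    have := pp_map (p := p) (m := m) (a := a) ((AlgHom.snd K _ _).comp (AlgHom.snd K _ _))
      (((D x, D y), (LieAlgebra.ad K L x, LieAlgebra.ad K L y)) :
      (Module.End K A × Module.End K A) × (Module.End K L × Module.End K L))
    rw [hq, map_zero] at this
    exact this
  obtain ⟨W1, _, _, _, τ1, hτ1, hW1y, hW1k, hW1r⟩ := exists_W (p := p) (m := m) (a := a) (ι y) hD hder x y
    (by rw [hι, lie_self, map_zero]) (by rw [hι, hw]) hDx hDy hx hm ham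
  obtain ⟨W2, _, _, _, τ2, hτ2, hW2x, hW2k, hW2r⟩ := exists_W (p := p) (m := m) (a := a) (ι (-x)) hD hder y x
    (by rw [hι, lie_neg, lie_self, neg_zero, map_zero]) (by rw [hι, lie_neg, lie_skew, hw]) hDy hDx hy hm ham
  obtain ⟨Y1, _, _, _, ρ1, hρ1, hρ1y, ⟨u, v, huv⟩, y1, F1, hF1, hF1', hb1⟩ := exists_Y x y hx hτ1 hW1y hW1k hW1r
  obtain ⟨Y2, _, _, _, ρ2, hρ2, hρ2x, ⟨u', v', huv'⟩, y2, F2, hF2, hF2', hb2⟩ := exists_Y y x hy hτ2 hW2x hW2k hW2r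
  have hx' : pp p m a (tenRep ρ1 ρ2 x) = LinearMap.rTensor Y2 (pp p m a (ρ1 x)) := by
    change pp p m a (LinearMap.rTensor Y2 (ρ1 x) + LinearMap.lTensor Y1 (ρ2 x)) = _
    rw [pp_tensor, hρ2x, LinearMap.lTensor_zero, add_zero]
  have hy' : pp p m a (tenRep ρ1 ρ2 y) = LinearMap.lTensor Y1 (pp p m a (ρ2 y)) := by
    change pp p m a (LinearMap.rTensor Y2 (ρ1 y) + LinearMap.lTensor Y1 (ρ2 y)) = _
    rw [pp_tensor, hρ1y, LinearMap.rTensor_zero, zero_add]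
  have hcomm : ∀ (S : Module.End K Y1) (T : Module.End K Y2) (b : Y1 ⊗[K] Y2),
      LinearMap.rTensor Y2 S (LinearMap.lTensor Y1 T b) = LinearMap.lTensor Y1 T (LinearMap.rTensor Y2 S b) := by
    intro S T b
    rw [← LinearMap.comp_apply, ← LinearMap.comp_apply, LinearMap.rTensor_comp_lTensor,
      LinearMap.lTensor_comp_rTensor]
  refine koszul (tenRep_isRep hρ1 hρ2) x y hx hy ?_ ?_ (y1 ⊗ₜ y2) ?_ ?_
  · intro b c hbc
    rw [hx', hy'] at hbc ⊢
    refine ⟨LinearMap.lTensor Y1 v' c, LinearMap.lTensor Y1 u' b, ?_⟩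
    rw [hcomm, ← hbc, ← LinearMap.comp_apply, ← LinearMap.comp_apply, ← LinearMap.lTensor_comp,
      ← LinearMap.lTensor_comp, ← LinearMap.add_apply, ← LinearMap.lTensor_add, add_comm]
    change b = LinearMap.lTensor Y1 (pp p m a (ρ2 y) * u' + v' * pp p m a (ρ2 y)) b
    rw [huv']; simp [Module.End.one_eq_id]
  · intro b c hbc
    rw [hx', hy'] at hbc ⊢
    refine ⟨LinearMap.rTensor Y2 u b, LinearMap.rTensor Y2 v c, ?_⟩
    rw [← hcomm, ← hbc, ← LinearMap.comp_apply, ← LinearMap.comp_apply, ← LinearMap.rTensor_comp,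
      ← LinearMap.rTensor_comp, ← LinearMap.add_apply, ← LinearMap.rTensor_add]
    change b = LinearMap.rTensor Y2 (pp p m a (ρ1 x) * u + v * pp p m a (ρ1 x)) b
    rw [huv]; simp [Module.End.one_eq_id]
  · rintro ⟨d, e, hde⟩
    rw [hx', hy'] at hde
    have h1 : ∀ d, TensorProduct.map F1 F2 (LinearMap.rTensor Y2 (pp p m a (ρ1 x)) d) = 0 := by
      intro d
      induction d using TensorProduct.induction_on with
      | zero => simp
      | add _ _ h1 h2 => rw [map_add, map_add, h1, h2, add_zero]
      | tmul v w => simp [hF1]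
    have h2 : ∀ d, TensorProduct.map F1 F2 (LinearMap.lTensor Y1 (pp p m a (ρ2 y)) d) = 0 := by
      intro d
      induction d using TensorProduct.induction_on with
      | zero => simp
      | add _ _ h1 h2 => rw [map_add, map_add, h1, h2, add_zero]
      | tmul v w => simp [hF2]
    have h3 := congrArg (fun b => LinearMap.mul' K K (TensorProduct.map F1 F2 b)) hde
    simp only [map_add, h1, h2, TensorProduct.map_tmul, LinearMap.mul'_apply, map_zero, add_zero] at h3
    exact mul_ne_zero hF1' hF2' h3
  · intro l
    obtain ⟨b1, hb1⟩ := hb1 l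
    obtain ⟨b2, hb2⟩ := hb2 l
    refine ⟨b1 ⊗ₜ y2, y1 ⊗ₜ b2, ?_⟩
    rw [hx', hy', LinearMap.rTensor_tmul, LinearMap.lTensor_tmul, ← hb1, ← hb2]
    rfl

lemma abelian {L : Type*} [LieRing L] [LieAlgebra K L] [FiniteDimensional K L]
    (hL : 2 ≤ Module.finrank K L) (hab : ∀ x y : L, ⁅x, y⁆ = 0) :
    HasH2 (0 : L →ₗ[K] Module.End K K) := by
  let b := Module.finBasis K L
  let i : Fin (Module.finrank K L) := ⟨0, by omega⟩
  let j : Fin (Module.finrank K L) := ⟨1, by omega⟩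
  have hij : i ≠ j := by simp [i, j]
  let f : L →ₗ[K] L →ₗ[K] K := LinearMap.mk₂ K
    (fun l n => b.coord i l * b.coord j n - b.coord j l * b.coord i n)
    (fun l l' n => by simp only [map_add]; ring)
    (fun c l n => by simp only [map_smul, smul_eq_mul]; ring)
    (fun l n n' => by simp only [map_add]; ring)
    (fun c l n => by simp only [map_smul, smul_eq_mul]; ring)
  have hf : ∀ l n, f l n = b.coord i l * b.coord j n - b.coord j l * b.coord i n := fun _ _ => rfl
  refine ⟨f, fun x => by rw [hf]; ring, fun x y z => by simp [hab], ?_⟩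
  rintro ⟨g, hg⟩
  have := hg (b i) (b j)
  rw [hf] at this
  simp [hab, hij, hij.symm, Finsupp.single_apply] at this

end

end
end DZ



theorem exists_module_with_nontrivial_H2 (K : Type*) [Field K]
    (p : ℕ) (hp : 0 < p) [CharP K p]
    (L : Type) [LieRing L] [LieAlgebra K L] [FiniteDimensional K L]
    (hL : 2 ≤ Module.finrank K L) :
    ∃ (M : Type) (_ : AddCommGroup M) (_ : Module K M) (_ : LieRingModule L M)
      (_ : LieModule K L M), FiniteDimensional K M ∧
      ∃ f : L →ₗ[K] L →ₗ[K] M,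
        (∀ x : L, f x x = 0) ∧
        (∀ x y z : L,
          ⁅x, f y z⁆ - ⁅y, f x z⁆ + ⁅z, f x y⁆
            - f ⁅x, y⁆ z + f ⁅x, z⁆ y - f ⁅y, z⁆ x = 0) ∧
        ¬ ∃ g : L →ₗ[K] M, ∀ x y : L, f x y = ⁅x, g y⁆ - ⁅y, g x⁆ - g ⁅x, y⁆ := by
  have hpf : Fact p.Prime := ⟨(CharP.char_is_prime_or_zero K p).resolve_right hp.ne'⟩
  have main : ∃ (M : Type _) (_ : AddCommGroup M) (_ : Module K M) (_ : FiniteDimensional K M)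
      (ρ : L →ₗ[K] Module.End K M), DZ.IsRep ρ ∧ DZ.HasH2 ρ := by
    by_cases hab : ∀ x y : L, ⁅x, y⁆ = 0
    · exact ⟨K, inferInstance, inferInstance, inferInstance, 0, fun l n => by simp, DZ.abelian hL hab⟩
    · push Not at hab
      obtain ⟨x, y, hxy⟩ := hab
      exact DZ.nonabelian (p := p) x y hxy
  obtain ⟨M0, _, _, _, ρ, hρ, f, hf1, hf2, hf3⟩ := main
  have hKs : Small.{0} K := by
    have : Nontrivial L := Module.nontrivial_of_finrank_pos (R := K) (by omega)
    obtain ⟨v, hv⟩ := exists_ne (0 : L)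
    exact small_of_injective (smul_left_injective K hv)
  have hMs : Small.{0} M0 :=
    small_of_injective (Module.finBasis K M0).equivFun.injective
  let e : Shrink.{0} M0 ≃ₗ[K] M0 := Shrink.linearEquiv K M0
  let i1 : LieRingModule L (Shrink.{0} M0) :=
    { bracket := fun l v => e.symm (ρ l (e v))
      add_lie := fun l n v => by
        change e.symm (ρ (l + n) (e v)) = e.symm (ρ l (e v)) + e.symm (ρ n (e v))
        rw [map_add, LinearMap.add_apply, map_add]
      lie_add := fun l v w => by
        change e.symm (ρ l (e (v + w))) = e.symm (ρ l (e v)) + e.symm (ρ l (e w))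
        rw [map_add, map_add, map_add]
      leibniz_lie := fun l n v => by
        change e.symm (ρ l (e (e.symm (ρ n (e v))))) =
          e.symm (ρ ⁅l, n⁆ (e v)) + e.symm (ρ n (e (e.symm (ρ l (e v)))))
        rw [hρ l n, ← map_add]
        simp }
  have hbr : ∀ (l : L) (v : Shrink.{0} M0), ⁅l, v⁆ = e.symm (ρ l (e v)) := fun l v => rfl
  have i2 : LieModule K L (Shrink.{0} M0) :=
    { smul_lie := fun c l v => by rw [hbr, hbr]; simp
      lie_smul := fun c l v => by rw [hbr, hbr]; simp }
  refine ⟨Shrink.{0} M0, inferInstance, inferInstance, i1, i2, Module.Finite.equiv e.symm,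
    f.compr₂ e.symm.toLinearMap, fun x => ?_, fun x y z => ?_, ?_⟩
  · simp [hf1]
  · simp only [LinearMap.compr₂_apply, LinearEquiv.coe_coe, hbr, LinearEquiv.apply_symm_apply,
      ← map_sub, ← map_add, hf2, map_zero]
  · rintro ⟨g, hg⟩
    refine hf3 ⟨e.toLinearMap ∘ₗ g, fun x y => ?_⟩
    have := congrArg e (hg x y)
    simpa [hbr] using this
end

section
/- Let K be a field of characteristic zero and L a finite-dimensional Lie algebra over K. Suppose that for every finite-dimensional L-module M, every 2-cocycle f: L × L → M with coefficients in M is a 2-coboundary. Then L is semisimple, or L is one-dimensional, or L is the direct sum (as Lie algebras) of a semisimple ideal and a one-dimensional central ideal. -/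
open LieModule LieAlgebra TensorProduct in
theorem csw_nil_aux {k : Type*} [Field k] [CharZero k] [IsAlgClosed k]
    {L : Type*} [LieRing L] [LieAlgebra k L] [FiniteDimensional k L]
    (I : LieIdeal k L) [IsSolvable I] (n : ℕ) :
    ∀ (M : Type _) [AddCommGroup M] [Module k M] [LieRingModule L M] [LieModule k L M]
      [FiniteDimensional k M], Module.finrank k M = n →
    ∀ x ∈ ⁅(⊤ : LieIdeal k L), I⁆, IsNilpotent (toEnd k L M x) := by
  induction n using Nat.strong_induction_on with
  | _ n ih =>
  intro M _ _ _ _ _ hn x hx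
  rcases subsingleton_or_nontrivial M with hM | hM
  · exact ⟨1, by ext m; exact Subsingleton.elim _ _⟩
  obtain ⟨χ, hχ⟩ := exists_nontrivial_weightSpace_of_isSolvable k I M
  let N : LieSubmodule k L M := weightSpaceOfIsLieTower k M χ
  have hN : ∀ m ∈ N, ∀ a (ha : a ∈ I), ⁅a, m⁆ = χ ⟨a, ha⟩ • m := by
    intro m hm a ha
    have : m ∈ weightSpace M χ := hm
    rw [mem_weightSpace] at this
    exact this ⟨a, ha⟩
  have hkill : ∀ m ∈ N, ⁅x, m⁆ = 0 := by
    intro m hm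
    have : ⁅(⊤ : LieIdeal k L), I⁆ ≤ (⊤ : LieIdeal k L) := le_top
    rw [← LieSubmodule.mem_toSubmodule, LieSubmodule.lieIdeal_oper_eq_linear_span'] at hx
    induction hx using Submodule.span_induction with
    | mem y hy =>
      obtain ⟨z, -, a, ha, rfl⟩ := hy
      rw [lie_lie, hN m hm a ha, hN _ (N.lie_mem hm) a ha, lie_smul, sub_self]
    | zero => simp
    | add y z _ _ hy hz => simp [hy, hz]
    | smul t y _ hy => simp [hy]
  have hNnt : Nontrivial N := hχ
  have hlt : Module.finrank k (M ⧸ N) < n := by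
    have h1 := Submodule.finrank_quotient_add_finrank N.toSubmodule
    have h2 : 0 < Module.finrank k N.toSubmodule := Module.finrank_pos_iff.mpr hNnt
    have h3 : Module.finrank k (M ⧸ N) = Module.finrank k (M ⧸ N.toSubmodule) := rfl
    omega
  obtain ⟨r, hr⟩ := ih _ hlt (M ⧸ N) rfl x hx
  refine ⟨r + 1, ?_⟩
  ext m
  rw [pow_succ', Module.End.mul_apply, toEnd_apply_apply]
  apply hkill
  have h4 : ∀ s : ℕ, LieSubmodule.Quotient.mk (N := N) ((toEnd k L M x ^ s) m)
      = ((toEnd k L (M ⧸ N) x) ^ s) (LieSubmodule.Quotient.mk m) := by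
    intro s
    induction s with
    | zero => rfl
    | succ s ihs =>
      rw [pow_succ', pow_succ', Module.End.mul_apply, Module.End.mul_apply, ← ihs]; rfl
  have h5 := h4 r
  rw [hr] at h5
  exact (LieSubmodule.Quotient.mk_eq_zero' ).1 h5

open LieModule LieAlgebra TensorProduct in
theorem csw_nil {K : Type*} [Field K] [CharZero K]
    {L : Type*} [LieRing L] [LieAlgebra K L] [FiniteDimensional K L]
    (x : L) (hx : x ∈ ⁅(⊤ : LieIdeal K L), radical K L⁆) : IsNilpotent (toEnd K L L x) := by
  let A := AlgebraicClosure K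
  let I : LieIdeal A (A ⊗[K] L) := (radical K L).baseChange A
  have hI : IsSolvable I := by
    obtain ⟨k, hk⟩ := IsSolvable.solvable K (radical K L)
    rw [LieIdeal.derivedSeries_eq_bot_iff] at hk
    refine IsSolvable.mk (R := A) (k := k) ((LieIdeal.derivedSeries_eq_bot_iff I k).mpr ?_)
    have : ∀ j, derivedSeriesOfIdeal A (A ⊗[K] L) j I
        = (derivedSeriesOfIdeal K L j (radical K L)).baseChange A := by
      intro j
      induction j with
      | zero => rfl
      | succ j ihj => 
        rw [derivedSeriesOfIdeal_succ, derivedSeriesOfIdeal_succ, ihj, ← LieSubmodule.lie_baseChange]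
    rw [this, hk, LieSubmodule.baseChange_bot]
  have hx2 : (1 : A) ⊗ₜ[K] x ∈ ⁅(⊤ : LieIdeal A (A ⊗[K] L)), I⁆ := by
    rw [← LieSubmodule.baseChange_top, ← LieSubmodule.lie_baseChange]
    exact Submodule.tmul_mem_baseChange_of_mem 1 hx
  have h := csw_nil_aux I _ (A ⊗[K] L) rfl _ hx2
  have hbc_inj : Function.Injective (Module.End.baseChangeHom K A L) :=
    LinearMap.baseChangeHom_injective K L A
  rw [← IsNilpotent.map_iff hbc_inj]
  have aux : (toEnd K L L x).baseChangeHom K A L = (toEnd K L L x).baseChange A := rfl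
  rw [aux, ← toEnd_baseChange]
  exact h


/-- vanishing of the second cohomology -/
def CswH (K : Type*) [Field K] (L : Type) [LieRing L] [LieAlgebra K L] : Prop :=
  ∀ (M : Type) (_ : AddCommGroup M) (_ : Module K M) (_ : LieRingModule L M)
      (_ : LieModule K L M), FiniteDimensional K M →
      ∀ f : L →ₗ[K] L →ₗ[K] M, (∀ x : L, f x x = 0) →
        (∀ x y z : L,
          ⁅x, f y z⁆ - ⁅y, f x z⁆ + ⁅z, f x y⁆
            - f ⁅x, y⁆ z + f ⁅x, z⁆ y - f ⁅y, z⁆ x = 0) →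
        ∃ g : L →ₗ[K] M, ∀ x y : L, f x y = ⁅x, g y⁆ - ⁅y, g x⁆ - g ⁅x, y⁆

theorem CswH.app {K : Type*} [Field K] {L : Type} [LieRing L] [LieAlgebra K L]
    (H : CswH K L) (M : Type) [AddCommGroup M] [Module K M] [LieRingModule L M]
    [LieModule K L M] [FiniteDimensional K M]
    (f : L →ₗ[K] L →ₗ[K] M) (h0 : ∀ x : L, f x x = 0)
    (h1 : ∀ x y z : L,
          ⁅x, f y z⁆ - ⁅y, f x z⁆ + ⁅z, f x y⁆
            - f ⁅x, y⁆ z + f ⁅x, z⁆ y - f ⁅y, z⁆ x = 0) :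
    ∃ g : L →ₗ[K] M, ∀ x y : L, f x y = ⁅x, g y⁆ - ⁅y, g x⁆ - g ⁅x, y⁆ :=
  H M _ _ _ inferInstance inferInstance f h0 h1

theorem csw_step {K : Type*} [Field K] {L : Type} [LieRing L] [LieAlgebra K L]
    (H : CswH K L) {V : Type} [AddCommGroup V] [Module K V] [LieRingModule L V]
    [LieModule K L V] [FiniteDimensional K V]
    (φ : L →ₗ[K] K) (hφ : ∀ x y : L, φ ⁅x, y⁆ = 0) (P Q : L →ₗ[K] V)
    (hQ : ∀ x y, Q ⁅x, y⁆ = ⁅x, Q y⁆ - ⁅y, Q x⁆ + φ x • P y - φ y • P x) :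
    ∃ R : L →ₗ[K] V, ∀ x y, R ⁅x, y⁆ = ⁅x, R y⁆ - ⁅y, R x⁆ + φ x • Q y - φ y • Q x := by
  let f : L →ₗ[K] L →ₗ[K] V := LinearMap.mk₂ K (fun x y => φ x • Q y - φ y • Q x)
    (by intros; simp only [map_add, add_smul, smul_add]; abel)
    (by intros; simp only [map_smul, smul_sub, smul_eq_mul, mul_smul]
        congr 1; rw [smul_comm])
    (by intros; simp only [map_add, add_smul, smul_add]; abel)
    (by intros; simp only [map_smul, smul_sub, smul_eq_mul, mul_smul]
        congr 1; rw [smul_comm])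
  have hf : ∀ x y, f x y = φ x • Q y - φ y • Q x := fun x y => rfl
  obtain ⟨g, hg⟩ := H.app V f (by intro x; simp [hf]) (by
    intro x y z
    simp only [hf, hφ, hQ, lie_sub, lie_smul]
    module)
  refine ⟨-g, fun x y => ?_⟩
  have := hg x y
  rw [hf] at this
  simp only [LinearMap.neg_apply, lie_neg]
  have h2 : g ⁅x, y⁆ = ⁅x, g y⁆ - ⁅y, g x⁆ - (φ x • Q y - φ y • Q x) := by rw [this]; abel
  rw [h2]; abel

theorem csw_caseI {K : Type*} [Field K] {L : Type} [LieRing L] [LieAlgebra K L]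
    [FiniteDimensional K L]
    (H : CswH K L) {V : Type} [AddCommGroup V] [Module K V] [LieRingModule L V]
    [LieModule K L V] [FiniteDimensional K V]
    (p : L →ₗ[K] V) (hp : ∀ x y, p ⁅x, y⁆ = ⁅x, p y⁆ - ⁅y, p x⁆)
    (φ : L →ₗ[K] K) (hφ : ∀ x y : L, φ ⁅x, y⁆ = 0) (h : L) (hh : φ h = 1)
    (B : Submodule K L) (hB : ∀ b ∈ B, ⁅h, b⁆ ∈ B) (hBφ : ∀ b ∈ B, φ b = 0)
    (hBV : ∀ b ∈ B, ∀ v : V, ⁅b, v⁆ = 0) : ∀ b ∈ B, p b = 0 := by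
  let S := {q : (L →ₗ[K] V) × (L →ₗ[K] V) //
    ∀ x y, q.2 ⁅x, y⁆ = ⁅x, q.2 y⁆ - ⁅y, q.2 x⁆ + φ x • q.1 y - φ y • q.1 x}
  have hnext : ∀ s : S, ∃ t : S, t.1.1 = s.1.2 := by
    rintro ⟨⟨P, Q⟩, hPQ⟩
    obtain ⟨R, hR⟩ := csw_step H φ hφ P Q hPQ
    exact ⟨⟨⟨Q, R⟩, hR⟩, rfl⟩
  choose nx hnx using hnext
  let s0 : S := ⟨⟨0, p⟩, by intro x y; simp [hp]⟩
  let seq : ℕ → S := fun n => Nat.rec s0 (fun _ s => nx s) n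
  have hs0 : (seq 0).1.1 = 0 := rfl
  have hss : ∀ n, (seq (n + 1)).1.1 = (seq n).1.2 := fun n => hnx _
  let P : ℕ → L →ₗ[K] V := fun n => (seq n).1.2
  have hP0 : ∀ b ∈ B, P 0 ⁅h, b⁆ = ⁅h, P 0 b⁆ := by
    intro b hb
    have := (seq 0).2 h b
    rw [hs0, hBV b hb] at this
    simpa using this
  have hPs : ∀ n, ∀ b ∈ B, P (n + 1) ⁅h, b⁆ = ⁅h, P (n + 1) b⁆ + P n b := by
    intro n b hb
    have := (seq (n + 1)).2 h b
    rw [hss, hBV b hb, hh, hBφ b hb] at this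
    simpa using this
  let Φ : Module.Dual K V →ₗ[K] B →ₗ[K] (ℕ → K) := LinearMap.mk₂ K
    (fun ξ b n => ξ (P n b))
    (by intros; ext; simp) (by intros; ext; simp) (by intros; ext; simp) (by intros; ext; simp)
  have hΦ : ∀ ξ b n, Φ ξ b n = ξ (P n b) := fun _ _ _ => rfl
  let X : Submodule K (ℕ → K) := Submodule.map₂ Φ ⊤ ⊤
  have hXfg : X.FG := Submodule.FG.map₂ Φ Module.Finite.fg_top Module.Finite.fg_top
  have : Module.Finite K X := Module.Finite.iff_fg.2 hXfg
  let σ : (ℕ → K) →ₗ[K] (ℕ → K) :=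
    { toFun := fun f n => Nat.casesOn n 0 f
      map_add' := by intro f g; ext n; cases n <;> simp
      map_smul' := by intro c f; ext n; cases n <;> simp }
  have hσ0 : ∀ f, σ f 0 = 0 := fun _ => rfl
  have hσs : ∀ f n, σ f (n + 1) = f n := fun _ _ => rfl
  have hσinj : Function.Injective σ := by
    intro f g hfg; ext n; rw [← hσs f, hfg, hσs]
  have hle : X.map σ ≤ X := by
    rw [Submodule.map_le_iff_le_comap, Submodule.map₂_le]
    intro ξ _ b _
    rw [Submodule.mem_comap]
    have : σ (Φ ξ b) = Φ ξ ⟨⁅h, (b : L)⁆, hB b b.2⟩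
        - Φ (ξ.comp (LieModule.toEnd K L V h)) b := by
      ext n
      cases n with
      | zero => simp [hσ0, hΦ, hP0 b b.2]
      | succ n => simp [hσs, hΦ, hPs n b b.2]
    rw [this]
    exact sub_mem (Submodule.apply_mem_map₂ _ trivial trivial)
      (Submodule.apply_mem_map₂ _ trivial trivial)
  have heq : X.map σ = X := by
    apply Submodule.eq_of_le_of_finrank_eq hle
    exact (Submodule.equivMapOfInjective σ hσinj X).finrank_eq.symm
  have hzero : ∀ n, ∀ f ∈ X, f n = 0 := by
    intro n
    induction n with
    | zero => intro f hf; rw [← heq] at hf; obtain ⟨g, hg, rfl⟩ := hf; rfl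
    | succ n ih => intro f hf; rw [← heq] at hf; obtain ⟨g, hg, rfl⟩ := hf; exact ih g hg
  intro b hb
  rw [← Module.forall_dual_apply_eq_zero_iff K]
  intro ξ
  exact hzero 0 (Φ ξ ⟨b, hb⟩) (Submodule.apply_mem_map₂ _ trivial trivial)

theorem csw_lift {K : Type*} [Field K] {L : Type} [LieRing L] [LieAlgebra K L]
    (H : CswH K L) {B : Type} [AddCommGroup B] [Module K B] [LieRingModule L B]
    [LieModule K L B] [FiniteDimensional K B]
    {C : Type} [AddCommGroup C] [Module K C] [LieRingModule L C]
    [LieModule K L C]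
    (π : B →ₗ[K] C) (hπ : Function.Surjective π) (hπl : ∀ (x : L) b, π ⁅x, b⁆ = ⁅x, π b⁆)
    (p : L →ₗ[K] C) (hp : ∀ x y, p ⁅x, y⁆ = ⁅x, p y⁆ - ⁅y, p x⁆) :
    ∃ P : L →ₗ[K] B, (∀ x y, P ⁅x, y⁆ = ⁅x, P y⁆ - ⁅y, P x⁆) ∧ ∀ x, π (P x) = p x := by
  obtain ⟨s, hs⟩ := π.exists_rightInverse_of_surjective (LinearMap.range_eq_top.2 hπ)
  have hs' : ∀ c, π (s c) = c := fun c => by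
    rw [← LinearMap.comp_apply, hs]; rfl
  let N : LieSubmodule K L B :=
    { LinearMap.ker π with
      lie_mem := by
        intro x b hb
        have hb' : π b = 0 := hb
        change π ⁅x, b⁆ = 0
        rw [hπl, hb', lie_zero] }
  let q : L →ₗ[K] B := s.comp p
  have hq : ∀ x, π (q x) = p x := fun x => hs' _
  let f : L →ₗ[K] L →ₗ[K] N := LinearMap.mk₂ K
    (fun x y => ⟨⁅x, q y⁆ - ⁅y, q x⁆ - q ⁅x, y⁆, by
      change π _ = 0
      rw [map_sub, map_sub, hπl, hπl, hq, hq, hq, hp, sub_self]⟩)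
    (by intros; ext; simp; abel)
    (by intros; ext; simp [smul_sub])
    (by intros; ext; simp; abel)
    (by intros; ext; simp [smul_sub])
  have hf : ∀ x y, (f x y : B) = ⁅x, q y⁆ - ⁅y, q x⁆ - q ⁅x, y⁆ := fun _ _ => rfl
  obtain ⟨g, hg⟩ := H.app N f (by intro x; ext; simp [hf]) (by
    intro x y z
    ext
    simp only [hf, LieSubmodule.coe_sub, LieSubmodule.coe_add, LieSubmodule.coe_bracket,
      lie_sub, LieSubmodule.coe_zero]
    have e1 : q ⁅y, ⁅x, z⁆⁆ = q ⁅x, ⁅y, z⁆⁆ - q ⁅⁅x, y⁆, z⁆ := by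
      rw [← map_sub, lie_lie]; congr 1; abel
    have e2 : q ⁅z, ⁅x, y⁆⁆ = - q ⁅⁅x, y⁆, z⁆ := by rw [← map_neg, lie_skew]
    have e3 : q ⁅⁅x, z⁆, y⁆ = - q ⁅y, ⁅x, z⁆⁆ := by rw [← map_neg, lie_skew]
    have e4 : q ⁅⁅y, z⁆, x⁆ = - q ⁅x, ⁅y, z⁆⁆ := by rw [← map_neg, lie_skew]
    simp only [lie_lie x y (q z), lie_lie x z (q y), lie_lie y z (q x), e3, e4, e2, e1]
    abel)
  refine ⟨q - (N.toSubmodule.subtype.comp g), fun x y => ?_, fun x => ?_⟩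
  · have := congrArg (Subtype.val) (hg x y)
    rw [hf] at this
    have h2 : q ⁅x, y⁆ = ⁅x, q y⁆ - ⁅y, q x⁆ - (⁅x, (g y : B)⁆ - ⁅y, (g x : B)⁆ - (g ⁅x, y⁆ : B)) := by
      simp only [LieSubmodule.coe_sub, LieSubmodule.coe_bracket] at this
      rw [← this]; abel
    simp only [LinearMap.sub_apply, LinearMap.comp_apply, Submodule.subtype_apply, lie_sub]
    rw [h2]; abel
  · rw [LinearMap.sub_apply, map_sub, hq]
    have : π (g x : B) = 0 := (g x).2
    simp [this]


theorem csw_ker {K : Type*} [Field K] {L : Type*} [LieRing L] [LieAlgebra K L]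
    {V : Type*} [AddCommGroup V] [Module K V] (q : L →ₗ[K] V) (I J : LieIdeal K L)
    (h : ∀ x ∈ I, ∀ y ∈ J, q ⁅x, y⁆ = 0) : ∀ z ∈ ⁅I, J⁆, q z = 0 := by
  intro z hz
  rw [← LieSubmodule.mem_toSubmodule, LieSubmodule.lieIdeal_oper_eq_linear_span'] at hz
  induction hz using Submodule.span_induction with
  | mem y hy => obtain ⟨z, hz, w, hw, rfl⟩ := hy; exact h z hz w hw
  | zero => simp
  | add y z _ _ hy hz => simp [hy, hz]
  | smul t y _ hy => simp [hy]

open TensorProduct LieModule in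
theorem csw_tower {K : Type*} [Field K] {L : Type} [LieRing L] [LieAlgebra K L]
    {E1 : Type} [AddCommGroup E1] [Module K E1] [LieRingModule L E1]
    [LieModule K L E1] [FiniteDimensional K E1] (a b c : L)
    (ε1 α1 : E1 →ₗ[K] K) (hε1 : Function.Surjective ε1) (hε1l : ∀ (x : L) u, ε1 ⁅x, u⁆ = 0)
    (haa : ∀ u : E1, ⁅a, ⁅a, u⁆⁆ = 0) (hab : ∀ u : E1, ⁅a, ⁅b, u⁆⁆ = 0)
    (hαa : ∀ u : E1, α1 ⁅a, u⁆ = ε1 u) (hαb : ∀ u : E1, α1 ⁅b, u⁆ = 0)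
    (hc : ∀ u : E1, ⁅c, u⁆ = 0) (j : ℕ) :
    ∃ (E : Type) (_ : AddCommGroup E) (_ : Module K E) (_ : LieRingModule L E)
      (_ : LieModule K L E) (_ : FiniteDimensional K E) (ε θ : E →ₗ[K] K),
      Function.Surjective ε ∧ (∀ (x : L) u, ε ⁅x, u⁆ = 0) ∧
      (∀ u, θ ((toEnd K L E a ^ (j + 1)) u) = ((j + 1).factorial : K) * ε u) ∧
      (∀ u, θ ((toEnd K L E a ^ j) ⁅b, u⁆) = 0) ∧ ∀ u : E, ⁅c, u⁆ = 0 := by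
  induction j with
  | zero =>
    exact ⟨E1, _, _, _, inferInstance, inferInstance, ε1, α1, hε1, hε1l,
      by intro u; simp [hαa], by intro u; simp [hαb], hc⟩
  | succ j ih =>
    obtain ⟨E, _, _, _, _, _, ε, θ, h1, h2, h3, h4, h5⟩ := ih
    have key : ∀ (n : ℕ) (w : E1) (u : E), (toEnd K L (E1 ⊗[K] E) a ^ (n + 1)) (w ⊗ₜ[K] u)
        = w ⊗ₜ[K] ((toEnd K L E a ^ (n + 1)) u)
          + ((n + 1 : ℕ) : K) • (⁅a, w⁆ ⊗ₜ[K] ((toEnd K L E a ^ n) u)) := by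
      intro n w u
      induction n with
      | zero => simp [TensorProduct.LieModule.lie_tmul_right, add_comm]
      | succ n ihn =>
        rw [pow_succ', Module.End.mul_apply, ihn, map_add, map_smul]
        simp only [toEnd_apply_apply, TensorProduct.LieModule.lie_tmul_right, haa,
          TensorProduct.zero_tmul, zero_add]
        have e : ∀ (m : ℕ) (v : E), ⁅a, (toEnd K L E a ^ m) v⁆ = (toEnd K L E a ^ (m + 1)) v := by
          intro m v; rw [pow_succ' _ m, Module.End.mul_apply]; rfl
        rw [e, e]
        push_cast
        module
    refine ⟨E1 ⊗[K] E, inferInstance, inferInstance, inferInstance, inferInstance, inferInstance,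
      LinearMap.mul' K K ∘ₗ TensorProduct.map ε1 ε, LinearMap.mul' K K ∘ₗ TensorProduct.map α1 θ,
      ?_, ?_, ?_, ?_, ?_⟩
    · intro t
      obtain ⟨w, hw⟩ := hε1 t
      obtain ⟨u, hu⟩ := h1 1
      exact ⟨w ⊗ₜ u, by simp [hw, hu]⟩
    · intro x u
      induction u with
      | zero => simp
      | add u v hu hv => rw [lie_add, map_add, hu, hv, add_zero]
      | tmul w u => simp [TensorProduct.LieModule.lie_tmul_right, hε1l, h2]
    · intro u
      induction u with
      | zero => simp
      | add u v hu hv => rw [map_add, map_add, hu, hv, map_add, mul_add]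
      | tmul w u =>
        rw [key]
        have e0 : θ ((toEnd K L E a ^ (j + 1 + 1)) u) = 0 := by
          rw [pow_succ, Module.End.mul_apply, h3]; simp [h2]
        simp only [LinearMap.comp_apply, map_add, map_smul, TensorProduct.map_tmul,
          LinearMap.mul'_apply, e0, h3, hαa, Nat.factorial_succ (j + 1)]
        push_cast
        simp only [smul_eq_mul]
        ring
    · intro u
      induction u with
      | zero => simp
      | add u v hu hv => rw [lie_add, map_add, map_add, hu, hv, add_zero]
      | tmul w u =>
        rw [TensorProduct.LieModule.lie_tmul_right, map_add, key, key]
        have e0 : θ ((toEnd K L E a ^ (j + 1)) ⁅b, u⁆) = 0 := by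
          rw [h3]; simp [h2]
        simp [hαb, hab, e0, h4]
    · intro u
      induction u with
      | zero => simp
      | add u v hu hv => rw [lie_add, hu, hv, add_zero]
      | tmul w u => simp [TensorProduct.LieModule.lie_tmul_right, hc, h5]

theorem csw_ext {K : Type*} [Field K] {L : Type} [LieRing L] [LieAlgebra K L]
    {W : Type} [AddCommGroup W] [Module K W] [LieRingModule L W]
    [LieModule K L W] [FiniteDimensional K W] (p : L →ₗ[K] W)
    (hp : ∀ x y, p ⁅x, y⁆ = ⁅x, p y⁆ - ⁅y, p x⁆) (a b c : L)
    (ha : ∀ w : W, ⁅a, w⁆ = 0) (hb : ∀ w : W, ⁅b, w⁆ = 0) (hc : ∀ w : W, ⁅c, w⁆ = 0)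
    (hpc : p c = 0) (α : W →ₗ[K] K) (hαa : α (p a) = 1) (hαb : α (p b) = 0) :
    ∃ (E : Type) (_ : AddCommGroup E) (_ : Module K E) (_ : LieRingModule L E)
      (_ : LieModule K L E) (_ : FiniteDimensional K E) (ε1 α1 : E →ₗ[K] K),
      Function.Surjective ε1 ∧ (∀ (x : L) u, ε1 ⁅x, u⁆ = 0) ∧
      (∀ u : E, ⁅a, ⁅a, u⁆⁆ = 0) ∧ (∀ u : E, ⁅a, ⁅b, u⁆⁆ = 0) ∧
      (∀ u : E, α1 ⁅a, u⁆ = ε1 u) ∧ (∀ u : E, α1 ⁅b, u⁆ = 0) ∧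
      (∀ u : E, ⁅c, u⁆ = 0) := by
  have hne : p a ≠ 0 := by intro h; rw [h, map_zero] at hαa; exact zero_ne_one hαa
  let T := Submodule.span K {p a}
  let e : T ≃ₗ[K] K := (LinearEquiv.toSpanNonzeroSingleton K W (p a) hne).symm
  let _ : LieRingModule L (W × T) :=
    { bracket := fun x u => (⁅x, u.1⁆ + e u.2 • p x, 0)
      add_lie := by
        intro x y u
        simp only [add_lie, map_add, smul_add, Prod.mk_add_mk, add_zero, Prod.mk.injEq, and_true]
        abel
      lie_add := by
        intro x u v
        simp only [Prod.fst_add, Prod.snd_add, lie_add, map_add, add_smul, Prod.mk_add_mk,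
          add_zero, Prod.mk.injEq, and_true]
        abel
      leibniz_lie := by
        intro x y u
        simp only [Prod.mk_add_mk, add_zero, Prod.mk.injEq, and_true, hp, lie_add, lie_smul,
          map_zero, zero_smul, smul_sub]
        rw [lie_lie]
        abel }
  have hbr : ∀ (x : L) (u : W × T), ⁅x, u⁆ = (⁅x, u.1⁆ + e u.2 • p x, 0) := fun _ _ => rfl
  let _ : LieModule K L (W × T) :=
    { smul_lie := by
        intro t x u
        rw [hbr, hbr]
        ext
        · simp [smul_comm t]
        · simp
      lie_smul := by
        intro t x u
        rw [hbr, hbr]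
        ext
        · simp [mul_smul]
        · simp }
  refine ⟨W × T, inferInstance, inferInstance, inferInstance, inferInstance, inferInstance,
    e.toLinearMap ∘ₗ LinearMap.snd K W T, α ∘ₗ LinearMap.fst K W T, ?_, ?_, ?_, ?_, ?_, ?_, ?_⟩
  · intro t
    exact ⟨(0, e.symm t), by simp⟩
  · intro x u; rw [hbr]; simp
  · intro u; rw [hbr, hbr]; simp [ha]
  · intro u; rw [hbr, hbr]; simp [ha]
  · intro u; rw [hbr]; simp [ha, hαa]
  · intro u; rw [hbr]; simp [hb, hαb]
  · intro u; rw [hbr]; simp [hc, hpc]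

open TensorProduct LieModule in
theorem csw_caseII {K : Type*} [Field K] [CharZero K] {L : Type} [LieRing L] [LieAlgebra K L]
    (H : CswH K L) {W : Type} [AddCommGroup W] [Module K W] [LieRingModule L W]
    [LieModule K L W] [FiniteDimensional K W] (p : L →ₗ[K] W)
    (hp : ∀ x y, p ⁅x, y⁆ = ⁅x, p y⁆ - ⁅y, p x⁆) (a b : L)
    (ha : ∀ w : W, ⁅a, w⁆ = 0) (hb : ∀ w : W, ⁅b, w⁆ = 0)
    (hnil : IsNilpotent (toEnd K L L a))
    (α : W →ₗ[K] K) (hαa : α (p a) = 1) (hαb : α (p b) = 0) : p b = 0 := by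
  obtain ⟨n, hn⟩ := hnil
  have hc : ∀ w : W, ⁅⁅a, b⁆, w⁆ = 0 := by intro w; simp [ha, hb]
  have hpc : p ⁅a, b⁆ = 0 := by rw [hp, ha, hb, sub_zero]
  obtain ⟨E1, _, _, _, _, _, ε1, α1, g1, g2, g3, g4, g5, g6, g7⟩ :=
    csw_ext p hp a b ⁅a, b⁆ ha hb hc hpc α hαa hαb
  obtain ⟨E, _, _, _, _, _, ε, θ, h1, h2, h3, h4, h5⟩ :=
    csw_tower a b ⁅a, b⁆ ε1 α1 g1 g2 g3 g4 g5 g6 g7 n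
  let π : E ⊗[K] W →ₗ[K] W := (TensorProduct.lid K W).toLinearMap ∘ₗ LinearMap.rTensor W ε
  have hπt : ∀ u w, π (u ⊗ₜ w) = ε u • w := fun u w => by simp [π]
  obtain ⟨P, hP, hPp⟩ := csw_lift H π (by
      intro w
      obtain ⟨u, hu⟩ := h1 1
      exact ⟨u ⊗ₜ w, by rw [hπt, hu, one_smul]⟩)
    (by
      intro x u
      induction u with
      | zero => simp
      | add u v hu hv => rw [lie_add, map_add, hu, hv, map_add, lie_add]
      | tmul u w => 
        rw [TensorProduct.LieModule.lie_tmul_right, map_add, hπt, hπt, hπt, h2, lie_smul,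
          zero_smul, zero_add]) p hp
  have hcE : ∀ v : E ⊗[K] W, ⁅⁅a, b⁆, v⁆ = 0 := by
    intro v
    induction v with
    | zero => simp
    | add u v hu hv => rw [lie_add, hu, hv, add_zero]
    | tmul u w => rw [TensorProduct.LieModule.lie_tmul_right, h5, hc]; simp
  have hcE' : ∀ (m : ℕ) (v : E ⊗[K] W), ⁅(toEnd K L L a ^ m) ⁅a, b⁆, v⁆ = 0 := by
    intro m
    induction m with
    | zero => exact hcE
    | succ m ih => 
      intro v
      rw [pow_succ', Module.End.mul_apply, toEnd_apply_apply, lie_lie, ih, ih, lie_zero, sub_zero]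
  have hPm : ∀ m : ℕ, P ((toEnd K L L a ^ m) ⁅a, b⁆) = (toEnd K L (E ⊗[K] W) a ^ m) (P ⁅a, b⁆) := by
    intro m
    induction m with
    | zero => rfl
    | succ m ih => 
      rw [pow_succ', Module.End.mul_apply, toEnd_apply_apply, hP, hcE', ih, sub_zero,
        pow_succ', Module.End.mul_apply, toEnd_apply_apply]
  have h0 := hPm n
  rw [hn, LinearMap.zero_apply, map_zero, hP, map_sub] at h0
  have hpow : ∀ (m : ℕ) (u : E) (w : W), (toEnd K L (E ⊗[K] W) a ^ m) (u ⊗ₜ[K] w)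
      = ((toEnd K L E a ^ m) u) ⊗ₜ[K] w := by
    intro m u w
    induction m with
    | zero => rfl
    | succ m ih =>
      rw [pow_succ', Module.End.mul_apply, ih, toEnd_apply_apply,
        TensorProduct.LieModule.lie_tmul_right, ha, TensorProduct.tmul_zero, add_zero,
        pow_succ', Module.End.mul_apply, toEnd_apply_apply]
  rw [← Module.forall_dual_apply_eq_zero_iff K]
  intro β
  let Θ : E ⊗[K] W →ₗ[K] K := LinearMap.mul' K K ∘ₗ TensorProduct.map θ β
  have k1 : ∀ v : E ⊗[K] W, Θ ((toEnd K L (E ⊗[K] W) a ^ n) ⁅a, v⁆)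
      = ((n + 1).factorial : K) * β (π v) := by
    intro v
    induction v with
    | zero => simp
    | add u v hu hv => rw [lie_add, map_add, map_add, hu, hv, map_add, map_add, mul_add]
    | tmul u w =>
      have : ⁅a, u ⊗ₜ[K] w⁆ = toEnd K L (E ⊗[K] W) a (u ⊗ₜ[K] w) := rfl
      rw [this, ← Module.End.mul_apply, ← pow_succ, hpow, hπt]
      simp [Θ, h3, mul_assoc]
  have k2 : ∀ v : E ⊗[K] W, Θ ((toEnd K L (E ⊗[K] W) a ^ n) ⁅b, v⁆) = 0 := by
    intro v
    induction v with
    | zero => simp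
    | add u v hu hv => rw [lie_add, map_add, map_add, hu, hv, add_zero]
    | tmul u w =>
      rw [TensorProduct.LieModule.lie_tmul_right, hb, TensorProduct.tmul_zero, add_zero, hpow]
      simp [Θ, h4]
  have k3 := congrArg Θ h0
  rw [map_zero, map_sub, k1, k2, sub_zero, hPp] at k3
  have : ((n + 1).factorial : K) ≠ 0 := Nat.cast_ne_zero.2 (Nat.factorial_ne_zero _)
  exact (mul_eq_zero.1 k3.symm).resolve_left this

open LieModule in
theorem csw_caseII' {K : Type*} [Field K] [CharZero K] {L : Type} [LieRing L] [LieAlgebra K L]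
    (H : CswH K L) {W : Type} [AddCommGroup W] [Module K W] [LieRingModule L W]
    [LieModule K L W] [FiniteDimensional K W] (p : L →ₗ[K] W)
    (hp : ∀ x y, p ⁅x, y⁆ = ⁅x, p y⁆ - ⁅y, p x⁆) (A : LieIdeal K L)
    (hperf : ⁅(⊤ : LieIdeal K L), (⊤ : LieIdeal K L)⁆ = ⊤)
    (hA : ⁅(⊤ : LieIdeal K L), A⁆ = A)
    (hnil : ∀ a ∈ A, IsNilpotent (toEnd K L L a))
    (hAW : ∀ a ∈ A, ∀ w : W, ⁅a, w⁆ = 0) : ∀ a ∈ A, p a = 0 := by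
  intro a ha
  by_contra hne
  obtain ⟨α, hα⟩ : ∃ α : W →ₗ[K] K, α (p a) ≠ 0 := by
    by_contra! h
    exact hne ((Module.forall_dual_apply_eq_zero_iff K _).1 h)
  obtain ⟨α, hα⟩ : ∃ α : W →ₗ[K] K, α (p a) = 1 :=
    ⟨(α (p a))⁻¹ • α, by simp [hα]⟩
  have hb : ∀ b ∈ A, p b = α (p b) • p a := by
    intro b hb
    have := csw_caseII H p hp a (b - α (p b) • a) (hAW a ha)
      (hAW _ (A.sub_mem hb (A.smul_mem _ ha))) (hnil a ha) α hα (by simp [hα])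
    rw [map_sub, map_smul, sub_eq_zero] at this
    exact this
  have hx : ∀ x : L, ∃ t : K, ⁅x, p a⁆ = t • p a := by
    intro x
    refine ⟨α (p ⁅x, a⁆), ?_⟩
    rw [← hb _ (lie_mem_right K L A x a ha), hp, hAW a ha, sub_zero]
  have hx0 : ∀ x : L, ⁅x, p a⁆ = 0 := by
    intro x
    have hx1 : x ∈ ⁅(⊤ : LieIdeal K L), (⊤ : LieIdeal K L)⁆ := by rw [hperf]; trivial
    rw [← LieSubmodule.mem_toSubmodule, LieSubmodule.lieIdeal_oper_eq_linear_span'] at hx1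
    induction hx1 using Submodule.span_induction with
    | mem y hy =>
      obtain ⟨z, -, w, -, rfl⟩ := hy
      obtain ⟨s, hs⟩ := hx z
      obtain ⟨t, ht⟩ := hx w
      rw [lie_lie, hs, ht, lie_smul, lie_smul, hs, ht, smul_comm, sub_self]
    | zero => simp
    | add y z _ _ hy hz => simp [hy, hz]
    | smul t y _ hy => simp [hy]
  apply hne
  rw [← hA] at ha
  refine csw_ker p _ _ (fun x _ c hc => ?_) a ha
  rw [hp, hAW c hc, hb c hc, lie_smul, hx0, smul_zero, sub_zero]


open LieModule in
theorem csw_central {K : Type*} [Field K] [CharZero K] {L : Type} [LieRing L] [LieAlgebra K L]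
    [FiniteDimensional K L] (A : LieIdeal K L)
    (hnil : ∀ a ∈ A, IsNilpotent (toEnd K L L a))
    (hvan : ∀ (W : Type) [AddCommGroup W] [Module K W] [LieRingModule L W]
      [LieModule K L W] [FiniteDimensional K W] (p : L →ₗ[K] W)
      (_ : ∀ x y, p ⁅x, y⁆ = ⁅x, p y⁆ - ⁅y, p x⁆)
      (_ : ∀ a ∈ A, ∀ w : W, ⁅a, w⁆ = 0), ∀ a ∈ A, p a = 0) :
    ⁅A, (⊤ : LieIdeal K L)⁆ = ⊥ := by
  set N : LieIdeal K L := ⁅A, (⊤ : LieIdeal K L)⁆ with hN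
  let D : LieIdeal K L := ⁅A, N⁆
  have hAN : ∀ a ∈ A, ∀ m : L, ⁅a, m⁆ ∈ N := fun a ha m =>
    LieSubmodule.lie_mem_lie ha (LieSubmodule.mem_top m)
  have hAD : ∀ a ∈ A, ∀ m ∈ N, ⁅a, m⁆ ∈ D := fun a ha m hm =>
    LieSubmodule.lie_mem_lie ha hm
  obtain ⟨g, hg⟩ := LinearMap.exists_leftInverse_of_injective N.toSubmodule.subtype
    (Submodule.ker_subtype _)
  let mk : L →ₗ[K] (L ⧸ D) := (LieSubmodule.Quotient.mk' D : L →ₗ[K] (L ⧸ D))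
  have mk0 : ∀ x, mk x = 0 ↔ x ∈ D := fun x => LieSubmodule.Quotient.mk_eq_zero' 
  have mkl : ∀ x m : L, ⁅x, mk m⁆ = mk ⁅x, m⁆ := fun x m => rfl
  let ψ : L →ₗ[K] (L ⧸ D) := mk ∘ₗ N.toSubmodule.subtype ∘ₗ g
  have hψ : ∀ m, ψ m = mk (g m : L) := fun _ => rfl
  have hψN : ∀ m ∈ N, ψ m = mk m := by
    intro m hm
    have := LinearMap.congr_fun hg ⟨m, hm⟩
    rw [hψ]
    congr 1
    exact congrArg Subtype.val this
  let W : LieSubmodule K L (L →ₗ[K] (L ⧸ D)) :=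
    { carrier := {f | (∀ n ∈ N, f n = 0) ∧ ∀ m, f m ∈ N.toSubmodule.map mk}
      zero_mem' := ⟨fun _ _ => rfl, fun m => zero_mem _⟩
      add_mem' := by
        rintro f f' ⟨h1, h2⟩ ⟨h3, h4⟩
        exact ⟨fun n hn => by rw [LinearMap.add_apply, h1 n hn, h3 n hn, add_zero],
          fun m => add_mem (h2 m) (h4 m)⟩
      smul_mem' := by
        rintro t f ⟨h1, h2⟩
        exact ⟨fun n hn => by rw [LinearMap.smul_apply, h1 n hn, smul_zero],
          fun m => Submodule.smul_mem _ _ (h2 m)⟩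
      lie_mem := by
        rintro x f ⟨h1, h2⟩
        refine ⟨fun n hn => ?_, fun m => ?_⟩
        · rw [LieHom.lie_apply, h1 n hn, h1 _ (N.lie_mem hn), lie_zero, sub_zero]
        · rw [LieHom.lie_apply]
          refine sub_mem ?_ (h2 _)
          obtain ⟨n, hn, h⟩ := h2 m
          rw [← h, mkl]
          exact ⟨_, N.lie_mem hn, rfl⟩ }
  have hW : ∀ f, f ∈ W ↔ (∀ n ∈ N, f n = 0) ∧ ∀ m, f m ∈ N.toSubmodule.map mk := fun _ => Iff.rfl
  have hψW : ∀ x : L, ⁅x, ψ⁆ ∈ W := by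
    intro x
    rw [hW]
    refine ⟨fun n hn => ?_, fun m => ?_⟩
    · rw [LieHom.lie_apply, hψN n hn, hψN _ (N.lie_mem hn), mkl, sub_self]
    · rw [LieHom.lie_apply, hψ, hψ, mkl]
      exact sub_mem ⟨_, N.lie_mem (g m).2, rfl⟩ ⟨_, (g _).2, rfl⟩
  let p : L →ₗ[K] W :=
    { toFun := fun x => ⟨⁅x, ψ⁆, hψW x⟩
      map_add' := by intro x y; ext1; exact add_lie x y ψ
      map_smul' := by intro t x; ext1; exact smul_lie t x ψ }
  have hND : N ≤ D := by
    rw [hN, LieSubmodule.lie_le_iff]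
    intro a ha m _
    have h := hvan W p (by intro x y; ext1; exact lie_lie x y ψ) (by
      rintro b hb ⟨f, hf⟩
      ext1
      change ⁅b, f⁆ = 0
      rw [hW] at hf
      ext m
      rw [LieHom.lie_apply, hf.1 _ (hAN b hb m)]
      obtain ⟨n, hn, h⟩ := hf.2 m
      rw [← h, mkl, (mk0 _).2 (hAD b hb n hn)]
      simp) a ha
    have h1 : ⁅a, ψ⁆ = 0 := congrArg Subtype.val h
    have h2 := LinearMap.congr_fun h1 m
    rw [LieHom.lie_apply, hψ, mkl, (mk0 _).2 (hAD a ha _ (g m).2), hψN _ (hAN a ha m)] at h2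
    rw [← mk0]
    simpa using h2
  have hnilA : LieModule.IsNilpotent A L := by
    rw [LieModule.isNilpotent_iff_forall' (R := K)]
    rintro ⟨a, ha⟩
    exact hnil a ha
  obtain ⟨k, hk⟩ := (LieModule.isNilpotent_iff K A L).1 hnilA
  have hlcs : ∀ j, N ≤ A.lcs L j := by
    intro j
    induction j with
    | zero => simp
    | succ j ih =>
      rw [LieIdeal.lcs_succ]
      exact hND.trans (LieSubmodule.mono_lie_right _ ih)
  have hbot : A.lcs L k = ⊥ := by
    rw [← LieSubmodule.toSubmodule_inj, LieIdeal.coe_lcs_eq, hk]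
    rfl
  rw [eq_bot_iff, ← hbot]
  exact hlcs k


open LieAlgebra in
theorem csw_quot (K : Type*) [Field K] [CharZero K] (L : Type) [LieRing L] [LieAlgebra K L]
    [FiniteDimensional K L] :
    ∃ (G : Type) (_ : LieRing G) (_ : LieAlgebra K G) (_ : FiniteDimensional K G)
      (q : L →ₗ⁅K⁆ G), Function.Surjective q ∧ (∀ x, q x = 0 ↔ x ∈ radical K L) ∧
      IsKilling K G := by
  let q : L →ₗ⁅K⁆ (L ⧸ radical K L) :=
    { (LieSubmodule.Quotient.mk' (radical K L) : L →ₗ[K] (L ⧸ radical K L)) with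
      map_lie' := fun {x y} => LieSubmodule.Quotient.mk_bracket (I := radical K L) x y }
  have hqs : Function.Surjective q := LieSubmodule.Quotient.surjective_mk' _
  have hq0 : ∀ x, q x = 0 ↔ x ∈ radical K L := fun x => LieSubmodule.Quotient.mk_eq_zero'
  have hfd : FiniteDimensional K (L ⧸ radical K L) :=
    Module.Finite.of_surjective (q : L →ₗ[K] (L ⧸ radical K L)) hqs
  have htr : HasTrivialRadical K (L ⧸ radical K L) := by
    rw [hasTrivialRadical_iff_no_abelian_ideals]
    intro I hI
    have hI0 : ∀ x ∈ I, ∀ y ∈ I, ⁅x, y⁆ = 0 := by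
      intro x hx y hy
      have := hI.trivial ⟨x, hx⟩ ⟨y, hy⟩
      exact congrArg Subtype.val this
    let J : LieIdeal K L := I.comap q
    have hJ : ∀ x, x ∈ J ↔ q x ∈ I := fun x => LieIdeal.mem_comap
    have h1 : derivedSeriesOfIdeal K L 1 J ≤ radical K L := by
      rw [derivedSeriesOfIdeal_succ, derivedSeriesOfIdeal_zero, LieSubmodule.lie_le_iff]
      intro x hx y hy
      rw [← hq0, LieHom.map_lie]
      exact hI0 _ ((hJ x).1 hx) _ ((hJ y).1 hy)
    have h2 : IsSolvable (derivedSeriesOfIdeal K L 1 J) :=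
      (LieIdeal.solvable_iff_le_radical K L _).2 h1
    have h3 : IsSolvable J := by
      obtain ⟨k, hk⟩ := IsSolvable.solvable K (derivedSeriesOfIdeal K L 1 J)
      rw [LieIdeal.derivedSeries_eq_bot_iff, ← derivedSeriesOfIdeal_add] at hk
      exact IsSolvable.mk (R := K) ((LieIdeal.derivedSeries_eq_bot_iff J _).2 hk)
    have h4 : J ≤ radical K L := (LieIdeal.solvable_iff_le_radical K L _).1 h3
    rw [eq_bot_iff]
    intro y hy
    obtain ⟨x, rfl⟩ := hqs y
    exact (hq0 x).2 (h4 ((hJ x).2 hy))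
  exact ⟨_, _, _, hfd, q, hqs, hq0, inferInstance⟩

open LieAlgebra in
theorem csw_cap {K : Type*} [Field K] [CharZero K] {L : Type} [LieRing L] [LieAlgebra K L]
    [FiniteDimensional K L] (hR : ∀ r ∈ radical K L, ∀ x : L, ⁅x, r⁆ = 0) :
    ∀ w ∈ ⁅(⊤ : LieIdeal K L), (⊤ : LieIdeal K L)⁆, w ∈ radical K L → w = 0 := by
  obtain ⟨G, _, _, _, q, hqs, hq0, _⟩ := csw_quot K L
  intro w hw hwR
  rw [← Module.forall_dual_apply_eq_zero_iff K]
  intro ℓ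
  obtain ⟨s, hs⟩ := (q : L →ₗ[K] G).exists_rightInverse_of_surjective (LinearMap.range_eq_top.2 hqs)
  have hs' : ∀ c, q (s c) = c := fun c => LinearMap.congr_fun hs c
  have hsr : ∀ x, s (q x) - x ∈ radical K L := by
    intro x; rw [← hq0, map_sub, hs', sub_self]
  have hbr : ∀ x y, ⁅s (q x), s (q y)⁆ = ⁅x, y⁆ := by
    intro x y
    have e1 : ⁅s (q x), s (q y)⁆ = ⁅s (q x), y⁆ := by
      rw [← sub_eq_zero, ← lie_sub, hR _ (hsr y)]
    have e2 : ⁅s (q x), y⁆ = ⁅x, y⁆ := by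
      rw [← sub_eq_zero, ← sub_lie, ← lie_skew, hR _ (hsr x), neg_zero]
    rw [e1, e2]
  let F : G →ₗ[K] G →ₗ[K] K := LinearMap.mk₂ K (fun x y => ℓ ⁅s x, s y⁆)
    (by intros; simp) (by intros; simp) (by intros; simp) (by intros; simp)
  have hF : ∀ x y, F (q x) (q y) = ℓ ⁅x, y⁆ := fun x y => by
    change ℓ _ = _; rw [hbr]
  let e := (killingForm K G).toDual (IsKilling.killingForm_nondegenerate K G)
  let D0 : G →ₗ[K] G := e.symm.toLinearMap ∘ₗ F
  have hD0 : ∀ x y, killingForm K G (D0 x) y = F x y := by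
    intro x y
    rw [← LinearMap.BilinForm.toDual_def (IsKilling.killingForm_nondegenerate K G)]
    change e (e.symm (F x)) y = _
    rw [LinearEquiv.apply_symm_apply]
  have hinv : ∀ x y z : G, killingForm K G ⁅x, y⁆ z = killingForm K G x ⁅y, z⁆ :=
    fun x y z => LieModule.traceForm_apply_lie_apply K G G x y z
  let D : LieDerivation K G G :=
    { D0 with
      leibniz' := by
        intro a b
        change D0 _ = ⁅a, D0 b⁆ - ⁅b, D0 a⁆
        apply e.injective
        ext y
        change killingForm K G _ y = killingForm K G _ y
        rw [← lie_skew a (D0 b), ← lie_skew b (D0 a), map_sub, map_neg, map_neg, LinearMap.sub_apply,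
          LinearMap.neg_apply, LinearMap.neg_apply, hinv, hinv, hD0, hD0, hD0]
        obtain ⟨a, rfl⟩ := hqs a
        obtain ⟨b, rfl⟩ := hqs b
        obtain ⟨y, rfl⟩ := hqs y
        rw [← LieHom.map_lie, ← LieHom.map_lie, ← LieHom.map_lie, hF, hF, hF, lie_lie, map_sub]
        ring }
  obtain ⟨z, hz⟩ := LieDerivation.IsKilling.exists_eq_ad D
  have hz' : ∀ x, D0 x = ⁅z, x⁆ := by
    intro x
    have := congrArg (fun d : LieDerivation K G G => d x) hz
    exact this.symm.trans (LieDerivation.ad_apply_apply K G z x)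
  have hfin := csw_ker (ℓ - (killingForm K G z) ∘ₗ (q : L →ₗ[K] G)) ⊤ ⊤ (by
    intro x _ y _
    rw [LinearMap.sub_apply, ← hF, ← hD0, hz', hinv, ← LieHom.map_lie]
    simp) w hw
  rw [LinearMap.sub_apply, LinearMap.comp_apply] at hfin
  have : (q : L →ₗ[K] G) w = 0 := (hq0 w).2 hwR
  rw [this, map_zero, sub_zero] at hfin
  exact hfin


theorem csw_jac {K : Type*} [Field K] {L : Type*} [LieRing L] [LieAlgebra K L]
    (R : LieIdeal K L) :
    ∀ x ∈ ⁅(⊤ : LieIdeal K L), (⊤ : LieIdeal K L)⁆, ∀ r ∈ R,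
      ⁅x, r⁆ ∈ ⁅(⊤ : LieIdeal K L), ⁅(⊤ : LieIdeal K L), R⁆⁆ := by
  intro x hx r hr
  have h := csw_ker ((⁅(⊤ : LieIdeal K L), ⁅(⊤ : LieIdeal K L), R⁆⁆).toSubmodule.mkQ ∘ₗ
    (LieModule.toEnd K L L r : L →ₗ[K] L)) ⊤ ⊤ (by
      intro y hy z hz
      rw [LinearMap.comp_apply, Submodule.mkQ_apply, Submodule.Quotient.mk_eq_zero,
        LieModule.toEnd_apply_apply, ← lie_skew, lie_lie]
      exact neg_mem (sub_mem
        (LieSubmodule.lie_mem_lie hy (LieSubmodule.lie_mem_lie hz hr))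
        (LieSubmodule.lie_mem_lie hz (LieSubmodule.lie_mem_lie hy hr)))) x hx
  rw [LinearMap.comp_apply, Submodule.mkQ_apply, Submodule.Quotient.mk_eq_zero,
    LieModule.toEnd_apply_apply, ← lie_skew] at h
  simpa using neg_mem h

open LieAlgebra in
theorem csw_exists_h {K : Type*} [Field K] [CharZero K] {L : Type} [LieRing L] [LieAlgebra K L]
    [FiniteDimensional K L] (φ : L →ₗ[K] K) (hφ : ∀ x y : L, φ ⁅x, y⁆ = 0) (hφ0 : φ ≠ 0) :
    ∃ h ∈ radical K L, φ h = 1 := by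
  obtain ⟨G, _, _, _, q, hqs, hq0, _⟩ := csw_quot K L
  obtain ⟨h, hR, hne⟩ : ∃ h ∈ radical K L, φ h ≠ 0 := by
    by_contra! hcon
    apply hφ0
    obtain ⟨s, hs⟩ :=
      (q : L →ₗ[K] G).exists_rightInverse_of_surjective (LinearMap.range_eq_top.2 hqs)
    have hs' : ∀ c, q (s c) = c := fun c => LinearMap.congr_fun hs c
    have hsr : ∀ x, φ (s (q x)) = φ x := by
      intro x
      rw [← sub_eq_zero, ← map_sub]
      apply hcon
      rw [← hq0, map_sub, hs', sub_self]
    let e := (killingForm K G).toDual (IsKilling.killingForm_nondegenerate K G)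
    let z := e.symm (φ ∘ₗ s)
    have hz : ∀ y, killingForm K G z y = φ (s y) := fun y => by
      change e (e.symm (φ ∘ₗ s)) y = _
      rw [LinearEquiv.apply_symm_apply]; rfl
    have hinv : ∀ x y z : G, killingForm K G ⁅x, y⁆ z = killingForm K G x ⁅y, z⁆ :=
      fun x y z => LieModule.traceForm_apply_lie_apply K G G x y z
    have hz1 : ∀ g : G, ⁅z, g⁆ = 0 := by
      intro g
      apply e.injective
      ext y
      change killingForm K G ⁅z, g⁆ y = e 0 y
      rw [map_zero, hinv, hz]
      obtain ⟨g, rfl⟩ := hqs g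
      obtain ⟨y, rfl⟩ := hqs y
      rw [← LieHom.map_lie, hsr, hφ]; rfl
    have hzc : z ∈ center K G := by
      rw [LieModule.mem_maxTrivSubmodule]
      intro g
      rw [← lie_skew, hz1, neg_zero]
    rw [center_eq_bot] at hzc
    have hz0 : z = 0 := hzc
    ext x
    rw [← hsr, ← hz, hz0]; simp
  exact ⟨(φ h)⁻¹ • h, (radical K L).smul_mem _ hR, by simp [hne]⟩

open LieAlgebra in
theorem csw_main {K : Type*} [Field K] [CharZero K]
    {L : Type} [LieRing L] [LieAlgebra K L] [FiniteDimensional K L]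
    (H : CswH K L) :
    LieAlgebra.HasTrivialRadical K L ∨ Module.finrank K L = 1 ∨
      ∃ S Z : LieIdeal K L, LieAlgebra.HasTrivialRadical K S ∧
        Module.finrank K Z = 1 ∧ Z ≤ LieAlgebra.center K L ∧ S ⊓ Z = ⊥ ∧ S ⊔ Z = ⊤ := by
  set A : LieIdeal K L := ⁅(⊤ : LieIdeal K L), radical K L⁆ with hAdef
  have hnil : ∀ a ∈ A, IsNilpotent (LieModule.toEnd K L L a) := fun a ha => csw_nil a ha
  by_cases hperf : ⁅(⊤ : LieIdeal K L), (⊤ : LieIdeal K L)⁆ = ⊤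
  · left
    have hA : ⁅(⊤ : LieIdeal K L), A⁆ = A := by
      apply le_antisymm (LieSubmodule.lie_le_right _ _)
      conv_lhs => rw [hAdef]
      rw [LieSubmodule.lie_le_iff]
      intro x _ r hr
      exact csw_jac _ x (by rw [hperf]; trivial) r hr
    have hc := csw_central A hnil (fun W _ _ _ _ _ p hp hAW =>
      csw_caseII' H p hp A hperf hA hnil hAW)
    rw [LieSubmodule.lie_comm, hA] at hc
    have hRc : ∀ r ∈ radical K L, ∀ x : L, ⁅x, r⁆ = 0 := by
      intro r hr x
      have : ⁅x, r⁆ ∈ A := LieSubmodule.lie_mem_lie (LieSubmodule.mem_top x) hr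
      rw [hc] at this
      exact this
    refine ⟨?_⟩
    rw [eq_bot_iff]
    intro r hr
    exact csw_cap hRc r (by rw [hperf]; trivial) hr
  · right; right
    obtain ⟨φ, hφ0, hφk⟩ := Submodule.exists_le_ker_of_lt_top
      (⁅(⊤ : LieIdeal K L), (⊤ : LieIdeal K L)⁆).toSubmodule (by
        rw [lt_top_iff_ne_top]
        intro h
        apply hperf
        rw [← LieSubmodule.toSubmodule_inj, h]; rfl)
    have hφ1 : ∀ x ∈ ⁅(⊤ : LieIdeal K L), (⊤ : LieIdeal K L)⁆, φ x = 0 := fun x hx => hφk hx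
    have hφ : ∀ x y : L, φ ⁅x, y⁆ = 0 := fun x y =>
      hφ1 _ (LieSubmodule.lie_mem_lie (LieSubmodule.mem_top x) (LieSubmodule.mem_top y))
    obtain ⟨h, hR, hh⟩ := csw_exists_h φ hφ hφ0
    have hker : ∀ x, φ x = 0 → x ∈ ⁅(⊤ : LieIdeal K L), (⊤ : LieIdeal K L)⁆ := by
      intro x hx
      rw [← LieSubmodule.Quotient.mk_eq_zero']
      have htriv : ∀ (y : L) (v : L ⧸ ⁅(⊤ : LieIdeal K L), (⊤ : LieIdeal K L)⁆), ⁅y, v⁆ = 0 := by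
        intro y v
        obtain ⟨v, rfl⟩ := LieSubmodule.Quotient.surjective_mk' _ v
        rw [← LieModuleHom.map_lie]
        exact LieSubmodule.Quotient.mk_eq_zero'.2
          (LieSubmodule.lie_mem_lie (LieSubmodule.mem_top y) (LieSubmodule.mem_top v))
      have hfd : FiniteDimensional K (L ⧸ ⁅(⊤ : LieIdeal K L), (⊤ : LieIdeal K L)⁆) :=
        Module.Finite.of_surjective
          (LieSubmodule.Quotient.mk' ⁅(⊤ : LieIdeal K L), (⊤ : LieIdeal K L)⁆ :
          L →ₗ[K] (L ⧸ ⁅(⊤ : LieIdeal K L), (⊤ : LieIdeal K L)⁆))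
          (LieSubmodule.Quotient.surjective_mk' _)
      refine csw_caseI H
        (LieSubmodule.Quotient.mk' ⁅(⊤ : LieIdeal K L), (⊤ : LieIdeal K L)⁆ :
          L →ₗ[K] (L ⧸ ⁅(⊤ : LieIdeal K L), (⊤ : LieIdeal K L)⁆))
        ?_ φ hφ h hh (LinearMap.ker φ) ?_ ?_ ?_ x hx
      · intro y z
        rw [htriv, htriv, sub_zero]
        exact LieSubmodule.Quotient.mk_eq_zero'.2
          (LieSubmodule.lie_mem_lie (LieSubmodule.mem_top y) (LieSubmodule.mem_top z))
      · intro b _; exact hφ h b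
      · intro b hb; exact hb
      · intro b _ v; exact htriv b v
    have hAker : ∀ a ∈ A, φ a = 0 := fun a ha =>
      hφ1 a (LieSubmodule.mono_lie_right _ le_top ha)
    have hc := csw_central A hnil (fun W _ _ _ _ _ p hp hAW =>
      csw_caseI H p hp φ hφ h hh A.toSubmodule (fun b hb => A.lie_mem hb) hAker hAW)
    rw [LieSubmodule.lie_comm] at hc
    have h1 : ∀ x, φ x = 0 → ∀ r ∈ radical K L, ⁅x, r⁆ = 0 := by
      intro x hx r hr
      have := csw_jac _ x (hker x hx) r hr
      rw [← hAdef, hc] at this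
      exact this
    have hsub : ∀ x, φ (x - φ x • h) = 0 := by intro x; simp [hh]
    have hhc : ∀ x : L, ⁅x, h⁆ = 0 := by
      intro x
      have := h1 _ (hsub x) h hR
      simpa using this
    have hRc : ∀ r ∈ radical K L, ∀ x : L, ⁅x, r⁆ = 0 := by
      intro r hr x
      have h2 := h1 _ (hsub x) r hr
      rw [sub_lie, smul_lie, ← lie_skew h r, hhc, neg_zero, smul_zero, sub_zero] at h2
      exact h2
    have hcap := csw_cap hRc
    obtain ⟨G, _, _, _, q, hqs, hq0, _⟩ := csw_quot K L
    refine ⟨⁅(⊤ : LieIdeal K L), (⊤ : LieIdeal K L)⁆, radical K L, ?_, ?_, ?_, ?_, ?_⟩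
    · let S : LieIdeal K L := ⁅(⊤ : LieIdeal K L), (⊤ : LieIdeal K L)⁆
      let f : S →ₗ⁅K⁆ G := q.comp S.incl
      have hf : ∀ x : S, f x = q (x : L) := fun _ => rfl
      have hbij : Function.Bijective f := by
        constructor
        · rw [injective_iff_map_eq_zero]
          intro x hx
          rw [hf, hq0] at hx
          exact Subtype.ext (hcap x x.2 hx)
        · intro g
          obtain ⟨x, rfl⟩ := hqs g
          refine ⟨⟨x - φ x • h, hker _ (hsub x)⟩, ?_⟩
          rw [hf]
          simp [(hq0 h).2 hR]
      have : IsKilling K S := LieAlgebra.isKilling_of_equiv (LieEquiv.ofBijective f hbij).symm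
      change HasTrivialRadical K S
      infer_instance
    · refine finrank_eq_one (⟨h, hR⟩ : radical K L) ?_ ?_
      · intro h0
        have : h = 0 := congrArg Subtype.val h0
        rw [this, map_zero] at hh
        exact zero_ne_one hh
      · rintro ⟨r, hr⟩
        refine ⟨φ r, ?_⟩
        ext1
        have := hcap _ (hker _ (hsub r)) ((radical K L).sub_mem hr ((radical K L).smul_mem _ hR))
        exact (sub_eq_zero.1 this).symm
    · intro r hr
      rw [LieModule.mem_maxTrivSubmodule]
      exact hRc r hr
    · rw [eq_bot_iff]
      intro x hx
      rw [LieSubmodule.mem_inf] at hx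
      exact hcap x hx.1 hx.2
    · rw [eq_top_iff]
      intro x _
      rw [LieSubmodule.mem_sup]
      exact ⟨_, hker _ (hsub x), φ x • h, (radical K L).smul_mem _ hR, by simp⟩

/-- The converse to the Second Whitehead Lemma: a finite-dimensional Lie algebra over a field
of characteristic zero such that the second cohomology with coefficients in every
finite-dimensional module vanishes (every 2-cocycle is a 2-coboundary) is semisimple (i.e.
has zero solvable radical), or one-dimensional, or the direct sum of a semisimple ideal and a
one-dimensional central ideal. -/
theorem converse_second_whitehead (K : Type*) [Field K] [CharZero K]
    (L : Type) [LieRing L] [LieAlgebra K L] [FiniteDimensional K L]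
    (H : ∀ (M : Type) (_ : AddCommGroup M) (_ : Module K M) (_ : LieRingModule L M)
      (_ : LieModule K L M), FiniteDimensional K M →
      ∀ f : L →ₗ[K] L →ₗ[K] M, (∀ x : L, f x x = 0) →
        (∀ x y z : L,
          ⁅x, f y z⁆ - ⁅y, f x z⁆ + ⁅z, f x y⁆
            - f ⁅x, y⁆ z + f ⁅x, z⁆ y - f ⁅y, z⁆ x = 0) →
        ∃ g : L →ₗ[K] M, ∀ x y : L, f x y = ⁅x, g y⁆ - ⁅y, g x⁆ - g ⁅x, y⁆) :
    LieAlgebra.HasTrivialRadical K L ∨ Module.finrank K L = 1 ∨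
      ∃ S Z : LieIdeal K L, LieAlgebra.HasTrivialRadical K S ∧
        Module.finrank K Z = 1 ∧ Z ≤ LieAlgebra.center K L ∧ S ⊓ Z = ⊥ ∧ S ⊔ Z = ⊤ := by
  exact csw_main H
end

section
/- Let X be a set with 3 elements. The number of ternary maps f: X × X × X → X for which there exists a binary map *: X × X → X with f(x,y,z) = (x*y)*z for all x,y,z ∈ X, is 19292. -/
/-- Constant used to force evaluation before consing. -/
def tlCons (x : Nat) (acc : List Nat) : List Nat :=
  Nat.rec [] (fun n _ => n :: acc) (Nat.add x 1)

theorem tlCons_eq (x : Nat) (acc : List Nat) : tlCons x acc = x :: acc := rfl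

def tlLoop (g : Nat → List Nat → List Nat) (acc : List Nat) : List Nat :=
  g 0 (g 1 (g 2 acc))

theorem tlLoop_mem (m : Nat) (g : Nat → List Nat → List Nat) (P : Nat → Prop)
    (h : ∀ d acc, m ∈ g d acc ↔ m ∈ acc ∨ P d) (acc : List Nat) :
    m ∈ tlLoop g acc ↔ m ∈ acc ∨ ∃ d : Fin 3, P d.val := by
  simp only [tlLoop, h, Fin.exists_fin_succ]
  simp
  tauto

def tlSel (d a b c : Nat) : Nat :=
  Nat.rec a (fun n _ => Nat.rec b (fun _ _ => c) n) d

def tlRow (a b c : Nat) : Nat := Nat.add (Nat.mul 9 a) (Nat.add (Nat.mul 3 b) c)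

def tlPack (a b : Nat) : Nat := Nat.add a (Nat.mul 27 b)

def tlF (r0 r1 r2 d0 d1 d2 d3 d4 d5 d6 d7 d8 : Nat) : Nat :=
  tlPack (tlSel d0 r0 r1 r2) (tlPack (tlSel d1 r0 r1 r2) (tlPack (tlSel d2 r0 r1 r2)
  (tlPack (tlSel d3 r0 r1 r2) (tlPack (tlSel d4 r0 r1 r2) (tlPack (tlSel d5 r0 r1 r2)
  (tlPack (tlSel d6 r0 r1 r2) (tlPack (tlSel d7 r0 r1 r2) (tlSel d8 r0 r1 r2))))))))

def tlBuild : List Nat :=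
  tlLoop (fun d0 => tlLoop fun d1 => tlLoop fun d2 => tlLoop fun d3 => tlLoop fun d4 =>
    tlLoop fun d5 => tlLoop fun d6 => tlLoop fun d7 => tlLoop fun d8 =>
    tlCons (tlF (tlRow d0 d1 d2) (tlRow d3 d4 d5) (tlRow d6 d7 d8)
      d0 d1 d2 d3 d4 d5 d6 d7 d8)) []

theorem tlBuild_mem (m : Nat) : m ∈ tlBuild ↔
    ∃ d0 d1 d2 d3 d4 d5 d6 d7 d8 : Fin 3,
      m = tlF (tlRow d0 d1 d2) (tlRow d3 d4 d5) (tlRow d6 d7 d8)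
        d0 d1 d2 d3 d4 d5 d6 d7 d8 := by
  unfold tlBuild
  rw [tlLoop_mem m _ (fun d0 => ∃ d1 d2 d3 d4 d5 d6 d7 d8 : Fin 3,
      m = tlF (tlRow d0 d1 d2) (tlRow d3 d4 d5) (tlRow d6 d7 d8)
        d0 d1 d2 d3 d4 d5 d6 d7 d8)]
  · simp
  intro d0
  refine tlLoop_mem m _ (fun d1 => ∃ d2 d3 d4 d5 d6 d7 d8 : Fin 3, m = tlF (tlRow d0 d1 d2) (tlRow d3 d4 d5) (tlRow d6 d7 d8)
      d0 d1 d2 d3 d4 d5 d6 d7 d8) ?_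
  intro d1
  refine tlLoop_mem m _ (fun d2 => ∃ d3 d4 d5 d6 d7 d8 : Fin 3, m = tlF (tlRow d0 d1 d2) (tlRow d3 d4 d5) (tlRow d6 d7 d8)
      d0 d1 d2 d3 d4 d5 d6 d7 d8) ?_
  intro d2
  refine tlLoop_mem m _ (fun d3 => ∃ d4 d5 d6 d7 d8 : Fin 3, m = tlF (tlRow d0 d1 d2) (tlRow d3 d4 d5) (tlRow d6 d7 d8)
      d0 d1 d2 d3 d4 d5 d6 d7 d8) ?_
  intro d3
  refine tlLoop_mem m _ (fun d4 => ∃ d5 d6 d7 d8 : Fin 3, m = tlF (tlRow d0 d1 d2) (tlRow d3 d4 d5) (tlRow d6 d7 d8)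
      d0 d1 d2 d3 d4 d5 d6 d7 d8) ?_
  intro d4
  refine tlLoop_mem m _ (fun d5 => ∃ d6 d7 d8 : Fin 3, m = tlF (tlRow d0 d1 d2) (tlRow d3 d4 d5) (tlRow d6 d7 d8)
      d0 d1 d2 d3 d4 d5 d6 d7 d8) ?_
  intro d5
  refine tlLoop_mem m _ (fun d6 => ∃ d7 d8 : Fin 3, m = tlF (tlRow d0 d1 d2) (tlRow d3 d4 d5) (tlRow d6 d7 d8)
      d0 d1 d2 d3 d4 d5 d6 d7 d8) ?_
  intro d6
  refine tlLoop_mem m _ (fun d7 => ∃ d8 : Fin 3, m = tlF (tlRow d0 d1 d2) (tlRow d3 d4 d5) (tlRow d6 d7 d8)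
      d0 d1 d2 d3 d4 d5 d6 d7 d8) ?_
  intro d7
  refine tlLoop_mem m _ (fun d8 => m = tlF (tlRow d0 d1 d2) (tlRow d3 d4 d5) (tlRow d6 d7 d8)
      d0 d1 d2 d3 d4 d5 d6 d7 d8) ?_
  intro d8
  intro acc
  rw [tlCons_eq, List.mem_cons, or_comm]

def tlStep (d x : Nat) (ih : List Nat → List Nat → (List Nat → List Nat → Nat) → Nat)
    (a b : List Nat) (K : List Nat → List Nat → Nat) : Nat :=
  Nat.rec (ih (x :: a) b K) (fun _ _ => ih a (x :: b) K) d

noncomputable def tlPart (p : Nat) (l : List Nat) :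
    List Nat → List Nat → (List Nat → List Nat → Nat) → Nat :=
  List.rec (motive := fun _ => List Nat → List Nat → (List Nat → List Nat → Nat) → Nat)
    (fun a b K => K a b)
    (fun x _ ih a b K => tlStep (Nat.mod (Nat.div x p) 2) x ih a b K) l

noncomputable def tlCount (k : Nat) : List Nat → Nat :=
  Nat.rec (motive := fun _ => List Nat → Nat)
    (fun l => l.dedup.length)
    (fun k ih l => List.rec 0 (fun _ xs _ => List.rec 1 (fun _ _ _ =>
      tlPart (Nat.pow 2 k) l [] [] (fun a b => Nat.add (ih a) (ih b))) xs) l) k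

theorem tlPart_spec (p : Nat) (l : List Nat) (K : List Nat → List Nat → Nat)
    (hK : ∀ a b, (∀ x ∈ a, x / p % 2 = 0) → (∀ x ∈ b, x / p % 2 ≠ 0) →
      K a b = (a.toFinset ∪ b.toFinset).card) :
    ∀ a b, (∀ x ∈ a, x / p % 2 = 0) → (∀ x ∈ b, x / p % 2 ≠ 0) →
      tlPart p l a b K = (l.toFinset ∪ (a.toFinset ∪ b.toFinset)).card := by
  induction l with
  | nil => intro a b ha hb; change K a b = _; rw [hK a b ha hb]; simp
  | cons x xs ih =>
    intro a b ha hb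
    change tlStep (x / p % 2) x (tlPart p xs) a b K = _
    rcases hd : x / p % 2 with _ | n
    · change tlPart p xs (x :: a) b K = _
      rw [ih (x :: a) b (List.forall_mem_cons.2 ⟨hd, ha⟩) hb]
      congr 1
      ext y
      simp only [List.toFinset_cons, Finset.mem_union, Finset.mem_insert]
      tauto
    · change tlPart p xs a (x :: b) K = _
      rw [ih a (x :: b) ha (List.forall_mem_cons.2 ⟨by omega, hb⟩)]
      congr 1
      ext y
      simp only [List.toFinset_cons, Finset.mem_union, Finset.mem_insert]
      tauto

theorem tlCount_spec (k : Nat) : ∀ l, tlCount k l = l.toFinset.card := by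
  induction k with
  | zero => intro l; exact (List.card_toFinset l).symm
  | succ k ih =>
    intro l
    match l with
    | [] => rfl
    | [x] => simp; rfl
    | x :: y :: xs =>
      change tlPart (2 ^ k) (x :: y :: xs) [] [] (fun a b => tlCount k a + tlCount k b) = _
      rw [tlPart_spec]
      · simp
      · intro a b ha hb
        rw [ih, ih, Finset.card_union_of_disjoint]
        rw [Finset.disjoint_left]
        intro z hz hz'
        exact hb z (by simpa using hz') (ha z (by simpa using hz))
      · simp
      · simp

theorem tlCount_val : tlCount 43 tlBuild = 19292 := by
  decide +kernel

def tlC (g : Fin 3 → Fin 3) : Nat := tlRow (g 0) (g 1) (g 2)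

def tlCode (f : Fin 3 → Fin 3 → Fin 3 → Fin 3) : Nat :=
  tlPack (tlC (f 0 0)) (tlPack (tlC (f 0 1)) (tlPack (tlC (f 0 2))
  (tlPack (tlC (f 1 0)) (tlPack (tlC (f 1 1)) (tlPack (tlC (f 1 2))
  (tlPack (tlC (f 2 0)) (tlPack (tlC (f 2 1)) (tlC (f 2 2)))))))))

theorem tlRow_eq (a b c : Nat) : tlRow a b c = 9 * a + (3 * b + c) := rfl

theorem tlC_inj {g h : Fin 3 → Fin 3} (e : tlC g = tlC h) : g = h := by
  simp only [tlC, tlRow_eq] at e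
  funext i
  fin_cases i <;> apply Fin.ext <;> simp <;> omega

theorem tlPack_inj {g h : Fin 3 → Fin 3} {b b' : Nat}
    (e : tlPack (tlC g) b = tlPack (tlC h) b') : g = h ∧ b = b' := by
  change tlC g + 27 * b = tlC h + 27 * b' at e
  have : tlC g = tlC h ∧ b = b' := by
    simp only [tlC, tlRow_eq] at e ⊢
    omega
  exact ⟨tlC_inj this.1, this.2⟩

theorem tlCode_inj : Function.Injective tlCode := by
  intro f g e
  obtain ⟨h0, e⟩ := tlPack_inj e
  obtain ⟨h1, e⟩ := tlPack_inj e
  obtain ⟨h2, e⟩ := tlPack_inj e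
  obtain ⟨h3, e⟩ := tlPack_inj e
  obtain ⟨h4, e⟩ := tlPack_inj e
  obtain ⟨h5, e⟩ := tlPack_inj e
  obtain ⟨h6, e⟩ := tlPack_inj e
  obtain ⟨h7, e⟩ := tlPack_inj e
  have h8 := tlC_inj e
  funext x y
  fin_cases x <;> fin_cases y <;> assumption

theorem tlSel_eq (op : Fin 3 → Fin 3 → Fin 3) (i : Fin 3) :
    tlSel i (tlC (op 0)) (tlC (op 1)) (tlC (op 2)) = tlC (op i) := by
  fin_cases i <;> rfl

theorem tlCode_op (op : Fin 3 → Fin 3 → Fin 3) :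
    tlCode (fun x y z => op (op x y) z) =
      tlF (tlC (op 0)) (tlC (op 1)) (tlC (op 2))
        (op 0 0) (op 0 1) (op 0 2) (op 1 0) (op 1 1) (op 1 2) (op 2 0) (op 2 1) (op 2 2) := by
  simp only [tlF, tlSel_eq]
  rfl

/-- On a 3-element set, the number of ternary maps representable as `f (x, y, z) = (x*y)*z`
for some binary map `*` is `T_L(3) = 19292`. -/
theorem count_left_assoc_ternary_three :
    Nat.card {f : Fin 3 → Fin 3 → Fin 3 → Fin 3 //
      ∃ op : Fin 3 → Fin 3 → Fin 3, ∀ x y z, f x y z = op (op x y) z} = 19292 := by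
  have key : tlCode '' {f : Fin 3 → Fin 3 → Fin 3 → Fin 3 |
      ∃ op : Fin 3 → Fin 3 → Fin 3, ∀ x y z, f x y z = op (op x y) z}
      = (tlBuild.toFinset : Set Nat) := by
    ext m
    simp only [Set.mem_image, Set.mem_ofPred_eq, Finset.mem_coe, List.mem_toFinset, tlBuild_mem]
    constructor
    · rintro ⟨f, ⟨op, h⟩, rfl⟩
      have hf : f = fun x y z => op (op x y) z := by
        funext x y z; exact h x y z
      rw [hf, tlCode_op]
      exact ⟨_, _, _, _, _, _, _, _, _, rfl⟩
    · rintro ⟨d0, d1, d2, d3, d4, d5, d6, d7, d8, rfl⟩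
      refine ⟨_, ⟨![![d0, d1, d2], ![d3, d4, d5], ![d6, d7, d8]], fun x y z => rfl⟩, ?_⟩
      rw [tlCode_op]
      rfl
  change Nat.card ({f : Fin 3 → Fin 3 → Fin 3 → Fin 3 |
      ∃ op : Fin 3 → Fin 3 → Fin 3, ∀ x y z, f x y z = op (op x y) z} : Set _) = 19292
  rw [Nat.card_coe_set_eq, ← Set.ncard_image_of_injective _ tlCode_inj, key,
    Set.ncard_coe_finset, ← tlCount_spec 43, tlCount_val]
end

section
/- Let X be a set with 3 elements. The number of ternary maps f: X × X × X → X for which there exists a binary map *: X × X → X with f(x,y,z) = (x*y)*z for all x,y,z ∈ X, or there exists a binary map *: X × X → X with f(x,y,z) = x*(y*z) for all x,y,z ∈ X, is 38472. -/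
namespace TLR

/-- Union of strictly increasing lists. -/
def mg (l : List Nat) : List Nat → List Nat :=
  List.rec (motive := fun _ => List Nat → List Nat) (fun r => r)
    (fun a l ihl r => List.rec (motive := fun _ => List Nat) (List.cons a l)
      (fun b r ihr =>
        Bool.rec (motive := fun _ => List Nat)
          (Bool.rec (motive := fun _ => List Nat)
            (List.cons b ihr) (List.cons a (ihl (List.cons b r))) (Nat.ble a b))
          (List.cons a (ihl r)) (Nat.beq a b)) r) l

theorem mg_nil (r : List Nat) : mg [] r = r := rfl
theorem mg_cons_nil (a : Nat) (l : List Nat) : mg (a :: l) [] = a :: l := rfl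
theorem mg_cons_cons (a : Nat) (l : List Nat) (b : Nat) (r : List Nat) :
    mg (a :: l) (b :: r) = if a = b then a :: mg l r else
      if a ≤ b then a :: mg l (b :: r) else b :: mg (a :: l) r := by
  have h : mg (a :: l) (b :: r) = Bool.rec (motive := fun _ => List Nat)
          (Bool.rec (motive := fun _ => List Nat)
            (List.cons b (mg (a :: l) r)) (List.cons a (mg l (b :: r))) (Nat.ble a b))
          (List.cons a (mg l r)) (Nat.beq a b) := rfl
  rw [h]
  by_cases h1 : a = b
  · have : Nat.beq a b = true := by simpa using h1
    rw [this]; simp [h1]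
  · have : Nat.beq a b = false := by
      rw [← Bool.not_eq_true, Nat.beq_eq]; exact h1
    rw [this]
    by_cases h2 : a ≤ b
    · have : Nat.ble a b = true := by simpa using h2
      rw [this]; simp [h1, h2]
    · have : Nat.ble a b = false := by
        rw [← Bool.not_eq_true, Nat.ble_eq]; exact h2
      rw [this]; simp [h1, h2]

theorem mem_mg (n : Nat) : ∀ l r : List Nat, n ∈ mg l r ↔ n ∈ l ∨ n ∈ r := by
  intro l
  induction l with
  | nil => intro r; simp [mg_nil]
  | cons a l ihl =>
    intro r
    induction r with
    | nil => simp [mg_cons_nil]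
    | cons b r ihr =>
      rw [mg_cons_cons]
      split_ifs with h1 h2
      · subst h1; simp only [List.mem_cons, ihl]; tauto
      · simp only [List.mem_cons, ihl]; tauto
      · simp only [List.mem_cons, ihr]; tauto

theorem sorted_mg : ∀ l r : List Nat, l.Pairwise (· < ·) → r.Pairwise (· < ·) →
    (mg l r).Pairwise (· < ·) := by
  intro l
  induction l with
  | nil => intro r _ h; simpa [mg_nil] using h
  | cons a l ihl =>
    intro r
    induction r with
    | nil => intro h _; simpa [mg_cons_nil] using h
    | cons b r ihr =>
      intro hl hr
      rw [mg_cons_cons]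
      have hl' := List.pairwise_cons.1 hl
      have hr' := List.pairwise_cons.1 hr
      split_ifs with h1 h2
      · refine List.pairwise_cons.2 ⟨?_, ihl _ hl'.2 hr'.2⟩
        intro n hn
        rcases (mem_mg _ _ _).1 hn with h | h
        · exact hl'.1 n h
        · rw [h1]; exact hr'.1 n h
      · refine List.pairwise_cons.2 ⟨?_, ihl _ hl'.2 hr⟩
        intro n hn
        rcases (mem_mg _ _ _).1 hn with h | h
        · exact hl'.1 n h
        · rcases List.mem_cons.1 h with h | h
          · omega
          · have := hr'.1 n h; omega
      · refine List.pairwise_cons.2 ⟨?_, ihr hl hr'.2⟩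
        intro n hn
        rcases (mem_mg _ _ _).1 hn with h | h
        · rcases List.mem_cons.1 h with h | h
          · omega
          · have := hl'.1 n h; omega
        · exact hr'.1 n h

def m3 (F : Nat → List Nat) : List Nat := mg (F 0) (mg (F 1) (F 2))

theorem mem_m3 (n : Nat) (F : Nat → List Nat) : n ∈ m3 F ↔ ∃ v : Fin 3, n ∈ F v.val := by
  simp [m3, mem_mg, Fin.exists_fin_succ]

theorem sorted_m3 (F : Nat → List Nat) (h : ∀ v, (F v).Pairwise (· < ·)) :
    (m3 F).Pairwise (· < ·) :=
  sorted_mg _ _ (h 0) (sorted_mg _ _ (h 1) (h 2))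

/-- indicator -/
def ind (v a : Nat) : Nat := Bool.rec (motive := fun _ => Nat) 0 1 (Nat.beq a v)
def rc (a b c : Nat) : Nat := Nat.add a (Nat.add (Nat.mul 3 b) (Nat.mul 9 c))
def ri (v a b c : Nat) : Nat :=
  Nat.add (ind v a) (Nat.add (Nat.mul 27 (ind v b)) (Nat.mul 729 (ind v c)))
def rn (v a b c : Nat) : Nat :=
  Nat.add (ind v a) (Nat.add (Nat.mul 3 (ind v b)) (Nat.mul 9 (ind v c)))
def wt (p q r : Nat) : Nat := Nat.add p (Nat.add (Nat.mul 19683 q) (Nat.mul 387420489 r))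
def wn (p q r : Nat) : Nat := Nat.add p (Nat.add (Nat.mul 27 q) (Nat.mul 729 r))

def cL (a b c d e f g h i : Nat) : Nat :=
  Nat.add (Nat.mul (rc a b c) (wt (ri 0 a b c) (ri 0 d e f) (ri 0 g h i)))
    (Nat.add (Nat.mul (rc d e f) (wt (ri 1 a b c) (ri 1 d e f) (ri 1 g h i)))
      (Nat.mul (rc g h i) (wt (ri 2 a b c) (ri 2 d e f) (ri 2 g h i))))
def cR (a b c d e f g h i : Nat) : Nat :=
  Nat.add (Nat.mul (wt a d g) (wn (rn 0 a b c) (rn 0 d e f) (rn 0 g h i)))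
    (Nat.add (Nat.mul (wt b e h) (wn (rn 1 a b c) (rn 1 d e f) (rn 1 g h i)))
      (Nat.mul (wt c f i) (wn (rn 2 a b c) (rn 2 d e f) (rn 2 g h i))))

/-- a singleton, with its entry evaluated first -/
def sing (p : Nat) : List Nat :=
  Nat.rec (motive := fun _ => List Nat) List.nil (fun n _ => List.cons n List.nil) (Nat.add p 1)

theorem sing_eq (p : Nat) : sing p = [p] := rfl

/-- `l` if `k`, else empty -/
def keep (k : Bool) (l : List Nat) : List Nat :=
  Bool.rec (motive := fun _ => List Nat) List.nil l k

theorem mem_keep (k : Bool) (l : List Nat) (n : Nat) : n ∈ keep k l ↔ k = true ∧ n ∈ l := by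
  cases k <;> simp [keep]

theorem sorted_keep (k : Bool) (l : List Nat) (h : l.Pairwise (· < ·)) :
    (keep k l).Pairwise (· < ·) := by
  cases k
  · exact List.Pairwise.nil
  · exact h

/-- choose by `v` -/
def pk (v x y z : Nat) : Nat :=
  Nat.rec (motive := fun _ => Nat) x (fun w _ =>
    Nat.rec (motive := fun _ => Nat) y (fun _ _ => z) w) v

def bor (p q : Bool) : Bool := Bool.rec (motive := fun _ => Bool) q true p

theorem bor_eq (p q : Bool) : bor p q = true ↔ p = true ∨ q = true := by
  cases p <;> cases q <;> simp [bor]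

/-- codes of the maps of either form with value `k` at `(0, 1, 2)` -/
def G (k : Nat) : List Nat :=
  m3 fun a => m3 fun b => m3 fun c => m3 fun f => m3 fun i =>
  keep (bor (Nat.beq (pk b c f i) k) (Nat.beq (pk f a b c) k)) <|
  m3 fun d => m3 fun e => m3 fun g => m3 fun h =>
  mg (keep (Nat.beq (pk b c f i) k) (sing (cL a b c d e f g h i)))
    (keep (Nat.beq (pk f a b c) k) (sing (cR a b c d e f g h i)))

theorem mem_G (k n : Nat) : n ∈ G k ↔ ∃ a b c f i d e g h : Fin 3,
    (pk b c f i = k ∧ n = cL a b c d e f g h i) ∨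
    (pk f a b c = k ∧ n = cR a b c d e f g h i) := by
  simp only [G, mem_m3, mem_keep, sing_eq, mem_mg, List.mem_singleton, bor_eq, Nat.beq_eq]
  constructor
  · rintro ⟨a, b, c, f, i, -, d, e, g, h, H⟩
    exact ⟨a, b, c, f, i, d, e, g, h, H⟩
  · rintro ⟨a, b, c, f, i, d, e, g, h, H⟩
    exact ⟨a, b, c, f, i, H.imp And.left And.left, d, e, g, h, H⟩

theorem sorted_G (k : Nat) : (G k).Pairwise (· < ·) := by
  unfold G
  iterate 5 (refine sorted_m3 _ fun _ => ?_)
  refine sorted_keep _ _ ?_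
  iterate 4 (refine sorted_m3 _ fun _ => ?_)
  exact sorted_mg _ _ (sorted_keep _ _ (List.pairwise_singleton _ _))
    (sorted_keep _ _ (List.pairwise_singleton _ _))

structure St where
  c : Nat
  l : List Nat

noncomputable def step (s : St) : St :=
  St.rec (motive := fun _ => St) (fun c l =>
    List.rec (motive := fun _ => St) (St.mk c List.nil)
      (fun _ l _ => Nat.rec (motive := fun _ => St) (St.mk 0 List.nil)
        (fun m _ => St.mk m l) (Nat.add c 2)) l) s

noncomputable def iter (k : Nat) : St → St :=
  Nat.rec (motive := fun _ => St → St) step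
    (fun _ ih s => St.rec (motive := fun _ => St) (fun c l => ih (St.mk c l)) (ih s)) k

noncomputable def chk (N : Nat) (s : St) : Bool :=
  St.rec (motive := fun _ => Bool) (fun c l =>
    List.rec (motive := fun _ => Bool) (Nat.beq c N) (fun _ _ _ => false) l) s

theorem step_inv (s : St) : (step s).c + (step s).l.length = s.c + s.l.length := by
  rcases s with ⟨c, _ | ⟨a, l⟩⟩
  · rfl
  · change (c + 1) + l.length = c + (l.length + 1)
    omega

theorem iter_inv (k : Nat) : ∀ s : St, (iter k s).c + (iter k s).l.length = s.c + s.l.length := by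
  induction k with
  | zero => exact step_inv
  | succ k ih =>
    intro s
    have : iter (k + 1) s = iter k (iter k s) := rfl
    rw [this, ih, ih]

theorem chk_inv (N : Nat) (s : St) (h : chk N s = true) : s.c + s.l.length = N := by
  rcases s with ⟨c, _ | ⟨a, l⟩⟩
  · have : c = N := Nat.eq_of_beq_eq_true h
    simpa using this
  · exact absurd h (by simp [chk])

theorem chk_G0 : chk 12819 (iter 14 (St.mk 0 (G 0))) = true := by
  decide +kernel
theorem chk_G1 : chk 12834 (iter 14 (St.mk 0 (G 1))) = true := by
  decide +kernel
theorem chk_G2 : chk 12819 (iter 14 (St.mk 0 (G 2))) = true := by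
  decide +kernel

theorem length_G (N k : Nat) (h : chk N (iter 14 (St.mk 0 (G k))) = true) :
    (G k).length = N := by
  have h := chk_inv _ _ h
  rw [iter_inv] at h
  simpa using h

abbrev T := Fin 3 → Fin 3 → Fin 3 → Fin 3

def e2 (f : Fin 3 → Fin 3) : Nat := (f 0).val + 3 * (f 1).val + 9 * (f 2).val
def e1 (f : Fin 3 → Fin 3 → Fin 3) : Nat := e2 (f 0) + 27 * e2 (f 1) + 729 * e2 (f 2)
def enc (f : T) : Nat := e1 (f 0) + 19683 * e1 (f 1) + 387420489 * e1 (f 2)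

theorem fun3_ext {α : Type*} (f g : Fin 3 → α) (h0 : f 0 = g 0) (h1 : f 1 = g 1)
    (h2 : f 2 = g 2) : f = g := by
  funext x; fin_cases x <;> assumption

theorem e2_lt (f : Fin 3 → Fin 3) : e2 f < 27 := by
  have := (f 0).isLt; have := (f 1).isLt; have := (f 2).isLt
  unfold e2; omega
theorem e1_lt (f : Fin 3 → Fin 3 → Fin 3) : e1 f < 19683 := by
  have := e2_lt (f 0); have := e2_lt (f 1); have := e2_lt (f 2)
  unfold e1; omega
theorem e2_inj {f g : Fin 3 → Fin 3} (h : e2 f = e2 g) : f = g := by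
  have := (f 0).isLt; have := (f 1).isLt; have := (f 2).isLt
  have := (g 0).isLt; have := (g 1).isLt; have := (g 2).isLt
  unfold e2 at h
  apply fun3_ext <;> apply Fin.ext <;> omega
theorem e1_inj {f g : Fin 3 → Fin 3 → Fin 3} (h : e1 f = e1 g) : f = g := by
  have := e2_lt (f 0); have := e2_lt (f 1); have := e2_lt (f 2)
  have := e2_lt (g 0); have := e2_lt (g 1); have := e2_lt (g 2)
  unfold e1 at h
  apply fun3_ext <;> apply e2_inj <;> omega
theorem enc_inj : Function.Injective enc := by
  intro f g h
  have := e1_lt (f 0); have := e1_lt (f 1); have := e1_lt (f 2)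
  have := e1_lt (g 0); have := e1_lt (g 1); have := e1_lt (g 2)
  unfold enc at h
  apply fun3_ext <;> apply e1_inj <;> omega

theorem pick (F : Fin 3 → Nat) (v : Fin 3) :
    F v = F 0 * ind 0 v + F 1 * ind 1 v + F 2 * ind 2 v := by
  have h : ∀ a b : Nat, ind a b = if b = a then 1 else 0 := by
    intro a b
    unfold ind
    by_cases h1 : b = a
    · have : Nat.beq b a = true := by simpa using h1
      rw [this]; simp [h1]
    · have : Nat.beq b a = false := by
        rw [← Bool.not_eq_true, Nat.beq_eq]; exact h1
      rw [this]; simp [h1]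
  fin_cases v <;> simp [h]

theorem enc_L (op : Fin 3 → Fin 3 → Fin 3) : enc (fun x y z => op (op x y) z) =
    cL (op 0 0) (op 0 1) (op 0 2) (op 1 0) (op 1 1) (op 1 2) (op 2 0) (op 2 1) (op 2 2) := by
  have key : ∀ x y, e2 (fun z => op (op x y) z) = e2 (op 0) * ind 0 (op x y)
      + e2 (op 1) * ind 1 (op x y) + e2 (op 2) * ind 2 (op x y) :=
    fun x y => pick (fun v => e2 (op v)) (op x y)
  simp only [enc, e1, key]
  simp only [e2, cL, rc, ri, wt, Nat.add_eq, Nat.mul_eq]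
  ring

theorem enc_R (op : Fin 3 → Fin 3 → Fin 3) : enc (fun x y z => op x (op y z)) =
    cR (op 0 0) (op 0 1) (op 0 2) (op 1 0) (op 1 1) (op 1 2) (op 2 0) (op 2 1) (op 2 2) := by
  have key : ∀ x v, (op x v).val = (op x 0).val * ind 0 v + (op x 1).val * ind 1 v
      + (op x 2).val * ind 2 v := fun x v => pick (fun v => (op x v).val) v
  simp only [enc, e1, e2]
  simp only [fun x y z => key x (op y z)]
  simp only [cR, rn, wn, wt, Nat.add_eq, Nat.mul_eq]
  ring

def S : Set T := {f | (∃ op : Fin 3 → Fin 3 → Fin 3, ∀ x y z, f x y z = op (op x y) z) ∨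
      (∃ op : Fin 3 → Fin 3 → Fin 3, ∀ x y z, f x y z = op x (op y z))}

theorem pk_eq (F : Fin 3 → Fin 3) (v : Fin 3) :
    pk v (F 0) (F 1) (F 2) = (F v).val := by
  fin_cases v <;> rfl

theorem image_S (k : Fin 3) :
    enc '' {f | f ∈ S ∧ f 0 1 2 = k} = ((G k).toFinset : Set Nat) := by
  ext n
  simp only [Set.mem_image, List.coe_toFinset, Set.mem_ofPred_eq, mem_G]
  constructor
  · rintro ⟨f, ⟨⟨op, h⟩ | ⟨op, h⟩, hk⟩, rfl⟩
    · have : f = fun x y z => op (op x y) z := by funext x y z; exact h x y z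
      subst this
      rw [enc_L]
      exact ⟨op 0 0, op 0 1, op 0 2, op 1 2, op 2 2, op 1 0, op 1 1, op 2 0, op 2 1,
        Or.inl ⟨by rw [← hk]; exact pk_eq (fun v => op v 2) _, rfl⟩⟩
    · have : f = fun x y z => op x (op y z) := by funext x y z; exact h x y z
      subst this
      rw [enc_R]
      exact ⟨op 0 0, op 0 1, op 0 2, op 1 2, op 2 2, op 1 0, op 1 1, op 2 0, op 2 1,
        Or.inr ⟨by rw [← hk]; exact pk_eq (fun v => op 0 v) _, rfl⟩⟩
  · rintro ⟨a, b, c, f, i, d, e, g, h, ⟨hk, hn⟩ | ⟨hk, hn⟩⟩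
    · let op : Fin 3 → Fin 3 → Fin 3 := ![![a, b, c], ![d, e, f], ![g, h, i]]
      refine ⟨fun x y z => op (op x y) z, ⟨Or.inl ⟨op, fun _ _ _ => rfl⟩, ?_⟩,
        (enc_L op).trans hn.symm⟩
      exact Fin.ext ((pk_eq (fun v => op v 2) b).symm.trans hk)
    · let op : Fin 3 → Fin 3 → Fin 3 := ![![a, b, c], ![d, e, f], ![g, h, i]]
      refine ⟨fun x y z => op x (op y z), ⟨Or.inr ⟨op, fun _ _ _ => rfl⟩, ?_⟩,
        (enc_R op).trans hn.symm⟩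
      exact Fin.ext ((pk_eq (fun v => op 0 v) f).symm.trans hk)

theorem ncard_fib (k : Fin 3) (N : Nat) (h : chk N (iter 14 (St.mk 0 (G k))) = true) :
    {f | f ∈ S ∧ f 0 1 2 = k}.ncard = N := by
  rw [← Set.ncard_image_of_injective _ enc_inj, image_S,
    Set.ncard_coe_finset, List.toFinset_card_of_nodup, length_G N k h]
  exact (sorted_G k).imp fun h => ne_of_lt h

theorem S_split : S = {f | f ∈ S ∧ f 0 1 2 = 0} ∪
    ({f | f ∈ S ∧ f 0 1 2 = 1} ∪ {f | f ∈ S ∧ f 0 1 2 = 2}) := by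
  ext f
  have : ∀ v : Fin 3, v = 0 ∨ v = 1 ∨ v = 2 := by decide
  have := this (f 0 1 2)
  simp only [Set.mem_union, Set.mem_ofPred_eq]
  rw [← and_or_left, ← and_or_left, and_iff_left this]

theorem card_S : Nat.card S = 38472 := by
  rw [Nat.card_coe_set_eq, S_split, Set.ncard_union_eq, Set.ncard_union_eq,
    ncard_fib 0 _ chk_G0, ncard_fib 1 _ chk_G1, ncard_fib 2 _ chk_G2]
  · rw [Set.disjoint_left]
    rintro f ⟨-, h⟩ ⟨-, h'⟩
    rw [h] at h'; exact absurd h' (by decide)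
  · rw [Set.disjoint_left]
    rintro f ⟨-, h⟩ (⟨-, h'⟩ | ⟨-, h'⟩) <;>
    · rw [h] at h'; exact absurd h' (by decide)

end TLR

/-- On a 3-element set, the number of ternary maps representable either as
`f (x, y, z) = (x*y)*z` or as `f (x, y, z) = x*(y*z)` for some binary map `*` is
`T_LR(3) = 38472`. -/
theorem count_left_or_right_assoc_ternary_three :
    Nat.card {f : Fin 3 → Fin 3 → Fin 3 → Fin 3 //
      (∃ op : Fin 3 → Fin 3 → Fin 3, ∀ x y z, f x y z = op (op x y) z) ∨
      (∃ op : Fin 3 → Fin 3 → Fin 3, ∀ x y z, f x y z = op x (op y z))} = 38472 :=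
  TLR.card_S
end

section
/- Let X be a set with 3 elements. The number of symmetric ternary maps f: X × X × X → X (i.e., maps invariant under every permutation of the three arguments) for which there exists a binary map *: X × X → X with f(x,y,z) = (x*y)*z for all x,y,z ∈ X, is 48. -/
def tg (c x y : Nat) : Nat := c / 3 ^ (3 * x + y) % 3

def tt (c x y z : Nat) : Nat := tg c (tg c x y) z

def tall (p : Nat → Bool) : Bool := p 0 && (p 1 && p 2)

def tsym (c : Nat) : Bool := tall fun x => tall fun y => tall fun z =>
  Nat.beq (tt c x y z) (tt c y x z) && Nat.beq (tt c x y z) (tt c x z y)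

def teq (c d : Nat) : Bool := tall fun x => tall fun y => tall fun z =>
  Nat.beq (tt c x y z) (tt d x y z)

def treps : List Nat := [0, 81, 364, 768, 1536, 2460, 2541, 4017, 4941, 5681, 6336, 6417, 8229, 9072, 9840, 10578, 11502, 12301, 13008, 13009, 13122, 13203, 15552, 15582, 15613, 15633, 15634, 15663, 15664, 16401, 16402, 17139, 17141, 17220, 18063, 18065, 18144, 18980, 19458, 19488, 19539, 19541, 19569, 19570, 19599, 19601, 19650, 19680]

def tchk (c : Nat) : Bool := !(tsym c) || treps.any (teq c)

def tmain : Bool := tall fun a => tall fun b => tall fun c => tall fun d => tall fun e =>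
  tall fun f => tall fun g => tall fun h => tall fun i =>
    tchk (a + 3 * b + 9 * c + 27 * d + 81 * e + 243 * f + 729 * g + 2187 * h + 6561 * i)

theorem tmain_true : tmain = true := by decide +kernel

theorem treps_sym : treps.all tsym = true := by decide +kernel

theorem treps_inj : (treps.all fun r => treps.all fun s => !(teq r s) || Nat.beq r s) = true := by
  decide +kernel

theorem tall_spec {p : Nat → Bool} : tall p = true ↔ ∀ x : Fin 3, p x.val = true := by
  constructor
  · intro h x
    simp only [tall, Bool.and_eq_true] at h
    obtain ⟨h0, h1, h2⟩ := h
    fin_cases x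
    · exact h0
    · exact h1
    · exact h2
  · intro h
    simp only [tall, Bool.and_eq_true]
    exact ⟨h 0, h 1, h 2⟩

theorem tsym_spec {c : Nat} : tsym c = true ↔ ∀ x y z : Fin 3,
    tt c x y z = tt c y x z ∧ tt c x y z = tt c x z y := by
  simp only [tsym, tall_spec, Bool.and_eq_true, Nat.beq_eq]

theorem teq_spec {c d : Nat} : teq c d = true ↔ ∀ x y z : Fin 3,
    tt c x y z = tt d x y z := by
  simp only [teq, tall_spec, Nat.beq_eq]

theorem tg_lt (c x y : Nat) : tg c x y < 3 := Nat.mod_lt _ (by norm_num)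

def tF (c : Nat) : Fin 3 → Fin 3 → Fin 3 → Fin 3 := fun x y z => ⟨tt c x y z, tg_lt _ _ _⟩

theorem t_encode (op : Fin 3 → Fin 3 → Fin 3) :
    ∃ c, tchk c = true ∧ ∀ x y : Fin 3, tg c x y = (op x y).val := by
  have h := tmain_true
  simp only [tmain, tall_spec] at h
  refine ⟨_, h (op 0 0) (op 0 1) (op 0 2) (op 1 0) (op 1 1) (op 1 2) (op 2 0) (op 2 1) (op 2 2), ?_⟩
  · intro x y
    have h0 := (op 0 0).isLt
    have h1 := (op 0 1).isLt
    have h2 := (op 0 2).isLt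
    have h3 := (op 1 0).isLt
    have h4 := (op 1 1).isLt
    have h5 := (op 1 2).isLt
    have h6 := (op 2 0).isLt
    have h7 := (op 2 1).isLt
    have h8 := (op 2 2).isLt
    fin_cases x <;> fin_cases y <;> simp [tg] <;> omega

/-- On a 3-element set, the number of symmetric ternary maps (invariant under every
permutation of the three arguments) representable as `f (x, y, z) = (x*y)*z` for some binary
map `*` is `T_comm(3) = 48`. -/
theorem count_symmetric_left_assoc_ternary_three :
    Nat.card {f : Fin 3 → Fin 3 → Fin 3 → Fin 3 //
      (∀ x y z, f x y z = f y x z) ∧ (∀ x y z, f x y z = f x z y) ∧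
      ∃ op : Fin 3 → Fin 3 → Fin 3, ∀ x y z, f x y z = op (op x y) z} = 48 := by
  have key : {f : Fin 3 → Fin 3 → Fin 3 → Fin 3 |
      (∀ x y z, f x y z = f y x z) ∧ (∀ x y z, f x y z = f x z y) ∧
      ∃ op : Fin 3 → Fin 3 → Fin 3, ∀ x y z, f x y z = op (op x y) z}
      = tF '' (↑treps.toFinset : Set Nat) := by
    ext f
    simp only [Set.mem_setOf_eq, Set.mem_image, Finset.mem_coe, List.mem_toFinset]
    constructor
    · rintro ⟨h1, h2, op, hop⟩
      obtain ⟨c, hc, hg⟩ := t_encode op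
      have ht : ∀ x y z : Fin 3, tt c x y z = (f x y z).val := by
        intro x y z
        rw [tt, hg, hg, hop]
      have hs : tsym c = true := by
        rw [tsym_spec]
        intro x y z
        rw [ht, ht, ht]
        exact ⟨congrArg _ (h1 x y z), congrArg _ (h2 x y z)⟩
      simp only [tchk, hs, Bool.not_true, Bool.false_or, List.any_eq_true] at hc
      obtain ⟨r, hr, he⟩ := hc
      refine ⟨r, hr, ?_⟩
      funext x y z
      apply Fin.ext
      rw [← ht]
      exact (teq_spec.1 he x y z).symm
    · rintro ⟨r, hr, rfl⟩
      have hs := tsym_spec.1 (List.all_eq_true.1 treps_sym r hr)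
      exact ⟨fun x y z => Fin.ext (hs x y z).1, fun x y z => Fin.ext (hs x y z).2,
        fun x y => ⟨tg r x y, tg_lt _ _ _⟩, fun x y z => rfl⟩
  change Set.ncard {f : Fin 3 → Fin 3 → Fin 3 → Fin 3 |
      (∀ x y z, f x y z = f y x z) ∧ (∀ x y z, f x y z = f x z y) ∧
      ∃ op : Fin 3 → Fin 3 → Fin 3, ∀ x y z, f x y z = op (op x y) z} = 48
  rw [key, Set.ncard_image_of_injOn, Set.ncard_coe_finset]
  · decide +kernel
  · intro r hr s hs h
    simp only [Finset.mem_coe, List.mem_toFinset] at hr hs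
    have h3 := List.all_eq_true.1 (List.all_eq_true.1 treps_inj r hr) s hs
    have he : teq r s = true := teq_spec.2 fun x y z =>
      congrArg Fin.val (congrFun (congrFun (congrFun h x) y) z)
    simpa [he] using h3
end

section
/- Let X be a set with at most 3 elements and let f: X × X × X → X be a symmetric ternary map (invariant under every permutation of the three arguments). If there exists a binary map *: X × X → X with f(x,y,z) = (x*y)*z for all x,y,z ∈ X, then there also exists a commutative binary map ∘: X × X → X (i.e., x∘y = y∘x for all x,y) with f(x,y,z) = (x∘y)∘z for all x,y,z ∈ X. -/
theorem aux_key {X : Type*} (m : X → X → X)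
    (h1 : ∀ x y z, m (m x y) z = m (m y x) z) (h2 : ∀ x y z, m (m x y) z = m (m x z) y)
    (p q r : X) (hpq : p ≠ q) (hc : ∀ w, w = p ∨ w = q ∨ w = r)
    (hrow : ∀ z, m p z = m q z)
    (hr : (m p r = p ∧ m r p = q) ∨ (m p r = q ∧ m r p = p)) (x y z : X) :
    m (m x y) z = m p p := by
  have e1 : m p p = m p q := by grind
  have e2 : m p p ≠ r ∨ r = p ∨ r = q := by
    by_contra hh
    push Not at hh
    have := h2 p p r
    have := h2 p r p
    have := h2 r r p
    have := h1 p r r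
    have := h2 p r r
    grind
  have e3 : m p p = p ∨ m p p = q := by
    have := hc (m p p)
    grind
  have e4 : m p p = m p r := by grind
  have e5 : m r r = p ∨ m r r = q := by
    have := hc (m r r)
    have := h2 r r p
    have := h1 p r r
    grind
  have e6 : m r q = p ∨ m r q = q := by
    have := hc (m r q)
    have := h2 r q p
    grind
  have e7 : ∀ x y, m x y = p ∨ m x y = q := by
    intro x y
    rcases hc x with rfl | rfl | rfl <;> rcases hc y with rfl | rfl | rfl <;> grind
  have e8 : ∀ z, m p z = m p p := by
    intro z
    rcases hc z with rfl | rfl | rfl <;> grind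
  rcases e7 x y with h | h <;> rw [h]
  · exact e8 z
  · rw [← hrow]; exact e8 z

theorem aux_third {X : Type*} [Finite X] (hX : Nat.card X ≤ 3) (p q : X) (hpq : p ≠ q) :
    ∃ r, ∀ w, w = p ∨ w = q ∨ w = r := by
  classical
  have := Fintype.ofFinite X
  by_contra hh
  push Not at hh
  obtain ⟨r, hr1, hr2, -⟩ := hh p
  obtain ⟨s, hs1, hs2, hs3⟩ := hh r
  have hle := Finset.card_le_univ ({p, q, r, s} : Finset X)
  have : ({p, q, r, s} : Finset X).card = 4 := by
    rw [Finset.card_eq_succ]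
    refine ⟨p, {q, r, s}, ?_, rfl, ?_⟩
    · simp; grind
    · rw [Finset.card_eq_three]
      exact ⟨q, r, s, by grind, by grind, by grind, rfl⟩
  rw [Nat.card_eq_fintype_card] at hX
  omega

/-- On a set with at most 3 elements, every symmetric ternary map (invariant under every
permutation of the three arguments) representable as `f (x, y, z) = (x*y)*z` for some binary
map `*` is also representable in this form for some commutative binary map. -/
theorem symmetric_ternary_representable_commutative (X : Type*) [Finite X]
    (hX : Nat.card X ≤ 3) (f : X → X → X → X)
    (hsym₁ : ∀ x y z, f x y z = f y x z) (hsym₂ : ∀ x y z, f x y z = f x z y)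
    (h : ∃ op : X → X → X, ∀ x y z, f x y z = op (op x y) z) :
    ∃ op : X → X → X, (∀ x y, op x y = op y x) ∧ ∀ x y z, f x y z = op (op x y) z := by
  obtain ⟨m, hm⟩ := h
  have h1 : ∀ x y z, m (m x y) z = m (m y x) z := fun x y z => by
    rw [← hm, ← hm, hsym₁]
  have h2 : ∀ x y z, m (m x y) z = m (m x z) y := fun x y z => by
    rw [← hm, ← hm, hsym₂]
  by_cases hcomm : ∀ x y, m x y = m y x
  · exact ⟨m, hcomm, hm⟩
  suffices hc : ∃ c, ∀ x y z, m (m x y) z = c by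
    obtain ⟨c, hc⟩ := hc
    exact ⟨fun _ _ => c, fun _ _ => rfl, fun x y z => by rw [hm, hc]⟩
  push Not at hcomm
  obtain ⟨a, b, hab⟩ := hcomm
  obtain ⟨p, hp⟩ : ∃ p, p = m a b := ⟨_, rfl⟩
  obtain ⟨q, hq⟩ : ∃ q, q = m b a := ⟨_, rfl⟩
  have hpq : p ≠ q := by rw [hp, hq]; exact hab
  have hrow : ∀ z, m p z = m q z := fun z => by rw [hp, hq]; exact h1 a b z
  obtain ⟨r, hr⟩ := aux_third hX p q hpq
  have hr' : ∀ w, w = q ∨ w = p ∨ w = r := fun w => by have := hr w; tauto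
  have hA : ¬ ((m p p = p ∧ m p q = q) ∨ (m p p = q ∧ m p q = p)) := by
    have := h2 p p q
    grind
  have key1 := aux_key m h1 h2 p q r hpq hr hrow
  have key2 := aux_key m h1 h2 q p r hpq.symm hr' (fun z => (hrow z).symm)
  have : ((m p r = p ∧ m r p = q) ∨ (m p r = q ∧ m r p = p)) ∨
      ((m q r = q ∧ m r q = p) ∨ (m q r = p ∧ m r q = q)) := by
    clear key1 key2
    have := hrow p
    have := hrow q
    have := hrow r
    rcases hr a with ha | ha | ha <;> rcases hr b with hb | hb | hb <;> subst a b <;> grind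
  rcases this with h | h
  · exact ⟨_, key1 h⟩
  · exact ⟨_, key2 h⟩
end
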